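/- Let c ≤ −1 be an integer and suppose nonnegative integers (n, x, y), (n₁, x₁, y₁), (n₂, x₂, y₂), each with first coordinate ≠ 1, satisfy c = T_n − 2^x·3^y = T_{n₁} − 2^{x₁}·3^{y₁} = T_{n₂} − 2^{x₂}·3^{y₂} with n > n₁ > n₂ and n₁ > 310. Then n − n₁ < 2·10¹⁵·(log n)². -/

import Mathlib

/-!
Write `α` for the real Tribonacci root and `δ = -α² + 4α - 1`, so that `δ T_n = α ^ n + O(1)`
(`binet`). The result rests on a lower bound for linear forms
`Λ = b₀ log (α - 1) + b₁ log 3 + b₂ log α + b₃ log (2α² - 3α)` with integer coefficients bounded by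
`B` and `b₀ ≠ 0`, namely `log |Λ| > -4·10¹⁴ (log B)²` (`linForm_lower`). It applies to
the numbers `2`, `3`, `α`, `δ` because `2 = (α - 1)³ α²` and `δ = (2α² - 3α) α² (α - 1)²`.

Deduction. Put `S = 2 ^ x 3 ^ y`, and similarly `S₁`, `S₂`. The difference `S₁ - S₂` equals
`T_{n₁} - T_{n₂} ≤ α ^ n₁`, and the bound for `log (S₁ / S₂)` shows that
`S₁ ≤ 2 α ^ n₁ exp (4·10¹⁴ (log 10n)²)` (`smooth_gap`). Since `-c ≤ S₁`, the quotient
`α ^ n / (δ S)` differs from `1` by at most `S₁ / S`, which is about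
`α ^ (n₁ - n) exp (4·10¹⁴ (log 10n)²)`. The bound for `log (α ^ n / (δ S))` then limits `n - n₁`.

Linear forms. Let `a₀, …, a₃` be the four generators and `θ(m) = ∏ aᵢ ^ mᵢ`. Siegel's lemma
(`siegel_good`) provides small integers `p m`, not all zero, indexed by a box of exponent vectors of
size proportional to `T`, such that
`∑ p m · M(m) · θ(m) ^ (2r + 1) = 0` for all `r < R` and all monomials `M` of degree at most `T` in
the integers `b₀ mᵢ - bᵢ m₀`. If `Λ` is tiny, these sums are up to a negligible error the
derivatives at `2r + 1` of `z ↦ ∑ p m · M(m) · exp (ω(m) z)`, where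
`ω(m) = ∑ mᵢ log aᵢ - m₀ Λ / b₀`. A real-variable Hermite interpolation estimate (`hermite_odd`)
makes the functions small at the half-integers `r + 1/2`, `r < 2R`, and the Liouville inequality in
the field generated by the `√aᵢ` over `ℚ(α)`, of degree at most `48` over `ℚ`, forces the sums to
vanish there (`vanish_half`). By Kummer theory the products of the `√aᵢ` are linearly independent
over `ℚ(α)`, so the sums split according to the parity of the exponents, and a nonzero
parity class satisfies the same conditions with `T` halved and `R` doubled (`descent_step`). Thus
`T R` is invariant, and the descent ends at `T = 1`, where the box is `{0}` and the
conditions say that the only coefficient is zero: a contradiction.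
-/

/-- The Tribonacci sequence: `T 0 = 0`, `T 1 = T 2 = 1`,
`T (n+3) = T (n+2) + T (n+1) + T n`. -/
def T : ℕ → ℤ
  | 0 => 0
  | 1 => 1
  | 2 => 1
  | n + 3 => T (n + 2) + T (n + 1) + T n

/-! ### Rolle's theorem with multiplicities and sums of coefficients of power series -/

/-- Rolle's theorem for a finite set of zeros. -/
lemma rolle_finset (f f' : ℝ → ℝ) (hf : ∀ z, HasDerivAt f (f' z) z) (A : Finset ℝ) :
    A.Nonempty → (∀ a ∈ A, f a = 0) →
    ∃ A' : Finset ℝ, A'.card + 1 = A.card ∧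
      ∀ z ∈ A', f' z = 0 ∧ z ∉ A ∧ (∃ a ∈ A, a < z) ∧ ∃ b ∈ A, z < b := by
  classical
  induction A using Finset.induction_on_max with
  | empty => intro h; simp at h
  | insert M A hM ih =>
    intro _ h0
    have hMA : M ∉ A := fun h => lt_irrefl _ (hM M h)
    rcases A.eq_empty_or_nonempty with rfl | hA
    · exact ⟨∅, by simp, by simp⟩
    obtain ⟨A', hc, hA'⟩ := ih hA (fun a ha => h0 a (Finset.mem_insert_of_mem ha))
    have hlt : A.max' hA < M := hM _ (A.max'_mem hA)
    obtain ⟨c, hc1, hc2⟩ := exists_hasDerivAt_eq_zero (f := f) (f' := f') hlt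
      (fun z _ => (hf z).continuousAt.continuousWithinAt)
      (by rw [h0 M (Finset.mem_insert_self _ _),
            h0 _ (Finset.mem_insert_of_mem (A.max'_mem hA))])
      (fun z _ => hf z)
    have hcA : c ∉ A' := by
      intro h
      obtain ⟨_, _, _, b, hb, hcb⟩ := hA' c h
      exact absurd (A.le_max' b hb) (not_le.mpr (hc1.1.trans hcb))
    refine ⟨insert c A', ?_, ?_⟩
    · rw [Finset.card_insert_of_notMem hcA, Finset.card_insert_of_notMem hMA, hc]
    · intro z hz
      rcases Finset.mem_insert.mp hz with rfl | hz
      · refine ⟨hc2, ?_, ⟨_, Finset.mem_insert_of_mem (A.max'_mem hA), hc1.1⟩,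
          ⟨M, Finset.mem_insert_self _ _, hc1.2⟩⟩
        intro h
        rcases Finset.mem_insert.mp h with h | h
        · exact absurd hc1.2 (by rw [h]; exact lt_irrefl _)
        · exact absurd (A.le_max' _ h) (not_le.mpr hc1.1)
      · obtain ⟨h1, h2, ⟨a, ha, haz⟩, b, hb, hzb⟩ := hA' z hz
        refine ⟨h1, ?_, ⟨a, Finset.mem_insert_of_mem ha, haz⟩,
          ⟨b, Finset.mem_insert_of_mem hb, hzb⟩⟩
        intro h
        rcases Finset.mem_insert.mp h with rfl | h
        · exact absurd (hM b hb) (not_lt.mpr hzb.le)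
        · exact h2 h

/-- Generalised Rolle: a function vanishing to order `τ` at every point of `S` and also at one
further point has a zero of its derivative of order `τ * S.card`. -/
lemma rolle_mult (g : ℕ → ℝ → ℝ) (hg : ∀ k z, HasDerivAt (g k) (g (k + 1) z) z)
    (S : Finset ℝ) (hS : S.Nonempty) (τ : ℕ) (x a b : ℝ) (hx : x ∉ S) (hxI : x ∈ Set.Icc a b)
    (hSI : ∀ s ∈ S, s ∈ Set.Icc a b) (h0 : ∀ k < τ, ∀ s ∈ S, g k s = 0) (hgx : g 0 x = 0) :
    ∃ ξ ∈ Set.Icc a b, g (τ * S.card) ξ = 0 := by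
  classical
  obtain ⟨r, hr⟩ : ∃ r, S.card = r + 1 := ⟨S.card - 1, by have := hS.card_pos; omega⟩
  have hbetween : ∀ (A : Finset ℝ), (∀ s ∈ A, s ∈ Set.Icc a b) → ∀ z : ℝ,
      (∃ a ∈ A, a < z) → (∃ b ∈ A, z < b) → z ∈ Set.Icc a b := by
    rintro A hA z ⟨u, hu, huz⟩ ⟨v, hv, hzv⟩
    exact ⟨(hA u hu).1.trans huz.le, hzv.le.trans (hA v hv).2⟩
  have step1 : ∀ k ≤ τ, ∃ E : Finset ℝ, E.card = 1 + k * r ∧ Disjoint S E ∧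
      (∀ z ∈ E, z ∈ Set.Icc a b) ∧ ∀ z ∈ E, g k z = 0 := by
    intro k
    induction k with
    | zero =>
      intro _
      exact ⟨{x}, by simp, by simpa using hx, by simpa using hxI, by simpa using hgx⟩
    | succ k ih =>
      intro hk
      obtain ⟨E, hE1, hE2, hE3, hE4⟩ := ih (by omega)
      have hI : ∀ s ∈ S ∪ E, s ∈ Set.Icc a b := fun s hs =>
        (Finset.mem_union.mp hs).elim (hSI s) (hE3 s)
      obtain ⟨E', h1, h2⟩ := rolle_finset (g k) (g (k + 1)) (hg k) (S ∪ E)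
        (hS.mono Finset.subset_union_left)
        (fun s hs => (Finset.mem_union.mp hs).elim (h0 k (by omega) s) (hE4 s))
      rw [Finset.card_union_of_disjoint hE2, hr, hE1] at h1
      refine ⟨E', by rw [add_mul]; omega, ?_, fun z hz => ?_, fun z hz => (h2 z hz).1⟩
      · rw [Finset.disjoint_right]
        intro z hz hzS
        exact (h2 z hz).2.1 (Finset.mem_union_left _ hzS)
      · exact hbetween _ hI z (h2 z hz).2.2.1 (h2 z hz).2.2.2
  have step2 : ∀ i ≤ τ * r, ∃ E : Finset ℝ, E.card + i = 1 + τ * r ∧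
      (∀ z ∈ E, z ∈ Set.Icc a b) ∧ ∀ z ∈ E, g (τ + i) z = 0 := by
    intro i
    induction i with
    | zero =>
      intro _
      obtain ⟨E, h1, _, h3, h4⟩ := step1 τ le_rfl
      exact ⟨E, h1, h3, h4⟩
    | succ i ih =>
      intro hi
      obtain ⟨E, h1, h3, h4⟩ := ih (by omega)
      obtain ⟨E', h1', h2⟩ := rolle_finset (g (τ + i)) (g (τ + i + 1)) (hg _) E
        (Finset.card_pos.mp (by omega)) h4
      exact ⟨E', by omega, fun z hz => hbetween _ h3 z (h2 z hz).2.2.1 (h2 z hz).2.2.2,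
        fun z hz => (h2 z hz).1⟩
  obtain ⟨E, h1, h3, h4⟩ := step2 (τ * r) le_rfl
  obtain ⟨ξ, hξ⟩ := Finset.card_pos.mp (show 0 < E.card by omega)
  refine ⟨ξ, h3 ξ hξ, ?_⟩
  have := h4 ξ hξ
  rwa [show τ + τ * r = τ * S.card by rw [hr]; ring] at this

open PowerSeries in
lemma sum_abs_coeff_mul_le (n : ℕ) (f g : PowerSeries ℝ) :
    ∑ k ∈ Finset.range n, |coeff k (f * g)| ≤
      (∑ k ∈ Finset.range n, |coeff k f|) * ∑ k ∈ Finset.range n, |coeff k g| := by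
  classical
  calc ∑ k ∈ Finset.range n, |coeff k (f * g)|
      ≤ ∑ k ∈ Finset.range n, ∑ p ∈ Finset.HasAntidiagonal.antidiagonal k, |coeff p.1 f| * |coeff p.2 g| := by
        refine Finset.sum_le_sum fun k _ => ?_
        rw [coeff_mul]
        refine (Finset.abs_sum_le_sum_abs _ _).trans (le_of_eq ?_)
        exact Finset.sum_congr rfl fun p _ => abs_mul _ _
    _ ≤ ∑ p ∈ Finset.range n ×ˢ Finset.range n, |coeff p.1 f| * |coeff p.2 g| := by
        rw [← Finset.sum_biUnion]
        · refine Finset.sum_le_sum_of_subset_of_nonneg ?_ (fun _ _ _ => by positivity)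
          intro p hp
          simp only [Finset.mem_biUnion, Finset.mem_range, Finset.HasAntidiagonal.mem_antidiagonal,
            Finset.mem_product] at hp ⊢
          omega
        · intro i _ j _ hij
          simp only [Function.onFun]
          rw [Finset.disjoint_left]
          intro p hp hq
          rw [Finset.HasAntidiagonal.mem_antidiagonal] at hp hq
          omega
    _ = _ := by rw [Finset.sum_product, Finset.sum_mul_sum]

open PowerSeries in
lemma sum_abs_coeff_pow_le (n m : ℕ) (hn : 0 < n) (f : PowerSeries ℝ) :
    ∑ k ∈ Finset.range n, |coeff k (f ^ m)| ≤ (∑ k ∈ Finset.range n, |coeff k f|) ^ m := by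
  induction m with
  | zero =>
    obtain ⟨n, rfl⟩ : ∃ k, n = k + 1 := ⟨n - 1, by omega⟩
    simp [coeff_one, Finset.sum_ite_eq', apply_ite]
  | succ m ih =>
    rw [pow_succ, pow_succ]
    exact (sum_abs_coeff_mul_le _ _ _).trans
      (mul_le_mul_of_nonneg_right ih (Finset.sum_nonneg fun _ _ => abs_nonneg _))

open PowerSeries in
lemma sum_abs_coeff_prod_le {ι : Type*} (n : ℕ) (hn : 0 < n) (s : Finset ι)
    (f : ι → PowerSeries ℝ) (b : ι → ℝ)
    (hb : ∀ i ∈ s, ∑ k ∈ Finset.range n, |coeff k (f i)| ≤ b i) :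
    ∑ k ∈ Finset.range n, |coeff k (∏ i ∈ s, f i)| ≤ ∏ i ∈ s, b i := by
  classical
  induction s using Finset.induction_on with
  | empty => simpa using sum_abs_coeff_pow_le n 0 hn (1 : PowerSeries ℝ)
  | insert a s ha ih =>
    rw [Finset.prod_insert ha, Finset.prod_insert ha]
    have h1 := hb a (Finset.mem_insert_self _ _)
    have h2 := ih (fun i hi => hb i (Finset.mem_insert_of_mem hi))
    refine (sum_abs_coeff_mul_le _ _ _).trans (mul_le_mul h1 h2 ?_ ?_)
    · exact Finset.sum_nonneg fun _ _ => abs_nonneg _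
    · exact (Finset.sum_nonneg fun _ _ => abs_nonneg _).trans h1

/-- The power series of `1 / (d + X)`. -/
noncomputable def invLin (d : ℝ) : PowerSeries ℝ :=
  PowerSeries.mk fun k => (-1) ^ k / d ^ (k + 1)

lemma invLin_mul (d : ℝ) (hd : d ≠ 0) :
    ((Polynomial.X + Polynomial.C d : Polynomial ℝ) : PowerSeries ℝ) * invLin d = 1 := by
  ext k
  rw [Polynomial.coe_add, Polynomial.coe_X, Polynomial.coe_C, add_mul, map_add]
  cases k with
  | zero => simp [invLin, hd]
  | succ k =>
    rw [PowerSeries.coeff_succ_X_mul, PowerSeries.coeff_C_mul]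
    simp only [invLin, PowerSeries.coeff_mk, PowerSeries.coeff_one]
    rw [if_neg (by omega)]
    field_simp
    ring

lemma sum_invLin_le (n : ℕ) (d : ℝ) (hd : 2 ≤ |d|) :
    ∑ k ∈ Finset.range n, |PowerSeries.coeff k (invLin d)| ≤ 1 / (|d| - 1) := by
  have h1 : ∀ k, |PowerSeries.coeff k (invLin d)| = (1 / |d|) * (1 / |d|) ^ k := by
    intro k
    simp [invLin, abs_div, abs_pow, pow_succ, mul_comm]
  simp_rw [h1]
  rw [← Finset.mul_sum]
  have hd0 : 0 < |d| := by linarith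
  have h2 : 1 / |d| < 1 := by rw [div_lt_one hd0]; linarith
  rw [geom_sum_eq h2.ne]
  have h3 : (0:ℝ) ≤ (1 / |d|) ^ n := by positivity
  rw [show (1 / |d|) * (((1 / |d|) ^ n - 1) / (1 / |d| - 1)) = (1 - (1 / |d|) ^ n) / (|d| - 1) by
    have : |d| - 1 ≠ 0 := by linarith
    have h5 : (1 / |d| - 1) ≠ 0 := by linarith
    have h6 : (1 - |d|) ≠ 0 := by linarith
    field_simp
    ring]
  apply div_le_div_of_nonneg_right <;> linarith

/-! ### Hermite interpolation with explicit bounds -/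

open Polynomial in
/-- Hermite interpolation with explicit control: for nodes at mutual distance at least `2` there is
a polynomial with prescribed jets, bounded by the size of the jets. -/
lemma hermite_poly (S : Finset ℝ) (hS : ∀ s ∈ S, ∀ s' ∈ S, s' ≠ s → 2 ≤ |s - s'|)
    (τ : ℕ) (hτ : 0 < τ) (J : ℝ → ℕ → ℝ) :
    ∃ H : ℝ[X], (∀ n, τ * S.card ≤ n → derivative^[n] H = 0) ∧
      (∀ s ∈ S, ∀ k < τ, (taylor s H).coeff k = J s k) ∧
      ∀ x : ℝ, |H.eval x| ≤ ∑ s ∈ S, (∏ s' ∈ S.erase s, (|x - s'| / (|s - s'| - 1)) ^ τ) *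
        (max 1 |x - s|) ^ τ * ∑ k ∈ Finset.range τ, |J s k| := by
  classical
  -- cofactor, its inverse power series at the node, and the truncated quotient
  let P : ℝ → ℝ[X] := fun s => ∏ s' ∈ S.erase s, (X - C s') ^ τ
  let G : ℝ → PowerSeries ℝ := fun s => ∏ s' ∈ S.erase s, invLin (s - s') ^ τ
  let A : ℝ → ℝ[X] := fun s => PowerSeries.trunc τ (PowerSeries.mk (J s) * G s)
  let H : ℝ → ℝ[X] := fun s => P s * (A s).comp (X - C s)
  have htP : ∀ s, taylor s (P s) = ∏ s' ∈ S.erase s, (X + C (s - s')) ^ τ := by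
    intro s
    simp only [P, taylor_apply, prod_comp]
    refine Finset.prod_congr rfl fun s' _ => ?_
    simp only [pow_comp, sub_comp, X_comp, C_comp, C_sub]
    ring
  have hPG : ∀ s ∈ S, ((taylor s (P s) : ℝ[X]) : PowerSeries ℝ) * G s = 1 := by
    intro s hs
    rw [htP]
    simp only [G]
    have : ((∏ s' ∈ S.erase s, (X + C (s - s')) ^ τ : ℝ[X]) : PowerSeries ℝ) =
        ∏ s' ∈ S.erase s, ((X + C (s - s') : ℝ[X]) : PowerSeries ℝ) ^ τ := by
      rw [← Polynomial.coeToPowerSeries.ringHom_apply, map_prod]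
      refine Finset.prod_congr rfl fun s' _ => ?_
      rw [map_pow, Polynomial.coeToPowerSeries.ringHom_apply]
    rw [this, ← Finset.prod_mul_distrib]
    refine Finset.prod_eq_one fun s' hs' => ?_
    rw [← mul_pow, invLin_mul, one_pow]
    exact sub_ne_zero.mpr (Finset.ne_of_mem_erase hs').symm
  have htA : ∀ s, taylor s ((A s).comp (X - C s)) = A s := by
    intro s
    rw [taylor_apply, comp_assoc]
    simp
  have hdeg : ∀ s ∈ S, (H s).natDegree < τ * S.card := by
    intro s hs
    have h1 : (A s).natDegree < τ := by
      have := PowerSeries.natDegree_trunc_lt (PowerSeries.mk (J s) * G s) (τ - 1)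
      rwa [show τ - 1 + 1 = τ by omega] at this
    have h2 : (P s).natDegree ≤ ∑ s' ∈ S.erase s, τ := by
      refine (natDegree_prod_le _ _).trans (Finset.sum_le_sum fun s' _ => ?_)
      refine natDegree_pow_le.trans ?_
      simp
    rw [Finset.sum_const, Finset.card_erase_of_mem hs, smul_eq_mul] at h2
    have h3 : ((A s).comp (X - C s)).natDegree ≤ (A s).natDegree := by
      refine natDegree_comp_le.trans ?_
      simp
    have h4 := natDegree_mul_le (p := P s) (q := (A s).comp (X - C s))
    have h5 : (S.card - 1) * τ + τ = τ * S.card := by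
      have := Finset.card_pos.mpr ⟨s, hs⟩
      rw [mul_comm τ, ← Nat.succ_mul]
      congr 1
      omega
    have h6 : (H s).natDegree ≤ _ := h4
    omega
  refine ⟨∑ s ∈ S, H s, ?_, ?_, ?_⟩
  · intro n hn
    rw [iterate_derivative_sum]
    refine Finset.sum_eq_zero fun s hs => ?_
    exact iterate_derivative_eq_zero ((hdeg s hs).trans_le hn)
  · intro s hs k hk
    rw [map_sum, finsetSum_coeff, Finset.sum_eq_single_of_mem s hs]
    · simp only [H]
      rw [taylor_mul, htA, ← Polynomial.coeff_coe, Polynomial.coe_mul]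
      have h1 : (PowerSeries.mk (J s) : PowerSeries ℝ) =
          (taylor s (P s) : ℝ[X]) * (PowerSeries.mk (J s) * G s) := by
        rw [mul_left_comm, hPG s hs, mul_one]
      have h2 : J s k = PowerSeries.coeff k
          (((taylor s (P s) : ℝ[X]) : PowerSeries ℝ) * (PowerSeries.mk (J s) * G s)) := by
        rw [← h1, PowerSeries.coeff_mk]
      rw [h2, PowerSeries.coeff_mul, PowerSeries.coeff_mul]
      refine Finset.sum_congr rfl fun p hp => ?_
      have hp2 : p.2 < τ := by
        have := Finset.HasAntidiagonal.mem_antidiagonal.mp hp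
        omega
      congr 1
      simp only [A]
      rw [Polynomial.coeff_coe, PowerSeries.coeff_trunc, if_pos hp2]
    · intro s' hs' hne
      have hdvd : X ^ τ ∣ taylor s (H s') := by
        simp only [H, P]
        rw [taylor_mul]
        refine Dvd.dvd.mul_right ?_ _
        rw [← Finset.mul_prod_erase (S.erase s') _ (Finset.mem_erase.mpr ⟨hne.symm, hs⟩),
          taylor_mul, taylor_pow]
        refine Dvd.dvd.mul_right ?_ _
        simp
      exact (X_pow_dvd_iff.mp hdvd) k hk
  · intro x
    rw [eval_finsetSum]
    refine (Finset.abs_sum_le_sum_abs _ _).trans (Finset.sum_le_sum fun s hs => ?_)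
    simp only [H]
    rw [eval_mul, abs_mul, eval_comp]
    have hP : |(P s).eval x| = ∏ s' ∈ S.erase s, |x - s'| ^ τ := by
      simp only [P]
      rw [eval_prod, Finset.abs_prod]
      refine Finset.prod_congr rfl fun s' _ => ?_
      simp [abs_pow]
    have hd : ∀ s' ∈ S.erase s, 2 ≤ |s - s'| := fun s' hs' =>
      hS s hs s' (Finset.mem_of_mem_erase hs') (Finset.ne_of_mem_erase hs')
    have hG : ∑ k ∈ Finset.range τ, |PowerSeries.coeff k (G s)| ≤
        ∏ s' ∈ S.erase s, (1 / (|s - s'| - 1)) ^ τ := by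
      refine sum_abs_coeff_prod_le τ hτ _ _ _ fun s' hs' => ?_
      refine (sum_abs_coeff_pow_le _ _ hτ _).trans ?_
      exact pow_le_pow_left₀ (Finset.sum_nonneg fun _ _ => abs_nonneg _)
        (sum_invLin_le _ _ (hd s' hs')) _
    have hA : |(A s).eval (eval x (X - C s))| ≤ (max 1 |x - s|) ^ τ *
        ((∑ k ∈ Finset.range τ, |J s k|) * ∏ s' ∈ S.erase s, (1 / (|s - s'| - 1)) ^ τ) := by
      simp only [A, eval_sub, eval_X, eval_C]
      rw [eval, PowerSeries.eval₂_trunc_eq_sum_range]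
      simp only [RingHom.id_apply]
      refine (Finset.abs_sum_le_sum_abs _ _).trans ?_
      have hmul := (sum_abs_coeff_mul_le τ (PowerSeries.mk (J s)) (G s)).trans
        (mul_le_mul_of_nonneg_left hG (Finset.sum_nonneg fun _ _ => abs_nonneg _))
      simp only [PowerSeries.coeff_mk] at hmul
      refine le_trans ?_ (mul_le_mul_of_nonneg_left hmul (by positivity))
      rw [Finset.mul_sum]
      refine Finset.sum_le_sum fun k hk => ?_
      rw [abs_mul, abs_pow, mul_comm]
      refine mul_le_mul_of_nonneg_right ?_ (abs_nonneg _)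
      calc |x - s| ^ k ≤ (max 1 |x - s|) ^ k :=
            pow_le_pow_left₀ (abs_nonneg _) (le_max_right _ _) _
        _ ≤ _ := pow_le_pow_right₀ (le_max_left _ _) (Finset.mem_range.mp hk).le
    calc |(P s).eval x| * |(A s).eval (eval x (X - C s))|
        ≤ (∏ s' ∈ S.erase s, |x - s'| ^ τ) * ((max 1 |x - s|) ^ τ *
        ((∑ k ∈ Finset.range τ, |J s k|) * ∏ s' ∈ S.erase s, (1 / (|s - s'| - 1)) ^ τ)) := by
          rw [hP]
          exact mul_le_mul_of_nonneg_left hA (Finset.prod_nonneg fun _ _ => by positivity)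
      _ = _ := by
          have : ∏ s' ∈ S.erase s, (|x - s'| / (|s - s'| - 1)) ^ τ =
              (∏ s' ∈ S.erase s, |x - s'| ^ τ) *
                ∏ s' ∈ S.erase s, (1 / (|s - s'| - 1)) ^ τ := by
            rw [← Finset.prod_mul_distrib]
            refine Finset.prod_congr rfl fun s' _ => ?_
            rw [← mul_pow, mul_one_div]
          rw [this]
          ring

open Polynomial in
/-- Interpolation estimate: a function whose jets of order `τ` at the nodes are small is small
near the nodes, up to its derivative of order `τ * S.card`. -/
lemma hermite_bound (g : ℕ → ℝ → ℝ) (hg : ∀ k z, HasDerivAt (g k) (g (k + 1) z) z)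
    (S : Finset ℝ) (hSn : S.Nonempty) (hS : ∀ s ∈ S, ∀ s' ∈ S, s' ≠ s → 2 ≤ |s - s'|)
    (τ : ℕ) (hτ : 0 < τ) (a b x M : ℝ) (hx : x ∉ S) (hxI : x ∈ Set.Icc a b)
    (hSI : ∀ s ∈ S, s ∈ Set.Icc a b) (hM : ∀ z ∈ Set.Icc a b, |g (τ * S.card) z| ≤ M) :
    |g 0 x| ≤ M * (∏ s ∈ S, |x - s| ^ τ) / (τ * S.card).factorial +
      ∑ s ∈ S, (∏ s' ∈ S.erase s, (|x - s'| / (|s - s'| - 1)) ^ τ) *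
        (max 1 |x - s|) ^ τ * ∑ k ∈ Finset.range τ, |g k s / k.factorial| := by
  classical
  obtain ⟨H, h1, h2, h3⟩ := hermite_poly S hS τ hτ (fun s k => g k s / k.factorial)
  set N := τ * S.card with hN
  let W : ℝ[X] := ∏ s ∈ S, (X - C s) ^ τ
  have hWx : |W.eval x| = ∏ s ∈ S, |x - s| ^ τ := by
    simp only [W]
    rw [eval_prod, Finset.abs_prod]
    refine Finset.prod_congr rfl fun s' _ => ?_
    simp [abs_pow]
  have hWne : W.eval x ≠ 0 := by
    rw [← abs_pos, hWx]
    refine Finset.prod_pos fun s hs => pow_pos (abs_pos.mpr (sub_ne_zero.mpr ?_)) _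
    rintro rfl
    exact hx hs
  have hWm : W.Monic := monic_prod_of_monic _ _ fun s _ => (monic_X_sub_C s).pow τ
  have hWd : W.natDegree = N := by
    simp only [W]
    rw [natDegree_prod_of_monic _ _ fun s _ => (monic_X_sub_C s).pow τ]
    simp [hN, mul_comm]
  let κ : ℝ := (g 0 x - H.eval x) / W.eval x
  let G : ℕ → ℝ → ℝ := fun k z => g k z - (derivative^[k] H).eval z - κ * (derivative^[k] W).eval z
  have hG : ∀ k z, HasDerivAt (G k) (G (k + 1) z) z := by
    intro k z
    simp only [G, Function.iterate_succ_apply']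
    exact ((hg k z).sub (Polynomial.hasDerivAt _ z)).sub ((Polynomial.hasDerivAt _ z).const_mul κ)
  have hjet : ∀ (Q : ℝ[X]) (k : ℕ) (s : ℝ),
      (derivative^[k] Q).eval s = k.factorial * (taylor s Q).coeff k := by
    intro Q k s
    rw [taylor_coeff, ← nsmul_eq_mul, ← eval_smul, ← factorial_smul_hasseDeriv]
    rfl
  obtain ⟨ξ, hξ, hξ0⟩ := rolle_mult G hG S hSn τ x a b hx hxI hSI (by
    intro k hk s hs
    simp only [G]
    rw [hjet, hjet, h2 s hs k hk]
    have : (taylor s W).coeff k = 0 := by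
      have hdvd : X ^ τ ∣ taylor s W := by
        simp only [W]
        rw [← Finset.mul_prod_erase S _ hs, taylor_mul, taylor_pow]
        refine Dvd.dvd.mul_right ?_ _
        simp
      exact (X_pow_dvd_iff.mp hdvd) k hk
    rw [this]
    have : (k.factorial : ℝ) ≠ 0 := by positivity
    field_simp
    ring) (by
    simp only [G, κ, Function.iterate_zero, id]
    field_simp
    ring)
  have hWN : (derivative^[N] W).eval ξ = N.factorial := by
    rw [hjet, ← hWd, coeff_taylor_natDegree, hWm.leadingCoeff, mul_one]
  simp only [G] at hξ0
  rw [← hN, h1 N le_rfl, hWN] at hξ0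
  have hfac : (0 : ℝ) < N.factorial := by positivity
  have hκ : |κ| ≤ M / N.factorial := by
    rw [le_div_iff₀ hfac]
    have : κ * N.factorial = g N ξ := by simp at hξ0; linarith
    rw [← abs_of_pos hfac, ← abs_mul, this]
    exact hM ξ hξ
  have hgx : g 0 x = κ * W.eval x + H.eval x := by
    simp only [κ]
    field_simp
    ring
  rw [hgx]
  refine (abs_add_le _ _).trans (add_le_add ?_ (h3 x))
  rw [abs_mul, hWx, mul_div_right_comm]
  exact mul_le_mul_of_nonneg_right hκ (Finset.prod_nonneg fun _ _ => by positivity)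

/-! ### Interpolation at odd integers -/

lemma prod_dist_odd_le (R : ℕ) : ∀ x : ℝ, 0 ≤ x → x ≤ 2 * R →
    ∏ i ∈ Finset.range R, |x - (2 * i + 1)| ≤ 2 ^ R * R.factorial := by
  induction R with
  | zero => intro x _ _; simp
  | succ R ih =>
    intro x hx0 hx
    by_cases h : x ≤ 2 * R
    · rw [Finset.prod_range_succ, pow_succ, Nat.factorial_succ]
      have h1 : |x - (2 * R + 1)| ≤ 2 * ((R + 1 : ℕ) : ℝ) := by
        push_cast
        rw [abs_le]; constructor <;> linarith
      have := mul_le_mul (ih x hx0 h) h1 (abs_nonneg _) (by positivity)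
      refine this.trans (le_of_eq ?_)
      push_cast; ring
    · push Not at h
      have h1 : ∀ i ∈ Finset.range (R + 1), |x - (2 * i + 1)| ≤
          2 * ((R + 1 - 1 - i : ℕ) + 1 : ℝ) := by
        intro i hi
        have hi' : i ≤ R := by simpa [Nat.lt_succ_iff] using hi
        have : ((R + 1 - 1 - i : ℕ) : ℝ) = R - i := by
          rw [Nat.add_sub_cancel, Nat.cast_sub hi']
        rw [this]
        push_cast at hx
        have : (i : ℝ) ≤ R := by exact_mod_cast hi'
        rw [abs_le]; constructor <;> linarith
      refine (Finset.prod_le_prod (fun _ _ => abs_nonneg _) h1).trans (le_of_eq ?_)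
      rw [Finset.prod_range_reflect (fun i : ℕ => 2 * ((i : ℝ) + 1)) (R + 1),
        Finset.prod_mul_distrib, Finset.prod_const, Finset.card_range,
        ← Finset.prod_range_add_one_eq_factorial]
      push_cast
      rfl

lemma two_pow_factorial_le (a : ℕ) :
    (2 : ℝ) ^ a * a.factorial ≤ (2 * a + 1) * ∏ k ∈ Finset.range a, (2 * (k : ℝ) + 1) := by
  induction a with
  | zero => simp
  | succ a ih =>
    rw [Finset.prod_range_succ, pow_succ, Nat.factorial_succ]
    push_cast
    have h0 : (0 : ℝ) ≤ ∏ k ∈ Finset.range a, (2 * (k : ℝ) + 1) :=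
      Finset.prod_nonneg fun _ _ => by positivity
    have h1 : (0 : ℝ) ≤ 2 ^ a * (a.factorial : ℝ) := by positivity
    calc (2 : ℝ) ^ a * 2 * (((a : ℝ) + 1) * a.factorial)
        = (2 ^ a * a.factorial) * (2 * ((a : ℝ) + 1)) := by ring
      _ ≤ ((2 * a + 1) * ∏ k ∈ Finset.range a, (2 * (k : ℝ) + 1)) * (2 * ((a : ℝ) + 1)) :=
          mul_le_mul_of_nonneg_right ih (by positivity)
      _ ≤ _ := by
          have : (0 : ℝ) ≤ (2 * a + 1) * ∏ k ∈ Finset.range a, (2 * (k : ℝ) + 1) := by positivity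
          nlinarith

lemma prod_gap_odd_ge (R i : ℕ) (hi : i < R) :
    (2 : ℝ) ^ R * R.factorial ≤
      (∏ j ∈ (Finset.range R).erase i, (|(2 * i + 1 : ℝ) - (2 * j + 1)| - 1)) *
        (8 * R ^ 3 * 2 ^ R) := by
  obtain ⟨b, rfl⟩ : ∃ b, R = i + 1 + b := ⟨R - (i + 1), by omega⟩
  have hsplit : ∏ j ∈ (Finset.range (i + 1 + b)).erase i, (|(2 * i + 1 : ℝ) - (2 * j + 1)| - 1) =
      (∏ k ∈ Finset.range i, (2 * (k : ℝ) + 1)) * ∏ k ∈ Finset.range b, (2 * (k : ℝ) + 1) := by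
    have h1 : ∏ j ∈ Finset.range i, (|(2 * i + 1 : ℝ) - (2 * j + 1)| - 1) =
        ∏ k ∈ Finset.range i, (2 * (k : ℝ) + 1) := by
      rw [← Finset.prod_range_reflect (fun k : ℕ => 2 * (k : ℝ) + 1)]
      refine Finset.prod_congr rfl fun j hj => ?_
      have hj' : j + 1 ≤ i := Finset.mem_range.mp hj
      have : ((i - 1 - j : ℕ) : ℝ) = i - 1 - j := by
        rw [Nat.sub_sub, Nat.cast_sub (by omega)]; push_cast; ring
      rw [this, abs_of_nonneg]
      · ring
      · have : (j : ℝ) + 1 ≤ i := by exact_mod_cast hj'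
        linarith
    have h2 : ∏ j ∈ Finset.range b, (|(2 * i + 1 : ℝ) - (2 * ((i + 1 + j : ℕ) : ℝ) + 1)| - 1) =
        ∏ k ∈ Finset.range b, (2 * (k : ℝ) + 1) := by
      refine Finset.prod_congr rfl fun j _ => ?_
      push_cast
      rw [abs_of_nonpos] <;> nlinarith [(Nat.cast_nonneg j : (0 : ℝ) ≤ j)]
    have h3 : (Finset.range (i + 1 + b)).erase i =
        Finset.range i ∪ (Finset.range b).map (addLeftEmbedding (i + 1)) := by
      ext j
      simp only [Finset.mem_erase, Finset.mem_range, Finset.mem_union, Finset.mem_map,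
        addLeftEmbedding_apply]
      constructor
      · rintro ⟨h1, h2⟩
        by_cases h : j < i
        · exact Or.inl h
        · exact Or.inr ⟨j - (i + 1), by omega, by omega⟩
      · rintro (h | ⟨k, hk, rfl⟩) <;> omega
    rw [h3, Finset.prod_union, h1, Finset.prod_map]
    · simp only [addLeftEmbedding_apply]
      rw [h2]
    · rw [Finset.disjoint_left]
      intro j hj hj'
      simp only [Finset.mem_map, addLeftEmbedding_apply, Finset.mem_range] at hj hj'
      obtain ⟨k, _, rfl⟩ := hj'
      omega
  rw [hsplit]
  set p := ∏ k ∈ Finset.range i, (2 * (k : ℝ) + 1)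
  set q := ∏ k ∈ Finset.range b, (2 * (k : ℝ) + 1)
  have hp0 : 0 ≤ p := Finset.prod_nonneg fun _ _ => by positivity
  have hq0 : 0 ≤ q := Finset.prod_nonneg fun _ _ => by positivity
  have hp := two_pow_factorial_le i
  have hq := two_pow_factorial_le b
  have hch : ((i + b).factorial : ℝ) ≤ 2 ^ (i + b) * (i.factorial * b.factorial) := by
    have h1 := Nat.add_choose_mul_factorial_mul_factorial i b
    have h2 := Nat.choose_le_two_pow (i + b) b
    rw [← h1]
    push_cast
    rw [mul_assoc]
    refine mul_le_mul_of_nonneg_right ?_ (by positivity)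
    exact_mod_cast h2
  set R : ℝ := ((i + 1 + b : ℕ) : ℝ) with hR
  have hR' : R = i + 1 + b := by rw [hR]; push_cast; ring
  have hfac : ((i + 1 + b).factorial : ℝ) = R * (i + b).factorial := by
    rw [show i + 1 + b = (i + b) + 1 by ring, Nat.factorial_succ, hR]
    push_cast; ring
  have hi0 : (0 : ℝ) ≤ i := Nat.cast_nonneg i
  have hb0 : (0 : ℝ) ≤ b := Nat.cast_nonneg b
  have hR0 : 0 ≤ R := by rw [hR']; positivity
  rw [hfac]
  calc (2 : ℝ) ^ (i + 1 + b) * (R * (i + b).factorial)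
      ≤ (2 : ℝ) ^ (i + 1 + b) * (R * (2 ^ (i + b) * (i.factorial * b.factorial))) := by gcongr
    _ = (2 : ℝ) ^ (i + 1 + b) * R * ((2 ^ i * i.factorial) * (2 ^ b * b.factorial)) := by ring
    _ ≤ (2 : ℝ) ^ (i + 1 + b) * R * (((2 * i + 1) * p) * ((2 * b + 1) * q)) := by
        have := mul_le_mul hp hq (by positivity) (by positivity)
        gcongr
    _ = (2 : ℝ) ^ (i + 1 + b) * R * (p * q) * ((2 * i + 1) * (2 * b + 1)) := by ring
    _ ≤ (2 : ℝ) ^ (i + 1 + b) * R * (p * q) * (8 * R ^ 2) := by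
        have : (2 * (i : ℝ) + 1) * (2 * b + 1) ≤ 8 * R ^ 2 := by rw [hR']; nlinarith
        gcongr
    _ = _ := by ring

lemma factorial_le_stirling (n : ℕ) (hn : 1 ≤ n) :
    (n.factorial : ℝ) ≤ Real.exp 1 * n * (n / Real.exp 1) ^ n := by
  induction n, hn using Nat.le_induction with
  | base => simp; 
  | succ n hn ih =>
    have hn0 : (0 : ℝ) < n := by exact_mod_cast hn
    have he := Real.exp_pos 1
    have hkey : Real.exp 1 * (n : ℝ) ^ (n + 1) ≤ ((n : ℝ) + 1) ^ (n + 1) := by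
      have h1 : (1 : ℝ) ≤ (n + 1 : ℕ) * Real.log (((n : ℝ) + 1) / n) := by
        have := Real.one_sub_inv_le_log_of_pos (x := ((n : ℝ) + 1) / n) (by positivity)
        rw [inv_div] at this
        have h2 : 1 - (n : ℝ) / (n + 1) = 1 / (n + 1) := by field_simp; ring
        rw [h2, div_le_iff₀ (by positivity)] at this
        push_cast
        linarith
      have h2 := Real.exp_le_exp.mpr h1
      rw [← Real.log_pow, Real.exp_log (by positivity), div_pow, le_div_iff₀ (by positivity)] at h2
      exact h2
    rw [Nat.factorial_succ]
    push_cast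
    calc ((n : ℝ) + 1) * n.factorial
        ≤ ((n : ℝ) + 1) * (Real.exp 1 * n * (n / Real.exp 1) ^ n) := by gcongr
      _ = ((n : ℝ) + 1) * (Real.exp 1 * (n : ℝ) ^ (n + 1)) / Real.exp 1 ^ n := by
          rw [div_pow]; ring
      _ ≤ ((n : ℝ) + 1) * (((n : ℝ) + 1) ^ (n + 1)) / Real.exp 1 ^ n := by gcongr
      _ = _ := by
          rw [div_pow, pow_succ (Real.exp 1)]; field_simp

lemma factorial_ratio_le (R τ : ℕ) (hR : 1 ≤ R) (hτ : 1 ≤ τ) :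
    ((2 : ℝ) ^ R * R.factorial) ^ τ / (τ * R).factorial ≤
      (Real.exp 1 * R) ^ τ * (2 / τ) ^ (τ * R) := by
  have he := Real.exp_pos 1
  have hR0 : (0 : ℝ) < R := by exact_mod_cast hR
  have hτ0 : (0 : ℝ) < τ := by exact_mod_cast hτ
  have h1 := factorial_le_stirling R hR
  have h2 : ((τ * R : ℕ) : ℝ) ^ (τ * R) / (τ * R).factorial ≤ Real.exp 1 ^ (τ * R) := by
    have := Real.pow_div_factorial_le_exp ((τ * R : ℕ) : ℝ) (by positivity) (τ * R)
    rwa [← Real.exp_one_pow] at this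
  have h3 : (1 : ℝ) / (τ * R).factorial ≤ (Real.exp 1 / (τ * R)) ^ (τ * R) := by
    rw [div_pow, le_div_iff₀ (by positivity), one_div_mul_eq_div]
    push_cast at h2
    exact h2
  calc ((2 : ℝ) ^ R * R.factorial) ^ τ / (τ * R).factorial
      = ((2 : ℝ) ^ R * R.factorial) ^ τ * (1 / (τ * R).factorial) := by ring
    _ ≤ ((2 : ℝ) ^ R * (Real.exp 1 * R * (R / Real.exp 1) ^ R)) ^ τ *
        (Real.exp 1 / (τ * R)) ^ (τ * R) := by gcongr
    _ = (Real.exp 1 * R) ^ τ * (2 * (R / Real.exp 1) * (Real.exp 1 / (τ * R))) ^ (τ * R) := by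
        rw [mul_pow (2 * (R / Real.exp 1)) _ (τ * R),
          show (2 * ((R : ℝ) / Real.exp 1)) ^ (τ * R) = ((2 * (R / Real.exp 1)) ^ R) ^ τ by
            rw [← pow_mul, mul_comm τ R], mul_pow 2, ← mul_assoc, ← mul_pow]
        ring
    _ = _ := by
        congr 2
        field_simp

/-- The interpolation estimate for the odd nodes `1, 3, …, 2R - 1`. -/
lemma hermite_odd (g : ℕ → ℝ → ℝ) (hg : ∀ k z, HasDerivAt (g k) (g (k + 1) z) z)
    (R τ : ℕ) (hR : 1 ≤ R) (hτ : 1 ≤ τ) (x M η : ℝ) (hx0 : 0 ≤ x) (hx : x ≤ 2 * R)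
    (hdist : ∀ i < R, 1 / 2 ≤ |x - (2 * (i : ℝ) + 1)|)
    (hM : ∀ z : ℝ, 0 ≤ z → z ≤ 2 * R → |g (τ * R) z| ≤ M)
    (hη : ∀ i < R, ∑ k ∈ Finset.range τ, |g k (2 * (i : ℝ) + 1) / k.factorial| ≤ η) :
    |g 0 x| ≤ M * ((Real.exp 1 * R) ^ τ * (2 / τ) ^ (τ * R)) +
      R * (32 * R ^ 4 * 2 ^ R) ^ τ * η := by
  classical
  have hM0 : 0 ≤ M := (abs_nonneg _).trans (hM x hx0 hx)
  have hR0 : (1 : ℝ) ≤ R := by exact_mod_cast hR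
  let e : ℕ ↪ ℝ := ⟨fun i => 2 * i + 1, fun i j h => by simpa using h⟩
  let S : Finset ℝ := (Finset.range R).map e
  have hcard : S.card = R := by simp [S]
  have hmem : ∀ s ∈ S, ∃ i < R, s = 2 * (i : ℝ) + 1 := by
    intro s hs
    simp only [S, Finset.mem_map, Finset.mem_range] at hs
    obtain ⟨i, hi, rfl⟩ := hs
    exact ⟨i, hi, rfl⟩
  have hSI : ∀ s ∈ S, s ∈ Set.Icc (0 : ℝ) (2 * R) := by
    intro s hs
    obtain ⟨i, hi, rfl⟩ := hmem s hs
    have : (i : ℝ) + 1 ≤ R := by exact_mod_cast hi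
    exact ⟨by positivity, by linarith⟩
  have hsep : ∀ s ∈ S, ∀ s' ∈ S, s' ≠ s → 2 ≤ |s - s'| := by
    intro s hs s' hs' hne
    obtain ⟨i, hi, rfl⟩ := hmem s hs
    obtain ⟨j, hj, rfl⟩ := hmem s' hs'
    have hij : (i : ℤ) - j ≠ 0 := by
      intro h
      apply hne
      have : i = j := by omega
      rw [this]
    have h1 : (1 : ℝ) ≤ |(i : ℝ) - j| := by exact_mod_cast Int.one_le_abs hij
    rw [show 2 * (i : ℝ) + 1 - (2 * j + 1) = 2 * (i - j) by ring, abs_mul, abs_two]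
    linarith
  have hxS : x ∉ S := by
    intro h
    obtain ⟨i, hi, h⟩ := hmem x h
    have := hdist i hi
    rw [← h] at this
    norm_num at this
  have hmain := hermite_bound g hg S ⟨e 0, by simp [S]; omega⟩ hsep τ (by omega) 0 (2 * R) x M hxS
    ⟨hx0, hx⟩ hSI (by rw [hcard]; exact fun z hz => hM z hz.1 hz.2)
  rw [hcard] at hmain
  have hprod : ∏ i ∈ Finset.range R, |x - (2 * i + 1)| ≤ 2 ^ R * R.factorial :=
    prod_dist_odd_le R x hx0 hx
  refine hmain.trans (add_le_add ?_ ?_)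
  · rw [mul_div_assoc]
    refine mul_le_mul_of_nonneg_left ?_ hM0
    refine le_trans ?_ (factorial_ratio_le R τ hR hτ)
    refine div_le_div_of_nonneg_right ?_ (by positivity)
    rw [Finset.prod_pow]
    refine pow_le_pow_left₀ (Finset.prod_nonneg fun _ _ => abs_nonneg _) ?_ _
    simp only [S, Finset.prod_map]
    exact hprod
  · have hterm : ∀ i ∈ Finset.range R, (∏ s' ∈ S.erase (e i), (|x - s'| / (|e i - s'| - 1)) ^ τ) *
        (max 1 |x - e i|) ^ τ * ∑ k ∈ Finset.range τ, |g k (e i) / k.factorial| ≤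
        (32 * R ^ 4 * 2 ^ R) ^ τ * η := by
      intro i hi
      have hi' := Finset.mem_range.mp hi
      have hη' := hη i hi'
      have hη0 : 0 ≤ η := (Finset.sum_nonneg fun _ _ => abs_nonneg _).trans hη'
      refine mul_le_mul ?_ hη' (Finset.sum_nonneg fun _ _ => abs_nonneg _) (by positivity)
      rw [Finset.prod_pow, ← mul_pow]
      have herase : S.erase (e i) = ((Finset.range R).erase i).map e := by
        simp only [S]
        rw [Finset.map_erase]
      have hgap0 : ∀ j ∈ (Finset.range R).erase i,
          0 < (|(2 * i + 1 : ℝ) - (2 * j + 1)| - 1) := by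
        intro j hj
        have := hsep (e i) (by simp [S]; omega) (e j)
          (by have := Finset.mem_of_mem_erase hj; simp [S] at this ⊢; omega)
          (fun h => Finset.ne_of_mem_erase hj (e.injective h))
        have h2 : |(2 * i + 1 : ℝ) - (2 * j + 1)| = |e i - e j| := rfl
        rw [h2]; linarith
      rw [herase, Finset.prod_map]
      refine pow_le_pow_left₀ ?_ ?_ _
      · refine mul_nonneg (Finset.prod_nonneg fun j hj => ?_) (by positivity)
        exact div_nonneg (abs_nonneg _) (hgap0 j hj).le
      have hge := prod_gap_odd_ge R i hi'
      rw [Finset.prod_div_distrib]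
      have hq : 0 < ∏ j ∈ (Finset.range R).erase i, (|(2 * i + 1 : ℝ) - (2 * j + 1)| - 1) :=
        Finset.prod_pos hgap0
      have hp : ∏ j ∈ (Finset.range R).erase i, |x - (2 * j + 1)| ≤ 2 * (2 ^ R * R.factorial) := by
        have h1 := Finset.mul_prod_erase (Finset.range R) (fun j : ℕ => |x - (2 * j + 1)|) hi
        have h2 := hdist i hi'
        have h3 : 0 ≤ ∏ j ∈ (Finset.range R).erase i, |x - (2 * j + 1)| :=
          Finset.prod_nonneg fun _ _ => abs_nonneg _
        beta_reduce at h1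
        nlinarith
      have hmax : max 1 |x - e i| ≤ 2 * R := by
        refine max_le (by linarith) ?_
        have h4 := hSI (e i) (by simp [S]; omega)
        rw [abs_le]
        constructor <;> linarith [h4.1, h4.2]
      have hratio : (∏ j ∈ (Finset.range R).erase i, |x - e j|) /
          (∏ j ∈ (Finset.range R).erase i, (|e i - e j| - 1)) ≤ 16 * R ^ 3 * 2 ^ R := by
        change (∏ j ∈ (Finset.range R).erase i, |x - (2 * (j : ℝ) + 1)|) /
          (∏ j ∈ (Finset.range R).erase i, (|(2 * i + 1 : ℝ) - (2 * j + 1)| - 1)) ≤ _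
        rw [div_le_iff₀ hq]
        refine hp.trans ?_
        linarith
      calc _ ≤ (16 * R ^ 3 * 2 ^ R) * (2 * (R : ℝ)) :=
            mul_le_mul hratio hmax (by positivity) (by positivity)
        _ = _ := by ring
    have hS : ∑ s ∈ S, (∏ s' ∈ S.erase s, (|x - s'| / (|s - s'| - 1)) ^ τ) *
        (max 1 |x - s|) ^ τ * ∑ k ∈ Finset.range τ, |g k s / k.factorial| =
        ∑ i ∈ Finset.range R, (∏ s' ∈ S.erase (e i), (|x - s'| / (|e i - s'| - 1)) ^ τ) *
        (max 1 |x - e i|) ^ τ * ∑ k ∈ Finset.range τ, |g k (e i) / k.factorial| := by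
      rw [show S = (Finset.range R).map e from rfl, Finset.sum_map]
    rw [hS]
    refine (Finset.sum_le_sum hterm).trans (le_of_eq ?_)
    rw [Finset.sum_const, Finset.card_range, nsmul_eq_mul]
    ring

/-! ### The Tribonacci root and the four generators -/

/-- Existence of the dominant Tribonacci root together with a sharp enclosure. -/
lemma exists_trib_root : ∃ x : ℝ, x ^ 3 = x ^ 2 + x + 1 ∧ 1.8392867 < x ∧ x < 1.8392868 := by
  have hc : ContinuousOn (fun x : ℝ => x ^ 3 - x ^ 2 - x - 1) (Set.Icc 1.8392867 1.8392868) := by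
    fun_prop
  have h := intermediate_value_Ioo (by norm_num : (1.8392867 : ℝ) ≤ 1.8392868) hc
  have h0 : (0 : ℝ) ∈ Set.Ioo ((1.8392867 : ℝ) ^ 3 - 1.8392867 ^ 2 - 1.8392867 - 1)
      (1.8392868 ^ 3 - 1.8392868 ^ 2 - 1.8392868 - 1) := by
    constructor <;> norm_num
  obtain ⟨x, hx, hx0⟩ := h h0
  exact ⟨x, by simp only at hx0; linarith, hx.1, hx.2⟩

/-- The real root `α` of `X³ - X² - X - 1`. -/
noncomputable def tribRoot : ℝ := exists_trib_root.choose

lemma tribRoot_cube : tribRoot ^ 3 = tribRoot ^ 2 + tribRoot + 1 := exists_trib_root.choose_spec.1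
lemma lt_tribRoot : 1.8392867 < tribRoot := exists_trib_root.choose_spec.2.1
lemma tribRoot_lt : tribRoot < 1.8392868 := exists_trib_root.choose_spec.2.2

/-- The four multiplicative generators `α - 1, 3, α, 2α² - 3α`, as polynomial expressions
that make sense at every conjugate of `α`. -/
def gen {A : Type*} [CommRing A] (z : A) : Fin 4 → A := ![z - 1, 3, z, 2 * z ^ 2 - 3 * z]

lemma map_gen {A B : Type*} [CommRing A] [CommRing B] (f : A →+* B) (z : A) (i : Fin 4) :
    f (gen z i) = gen (f z) i := by
  fin_cases i <;> simp [gen, map_ofNat]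

lemma gen_pos (i : Fin 4) : 0 < gen tribRoot i := by
  have h1 := lt_tribRoot
  fin_cases i <;> simp [gen] <;> nlinarith

/-- The shape of the boxes of exponent vectors: the `i`-th exponent is at most `T / boxDen i`. The
values are roughly proportional to the heights of the generators. -/
def boxDen : Fin 4 → ℕ := ![142, 498, 108, 339]

/-- The logarithms of the generators. -/
noncomputable def lg (i : Fin 4) : ℝ := Real.log (gen tribRoot i)

lemma log_le_of_taylor {x q : ℝ} (n : ℕ) (hx : 0 < x) (hq : 0 ≤ q)
    (h : x ≤ ∑ i ∈ Finset.range n, q ^ i / i.factorial) : Real.log x ≤ q := by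
  rw [Real.log_le_iff_le_exp hx]
  exact h.trans (Real.sum_le_exp_of_nonneg hq n)

lemma lg_abs (i : Fin 4) : |lg i| ≤ (![0.1753, 1.0987, 0.6095, 0.2218] : Fin 4 → ℝ) i := by
  have h1 := lt_tribRoot
  have h2 := tribRoot_lt
  have hp := gen_pos i
  have key : ∀ q : ℝ, 1 ≤ gen tribRoot i → Real.log (gen tribRoot i) ≤ q → |lg i| ≤ q := by
    intro q ha hb
    rw [lg, abs_of_nonneg (Real.log_nonneg ha)]
    exact hb
  fin_cases i
  · have h3 : Real.log (gen tribRoot 0) ≤ 0 := by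
      refine Real.log_nonpos hp.le ?_
      simp [gen]; linarith
    have h4 : Real.log (gen tribRoot 0)⁻¹ ≤ 0.1753 := by
      refine log_le_of_taylor 6 (inv_pos.mpr hp) (by norm_num) ?_
      have hp' := gen_pos 0
      rw [inv_le_comm₀ hp' (by norm_num [Finset.sum_range_succ, Nat.factorial])]
      simp [gen]
      norm_num [Finset.sum_range_succ, Nat.factorial]
      linarith
    rw [Real.log_inv] at h4
    change |lg 0| ≤ 0.1753
    rw [lg, abs_of_nonpos h3]
    exact h4
  · refine key 1.0987 (by simp [gen]) ?_
    refine log_le_of_taylor 12 hp (by norm_num) ?_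
    norm_num [gen, Finset.sum_range_succ, Nat.factorial]
  · refine key 0.6095 (by simp [gen]; linarith) ?_
    refine log_le_of_taylor 9 hp (by norm_num) ?_
    norm_num [gen, Finset.sum_range_succ, Nat.factorial]
    linarith
  · refine key 0.2218 (by simp [gen]; nlinarith) ?_
    refine log_le_of_taylor 6 hp (by norm_num) ?_
    norm_num [gen, Finset.sum_range_succ, Nat.factorial]
    nlinarith

/-- Factorisation of the cubic over its real root: a complex root is either `α` or a root of the
cofactor, whose two roots are complex conjugate. -/
lemma root_cases {z : ℂ} (hz : z ^ 3 = z ^ 2 + z + 1) :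
    z = (tribRoot : ℂ) ∨
      (z.re = (1 - tribRoot) / 2 ∧ z.re ^ 2 + z.im ^ 2 = tribRoot ^ 2 - tribRoot - 1) := by
  have hα : (tribRoot : ℂ) ^ 3 = tribRoot ^ 2 + tribRoot + 1 := by exact_mod_cast tribRoot_cube
  have h1 : (z - tribRoot) * (z ^ 2 + (tribRoot - 1) * z + (tribRoot ^ 2 - tribRoot - 1)) = 0 := by
    linear_combination hz - hα
  rcases mul_eq_zero.mp h1 with h | h
  · left; exact sub_eq_zero.mp h
  · right
    have hre := congrArg Complex.re h
    have him := congrArg Complex.im h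
    simp [pow_two] at hre him
    have hl := lt_tribRoot
    have hu := tribRoot_lt
    have him' : z.im * (2 * z.re + (tribRoot - 1)) = 0 := by linarith
    rcases mul_eq_zero.mp him' with h0 | h0
    · exfalso
      rw [h0] at hre
      nlinarith [sq_nonneg (2 * z.re + (tribRoot - 1))]
    · have hre' : z.re = (1 - tribRoot) / 2 := by linarith
      refine ⟨hre', ?_⟩
      rw [hre'] at hre ⊢
      linarith

/-- Bounds for the absolute values of the generators at the real and at the complex places; values
less than `1` are replaced by `1`, so that the bounds can be used with box exponents. -/
lemma place_bound {z : ℂ} (hz : z ^ 3 = z ^ 2 + z + 1) (i : Fin 4) :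
    (z = tribRoot → ‖gen z i‖ ≤ Real.exp ((![0, 1.0987, 0.6095, 0.2218] : Fin 4 → ℝ) i)) ∧
    (z ≠ tribRoot → ‖gen z i‖ ≤ Real.exp ((![0.4347, 1.0987, 0, 1.0886] : Fin 4 → ℝ) i)) := by
  have h1 := lt_tribRoot
  have h2 := tribRoot_lt
  have hlog3 : (3 : ℝ) ≤ Real.exp 1.0987 := by
    have := lg_abs 1
    rw [← Real.log_le_iff_le_exp (by norm_num)]
    simpa [lg, gen] using (le_abs_self _).trans this
  constructor
  · rintro rfl
    have hr : ‖gen (tribRoot : ℂ) i‖ = gen tribRoot i := by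
      have := map_gen Complex.ofRealHom tribRoot i
      simp only [Complex.ofRealHom_eq_coe] at this
      rw [← this, Complex.norm_real, Real.norm_of_nonneg (gen_pos i).le]
    rw [hr]
    have h3 := lg_abs i
    have h4 := (le_abs_self _).trans h3
    rw [lg, Real.log_le_iff_le_exp (gen_pos i)] at h4
    fin_cases i
    · simp [gen]; linarith
    · exact h4
    · exact h4
    · exact h4
  · intro hne
    obtain ⟨hre, hn⟩ := (root_cases hz).resolve_left hne
    have hc := tribRoot_cube
    have sq : ∀ (w : ℂ) (q : ℝ), w.re ^ 2 + w.im ^ 2 ≤ Real.exp q ^ 2 → ‖w‖ ≤ Real.exp q := by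
      intro w q h
      refine abs_le_of_sq_le_sq' ?_ (Real.exp_pos q).le |>.2
      rw [← Complex.normSq_eq_norm_sq, Complex.normSq_apply]
      linarith
    have ex : ∀ (q y : ℝ) (n : ℕ), 0 ≤ q → y ≤ ∑ i ∈ Finset.range n, (q + q) ^ i / i.factorial →
        y ≤ Real.exp q ^ 2 := by
      intro q y n hq h
      rw [pow_two, ← Real.exp_add]
      exact h.trans (Real.sum_le_exp_of_nonneg (by linarith) n)
    fin_cases i
    · change ‖z - 1‖ ≤ Real.exp 0.4347
      apply sq
      have : (z - 1).re ^ 2 + (z - 1).im ^ 2 = tribRoot ^ 2 - 1 := by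
        simp
        nlinarith
      rw [this]
      apply ex _ _ 10 (by norm_num)
      norm_num [Finset.sum_range_succ, Nat.factorial]
      nlinarith
    · simpa [gen] using hlog3
    · change ‖z‖ ≤ Real.exp 0
      apply sq
      rw [hn]
      simp
      nlinarith
    · change ‖2 * z ^ 2 - 3 * z‖ ≤ Real.exp 1.0886
      apply sq
      have h5 : (2 * z ^ 2 - 3 * z).re ^ 2 + (2 * z ^ 2 - 3 * z).im ^ 2 =
          (z.re ^ 2 + z.im ^ 2) * (4 * (z.re ^ 2 + z.im ^ 2) - 12 * z.re + 9) := by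
        simp [pow_two]; ring
      rw [h5, hn, hre]
      apply ex _ _ 15 (by norm_num)
      norm_num [Finset.sum_range_succ, Nat.factorial]
      have h6 : tribRoot ^ 2 - tribRoot - 1 < 0.54369 := by nlinarith
      have h7 : 0 < tribRoot ^ 2 - tribRoot - 1 := by nlinarith
      nlinarith

/-! ### Kummer theory over subfields of the reals -/

/-- The quadratic extension `F(r)` of a subfield `F` of `ℝ`, for `r ∉ F` with `r² ∈ F`. -/
def quadExt (F : Subfield ℝ) (r : ℝ) (hr2 : r ^ 2 ∈ F) (hr : r ∉ F) : Subfield ℝ where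
  carrier := {x | ∃ u ∈ F, ∃ v ∈ F, x = u + v * r}
  mul_mem' := by
    rintro _ _ ⟨u, hu, v, hv, rfl⟩ ⟨u', hu', v', hv', rfl⟩
    exact ⟨u * u' + v * v' * r ^ 2, F.add_mem (F.mul_mem hu hu') (F.mul_mem (F.mul_mem hv hv') hr2),
      u * v' + v * u', F.add_mem (F.mul_mem hu hv') (F.mul_mem hv hu'), by ring⟩
  one_mem' := ⟨1, F.one_mem, 0, F.zero_mem, by ring⟩
  add_mem' := by
    rintro _ _ ⟨u, hu, v, hv, rfl⟩ ⟨u', hu', v', hv', rfl⟩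
    exact ⟨u + u', F.add_mem hu hu', v + v', F.add_mem hv hv', by ring⟩
  zero_mem' := ⟨0, F.zero_mem, 0, F.zero_mem, by ring⟩
  neg_mem' := by
    rintro _ ⟨u, hu, v, hv, rfl⟩
    exact ⟨-u, F.neg_mem hu, -v, F.neg_mem hv, by ring⟩
  inv_mem' := by
    rintro _ ⟨u, hu, v, hv, rfl⟩
    have hd : u ^ 2 - v ^ 2 * r ^ 2 ∈ F :=
      F.sub_mem (F.pow_mem hu 2) (F.mul_mem (F.pow_mem hv 2) hr2)
    by_cases h0 : u + v * r = 0
    · exact ⟨0, F.zero_mem, 0, F.zero_mem, by rw [h0]; simp⟩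
    · have h1 : u - v * r ≠ 0 := by
        intro h1
        have hv0 : v ≠ 0 := by
          rintro rfl
          apply h0
          linarith
        apply hr
        have : r = u / v := by field_simp; linarith
        rw [this]
        exact F.div_mem hu hv
      refine ⟨u / (u ^ 2 - v ^ 2 * r ^ 2), F.div_mem hu hd, -v / (u ^ 2 - v ^ 2 * r ^ 2),
        F.div_mem (F.neg_mem hv) hd, ?_⟩
      have h2 : u ^ 2 - v ^ 2 * r ^ 2 = (u + v * r) * (u - v * r) := by ring
      rw [h2]
      field_simp
      ring

/-- Kummer theory for exponent two: if no nonempty subproduct of the square roots `r i` lies in the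
field `F`, then the subproducts are linearly independent over `F`. -/
lemma kummer_indep {ι : Type*} [DecidableEq ι] (r : ι → ℝ) (s : Finset ι) :
    ∀ F : Subfield ℝ, (∀ i ∈ s, r i ^ 2 ∈ F) →
      (∀ t ⊆ s, t.Nonempty → ∏ i ∈ t, r i ∉ F) →
      ∀ C : Finset ι → ℝ, (∀ t ⊆ s, C t ∈ F) →
      ∑ t ∈ s.powerset, C t * ∏ i ∈ t, r i = 0 → ∀ t ⊆ s, C t = 0 := by
  induction s using Finset.induction_on with
  | empty =>
    intro F _ _ C _ h t ht
    rw [Finset.subset_empty] at ht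
    subst ht
    simpa using h
  | insert a s ha ih =>
    intro F h2 hn C hC h
    have hra2 : r a ^ 2 ∈ F := h2 a (Finset.mem_insert_self a s)
    have hra : r a ∉ F := by
      simpa using hn {a} (by simp) (Finset.singleton_nonempty a)
    have hat : ∀ t ⊆ s, a ∉ t := fun t ht hat => ha (ht hat)
    have hFF : ∀ u ∈ F, u ∈ quadExt F (r a) hra2 hra := fun u hu => ⟨u, hu, 0, F.zero_mem, by ring⟩
    have hsq : ∀ t ⊆ s, (∏ i ∈ t, r i) ^ 2 ∈ F := by
      intro t ht
      rw [← Finset.prod_pow]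
      exact F.prod_mem fun i hi => h2 i (Finset.mem_insert_of_mem (ht hi))
    have key := ih (quadExt F (r a) hra2 hra)
      (fun i hi => hFF _ (h2 i (Finset.mem_insert_of_mem hi))) ?_
      (fun t => C t + C (insert a t) * r a) ?_ ?_
    · have h3 : ∀ t ⊆ s, C t = 0 ∧ C (insert a t) = 0 := by
        intro t ht
        have h4 := key t ht
        beta_reduce at h4
        have hc1 := hC t (ht.trans (Finset.subset_insert a s))
        have hc2 := hC (insert a t) (Finset.insert_subset_insert a ht)
        have h5 : C (insert a t) = 0 := by
          by_contra h5
          apply hra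
          have : r a = -C t / C (insert a t) := by field_simp; linarith
          rw [this]
          exact F.div_mem (F.neg_mem hc1) hc2
        rw [h5] at h4
        exact ⟨by linarith, h5⟩
      intro t ht
      by_cases hat' : a ∈ t
      · have := (h3 (t.erase a) (by rwa [← Finset.subset_insert_iff])).2
        rwa [Finset.insert_erase hat'] at this
      · exact (h3 t ((Finset.subset_insert_iff_of_notMem hat').mp ht)).1
    · rintro t ht hne ⟨u, hu, v, hv, huv⟩
      have h6 := hsq t ht
      by_cases hv0 : v = 0
      · apply hn t (ht.trans (Finset.subset_insert a s)) hne
        rw [huv, hv0]; simpa using hu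
      by_cases hu0 : u = 0
      · apply hn (insert a t) (Finset.insert_subset_insert a ht) (Finset.insert_nonempty a t)
        rw [Finset.prod_insert (hat t ht), huv, hu0]
        have : r a * (0 + v * r a) = v * r a ^ 2 := by ring
        rw [this]
        exact F.mul_mem hv hra2
      apply hra
      have h7 : r a = ((∏ i ∈ t, r i) ^ 2 - u ^ 2 - v ^ 2 * r a ^ 2) / (2 * u * v) := by
        rw [huv]; field_simp; ring
      rw [h7]
      refine F.div_mem (F.sub_mem (F.sub_mem h6 (F.pow_mem hu 2)) (F.mul_mem (F.pow_mem hv 2) hra2))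
        (F.mul_mem (F.mul_mem ?_ hu) hv)
      exact ofNat_mem F 2
    · intro t ht
      exact ⟨C t, hC t (ht.trans (Finset.subset_insert a s)), C (insert a t),
        hC (insert a t) (Finset.insert_subset_insert a ht), rfl⟩
    · rw [Finset.sum_powerset_insert ha] at h
      rw [← h, ← Finset.sum_add_distrib]
      refine Finset.sum_congr rfl fun t ht => ?_
      rw [Finset.prod_insert (hat t (Finset.mem_powerset.mp ht))]
      ring

/-! ### Arithmetic of the cubic field -/

open Polynomial in
lemma trib_linearIndep {u v w : ℚ} (h : (u : ℝ) + v * tribRoot + w * tribRoot ^ 2 = 0) :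
    u = 0 ∧ v = 0 ∧ w = 0 := by
  let f : ℚ[X] := X ^ 3 - X ^ 2 - X - 1
  have hdeg : f.natDegree = 3 := by simp only [f]; compute_degree!
  have hmon : f.Monic := by simp only [f]; monicity!
  have hnoroot : ∀ x : ℚ, x ^ 3 - x ^ 2 - x - 1 ≠ 0 := by
    intro x hx
    have hd : (x.den : ℚ) ≠ 0 := by exact_mod_cast x.den_ne_zero
    have h1 : (x.num : ℚ) ^ 3 - x.num ^ 2 * x.den - x.num * x.den ^ 2 - x.den ^ 3 = 0 := by
      have hx2 : x = x.num / x.den := (Rat.num_div_den x).symm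
      rw [hx2] at hx
      field_simp at hx
      linarith
    have h2 : x.num ^ 3 - x.num ^ 2 * (x.den : ℤ) - x.num * (x.den : ℤ) ^ 2 - (x.den : ℤ) ^ 3 = 0 := by
      exact_mod_cast h1
    have h3 := congrArg (Int.cast : ℤ → ZMod 3) h2
    push_cast at h3
    have key : ∀ p q : ZMod 3, p ^ 3 - p ^ 2 * q - p * q ^ 2 - q ^ 3 = 0 → p = 0 ∧ q = 0 := by decide
    obtain ⟨hp, hq⟩ := key _ _ h3
    rw [ZMod.intCast_zmod_eq_zero_iff_dvd] at hp
    rw [ZMod.natCast_eq_zero_iff] at hq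
    have hcop := x.reduced
    have := Nat.dvd_gcd (Int.natCast_dvd.mp hp) hq
    rw [hcop] at this
    norm_num at this
  have hirr : Irreducible f := by
    refine irreducible_of_degree_le_three_of_not_isRoot (by rw [hdeg]; decide) ?_
    intro x hx
    apply hnoroot x
    simpa [f] using hx
  have hroot : aeval tribRoot f = 0 := by
    simp [f]; linarith [tribRoot_cube]
  have hmin : f = minpoly ℚ tribRoot := minpoly.eq_of_irreducible_of_monic hirr hroot hmon
  let p : ℚ[X] := C u + C v * X + C w * X ^ 2
  have hp : aeval tribRoot p = 0 := by
    simp [p]; linarith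
  have hp0 : p = 0 := by
    by_contra hne
    have h2 := minpoly.degree_le_of_ne_zero ℚ tribRoot hne hp
    rw [← hmin] at h2
    have h3 := natDegree_le_natDegree h2
    have h4 : p.natDegree ≤ 2 := by simp only [p]; compute_degree
    omega
  refine ⟨?_, ?_, ?_⟩
  · have := congrArg (fun q => coeff q 0) hp0
    simpa [p, coeff_X, coeff_C] using this
  · have := congrArg (fun q => coeff q 1) hp0
    simpa [p, coeff_X, coeff_C] using this
  · have := congrArg (fun q => coeff q 2) hp0
    simpa [p, coeff_X, coeff_C] using this

/-- The norm form of `u + vα + wα²`. -/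
def nrm (u v w : ℚ) : ℚ :=
  u * ((u + w) * (u + v + 2 * w) - (v + w) * (v + 2 * w)) -
    v * (w * (u + v + 2 * w) - (v + w) * (v + w)) + w * (w * (v + 2 * w) - (u + w) * (v + w))

lemma nrm_mul (u v w u' v' w' : ℚ) :
    nrm (u * u' + v * w' + w * v' + w * w') (u * v' + v * u' + v * w' + w * v' + 2 * (w * w'))
      (u * w' + v * v' + w * u' + v * w' + w * v' + 2 * (w * w')) = nrm u v w * nrm u' v' w' := by
  unfold nrm; ring

/-- The second elementary symmetric function of the conjugates of `u + vα + wα²`. -/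
def esym (u v w : ℚ) : ℚ :=
  u * (u + w) - v * w + (u * (u + v + 2 * w) - w * (v + w)) +
    ((u + w) * (u + v + 2 * w) - (v + w) * (v + 2 * w))

lemma trib_coord_mul (u v w u' v' w' : ℝ) :
    (u + v * tribRoot + w * tribRoot ^ 2) * (u' + v' * tribRoot + w' * tribRoot ^ 2) =
      (u * u' + v * w' + w * v' + w * w') +
      (u * v' + v * u' + v * w' + w * v' + 2 * (w * w')) * tribRoot +
      (u * w' + v * v' + w * u' + v * w' + w * v' + 2 * (w * w')) * tribRoot ^ 2 := by
  linear_combination ((v * w' + w * v') + w * w' * (tribRoot + 1)) * tribRoot_cube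

/-- `α` is not a square in `ℚ(α)`: the hypotheses say that `(u + vα + wα²)² = α`, and the trace `a`
of such a square root would satisfy `a⁴ - 2a² ∓ 8a + 5 = 0`, which has no rational solution, by a
computation modulo `16`. -/
lemma trib_not_square (u v w : ℚ)
    (h0 : u * u + v * w + w * v + w * w = 0)
    (h1 : u * v + v * u + v * w + w * v + 2 * (w * w) = 1)
    (h2 : u * w + v * v + w * u + v * w + w * v + 2 * (w * w) = 0) : False := by
  have hN := nrm_mul u v w u v w
  rw [h0, h1, h2] at hN
  have hN1 : nrm 0 1 0 = 1 := by norm_num [nrm]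
  rw [hN1] at hN
  set a := 3 * u + v + 3 * w with ha
  have hb : a ^ 2 - 2 * esym u v w = 1 := by
    have : a ^ 2 - 2 * esym u v w = 3 * (u * u + v * w + w * v + w * w) +
      (u * v + v * u + v * w + w * v + 2 * (w * w)) +
      3 * (u * w + v * v + w * u + v * w + w * v + 2 * (w * w)) := by
      rw [ha]; unfold esym; ring
    rw [this, h0, h1, h2]; norm_num
  have he : esym u v w ^ 2 - 2 * a * nrm u v w = -1 := by
    have : esym u v w ^ 2 - 2 * a * nrm u v w = esym (u * u + v * w + w * v + w * w)
      (u * v + v * u + v * w + w * v + 2 * (w * w))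
      (u * w + v * v + w * u + v * w + w * v + 2 * (w * w)) := by
      rw [ha]; unfold esym nrm; ring
    rw [this, h0, h1, h2]; norm_num [esym]
  have hN' : nrm u v w = 1 ∨ nrm u v w = -1 := by
    have : (nrm u v w - 1) * (nrm u v w + 1) = 0 := by linarith
    rcases mul_eq_zero.mp this with h | h
    · left; linarith
    · right; linarith
  obtain ⟨s, hs, hNs⟩ : ∃ s : ℤ, (s = 1 ∨ s = -1) ∧ nrm u v w = s := by
    rcases hN' with h | h
    · exact ⟨1, Or.inl rfl, by simp [h]⟩
    · exact ⟨-1, Or.inr rfl, by simp [h]⟩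
  rw [hNs] at he
  have hq : a ^ 4 - 2 * a ^ 2 - 8 * a * s + 5 = 0 := by
    have : esym u v w = (a ^ 2 - 1) / 2 := by linarith
    rw [this] at he
    linarith
  clear_value a
  have hd : (a.den : ℚ) ≠ 0 := by exact_mod_cast a.den_ne_zero
  have h3 : (a.num : ℚ) ^ 4 - 2 * a.num ^ 2 * a.den ^ 2 - 8 * a.num * a.den ^ 3 * s +
      5 * a.den ^ 4 = 0 := by
    have hx2 : a = a.num / a.den := (Rat.num_div_den a).symm
    rw [hx2] at hq
    field_simp at hq
    linarith
  have h4 : a.num ^ 4 - 2 * a.num ^ 2 * (a.den : ℤ) ^ 2 - 8 * a.num * (a.den : ℤ) ^ 3 * s +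
      5 * (a.den : ℤ) ^ 4 = 0 := by
    exact_mod_cast h3
  have h5 := congrArg (Int.cast : ℤ → ZMod 16) h4
  push_cast at h5
  have key1 : ∀ p q : ZMod 16, p ^ 4 - 2 * p ^ 2 * q ^ 2 - 8 * p * q ^ 3 * 1 + 5 * q ^ 4 = 0 →
      8 * p = 0 ∧ 8 * q = 0 := by decide
  have key2 : ∀ p q : ZMod 16, p ^ 4 - 2 * p ^ 2 * q ^ 2 - 8 * p * q ^ 3 * (-1) + 5 * q ^ 4 = 0 →
      8 * p = 0 ∧ 8 * q = 0 := by decide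
  have hpq : (8 : ZMod 16) * (a.num : ZMod 16) = 0 ∧ (8 : ZMod 16) * (a.den : ZMod 16) = 0 := by
    rcases hs with rfl | rfl
    · exact key1 _ _ (by simpa using h5)
    · exact key2 _ _ (by simpa using h5)
  obtain ⟨hp, hq⟩ := hpq
  have hp' : ((8 * a.num : ℤ) : ZMod 16) = 0 := by push_cast; exact hp
  have hq' : ((8 * a.den : ℕ) : ZMod 16) = 0 := by push_cast; exact hq
  rw [ZMod.intCast_zmod_eq_zero_iff_dvd] at hp'
  rw [ZMod.natCast_eq_zero_iff] at hq'
  have hcop := a.reduced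
  have := Nat.dvd_gcd (show 2 ∣ a.num.natAbs by omega) (show 2 ∣ a.den by omega)
  rw [hcop] at this
  norm_num at this

/-- The cubic field `ℚ(α)`. -/
noncomputable abbrev tribField : IntermediateField ℚ ℝ := IntermediateField.adjoin ℚ {tribRoot}

lemma tribRoot_isIntegral : IsIntegral ℚ tribRoot := by
  refine ⟨Polynomial.X ^ 3 - Polynomial.X ^ 2 - Polynomial.X - 1, by monicity!, ?_⟩
  simp; linarith [tribRoot_cube]

open Polynomial in
lemma mem_tribField {x : ℝ} (hx : x ∈ tribField) :
    ∃ u v w : ℚ, x = u + v * tribRoot + w * tribRoot ^ 2 := by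
  rw [← IntermediateField.mem_toSubalgebra,
    IntermediateField.adjoin_simple_toSubalgebra_of_isAlgebraic tribRoot_isIntegral.isAlgebraic] at hx
  refine Algebra.adjoin_induction (p := fun x _ => ∃ u v w : ℚ,
    x = u + v * tribRoot + w * tribRoot ^ 2) ?_ ?_ ?_ ?_ hx
  · rintro x rfl
    exact ⟨0, 1, 0, by simp⟩
  · intro r
    exact ⟨r, 0, 0, by simp⟩
  · rintro _ _ _ _ ⟨u, v, w, rfl⟩ ⟨u', v', w', rfl⟩
    exact ⟨u + u', v + v', w + w', by push_cast; ring⟩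
  · rintro _ _ _ _ ⟨u, v, w, rfl⟩ ⟨u', v', w', rfl⟩
    refine ⟨u * u' + v * w' + w * v' + w * w', u * v' + v * u' + v * w' + w * v' + 2 * (w * w'),
      u * w' + v * v' + w * u' + v * w' + w * v' + 2 * (w * w'),
      (trib_coord_mul u v w u' v' w').trans ?_⟩
    push_cast
    rfl

lemma gen_prod_coord (t : Finset (Fin 4)) : ∃ u v w : ℚ,
    ∏ i ∈ t, gen tribRoot i = u + v * tribRoot + w * tribRoot ^ 2 ∧
    nrm u v w = ((∏ i ∈ t, (![2, 27, 1, 11] : Fin 4 → ℕ) i : ℕ) : ℚ) := by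
  induction t using Finset.induction_on with
  | empty => exact ⟨1, 0, 0, by simp, by norm_num [nrm]⟩
  | insert a s ha ih =>
    obtain ⟨u, v, w, h1, h2⟩ := ih
    have h3 : ∃ u' v' w' : ℚ, gen tribRoot a = u' + v' * tribRoot + w' * tribRoot ^ 2 ∧
        nrm u' v' w' = ((![2, 27, 1, 11] : Fin 4 → ℕ) a : ℚ) := by
      fin_cases a
      · exact ⟨-1, 1, 0, by simp [gen]; ring, by norm_num [nrm]⟩
      · exact ⟨3, 0, 0, by simp [gen], by norm_num [nrm]⟩
      · exact ⟨0, 1, 0, by simp [gen], by norm_num [nrm]⟩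
      · exact ⟨0, -3, 2, by simp [gen]; ring, by norm_num [nrm]⟩
    obtain ⟨u', v', w', h4, h5⟩ := h3
    refine ⟨_, _, _, ?_, (nrm_mul u' v' w' u v w).trans ?_⟩
    · rw [Finset.prod_insert ha, h1, h4, trib_coord_mul]
      push_cast
      rfl
    · rw [Finset.prod_insert ha, h2, h5]
      push_cast
      rfl

/-- The norms of the generators are `2, 27, 1, 11`, so a nonempty subproduct that is a
square in `ℚ(α)` could only be `α` itself. -/
lemma sqrt_gen_prod_notMem (t : Finset (Fin 4)) (ht : t.Nonempty) :
    ∏ i ∈ t, √(gen tribRoot i) ∉ tribField.toSubfield := by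
  intro h
  obtain ⟨u, v, w, hx⟩ := mem_tribField h
  obtain ⟨u', v', w', hp, hn⟩ := gen_prod_coord t
  have hsq : (∏ i ∈ t, √(gen tribRoot i)) * (∏ i ∈ t, √(gen tribRoot i)) =
      ∏ i ∈ t, gen tribRoot i := by
    rw [← Finset.prod_mul_distrib]
    exact Finset.prod_congr rfl fun i _ => Real.mul_self_sqrt (gen_pos i).le
  rw [hx, hp, trib_coord_mul] at hsq
  have hlin := trib_linearIndep (u := u * u + v * w + w * v + w * w - u')
    (v := u * v + v * u + v * w + w * v + 2 * (w * w) - v')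
    (w := u * w + v * v + w * u + v * w + w * v + 2 * (w * w) - w') (by push_cast; linarith)
  obtain ⟨e0, e1, e2⟩ := hlin
  have hN := nrm_mul u v w u v w
  rw [sub_eq_zero.mp e0, sub_eq_zero.mp e1, sub_eq_zero.mp e2, hn] at hN
  have hsqr : IsSquare (∏ i ∈ t, (![2, 27, 1, 11] : Fin 4 → ℕ) i) := by
    rw [← Rat.isSquare_natCast_iff]
    exact ⟨_, hN⟩
  have key : ∀ t : Finset (Fin 4), IsSquare (∏ i ∈ t, (![2, 27, 1, 11] : Fin 4 → ℕ) i) →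
      t = ∅ ∨ t = {2} := by
    have hle : ∀ t : Finset (Fin 4), ∏ i ∈ t, (![2, 27, 1, 11] : Fin 4 → ℕ) i ≤ 594 := by decide
    have hsm : ∀ t : Finset (Fin 4), ∀ r < 25, ∏ i ∈ t, (![2, 27, 1, 11] : Fin 4 → ℕ) i = r * r →
      t = ∅ ∨ t = {2} := by decide
    rintro t ⟨r, hr⟩
    refine hsm t r ?_ hr
    have := hle t
    nlinarith
  rcases key t hsqr with rfl | rfl
  · exact Finset.not_nonempty_empty ht
  · have hlin := trib_linearIndep (u := u') (v := v' - 1) (w := w') (by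
      simp only [Finset.prod_singleton] at hp
      have : gen tribRoot 2 = tribRoot := by simp [gen]
      rw [this] at hp
      push_cast
      linarith)
    obtain ⟨f0, f1, f2⟩ := hlin
    exact trib_not_square u v w (by linarith) (by linarith) (by linarith)

/-- The square roots of the four generators are independent over `ℚ(α)` in the sense of Kummer
theory. -/
lemma trib_kummer (C : Finset (Fin 4) → ℝ) (hC : ∀ t, C t ∈ tribField)
    (h : ∑ t : Finset (Fin 4), C t * ∏ i ∈ t, √(gen tribRoot i) = 0) (t : Finset (Fin 4)) :
    C t = 0 := by
  have hg : ∀ i, gen tribRoot i ∈ tribField := by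
    intro i
    have hα : tribRoot ∈ tribField := IntermediateField.mem_adjoin_simple_self ℚ tribRoot
    have := map_gen (algebraMap tribField ℝ) ⟨tribRoot, hα⟩ i
    have h2 : algebraMap tribField ℝ ⟨tribRoot, hα⟩ = tribRoot := rfl
    rw [h2] at this
    rw [← this]
    exact (gen (⟨tribRoot, hα⟩ : tribField) i).2
  refine kummer_indep (fun i => √(gen tribRoot i)) Finset.univ tribField.toSubfield ?_ ?_ C
    (fun t _ => hC t) ?_ t (Finset.subset_univ t)
  · intro i _
    change √(gen tribRoot i) ^ 2 ∈ tribField.toSubfield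
    rw [Real.sq_sqrt (gen_pos i).le]
    exact hg i
  · intro t _ ht
    exact sqrt_gen_prod_notMem t ht
  · rw [Finset.powerset_univ]
    exact h

/-! ### Liouville's inequality -/

/-- The field `ℚ(α, √(α-1), √3, √α, √(2α²-3α))`. -/
noncomputable abbrev kumField : IntermediateField tribField ℝ :=
  ((IntermediateField.adjoin tribField {√(gen tribRoot 0)} ⊔
    IntermediateField.adjoin tribField {√(gen tribRoot 1)}) ⊔
    IntermediateField.adjoin tribField {√(gen tribRoot 2)}) ⊔
    IntermediateField.adjoin tribField {√(gen tribRoot 3)}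

lemma gen_mem_tribField (i : Fin 4) : gen tribRoot i ∈ tribField := by
  have hα : tribRoot ∈ tribField := IntermediateField.mem_adjoin_simple_self ℚ tribRoot
  have := map_gen (algebraMap tribField ℝ) ⟨tribRoot, hα⟩ i
  have h2 : algebraMap tribField ℝ ⟨tribRoot, hα⟩ = tribRoot := rfl
  rw [h2] at this
  rw [← this]
  exact (gen (⟨tribRoot, hα⟩ : tribField) i).2

open Polynomial in
lemma sqrt_gen_isIntegral_finrank (i : Fin 4) : IsIntegral tribField √(gen tribRoot i) ∧
    Module.finrank tribField (IntermediateField.adjoin tribField {√(gen tribRoot i)}) ≤ 2 := by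
  let f : tribField[X] := X ^ 2 - C ⟨gen tribRoot i, gen_mem_tribField i⟩
  have hmon : f.Monic := by simp only [f]; monicity!
  have hroot : aeval √(gen tribRoot i) f = 0 := by
    simp only [f, map_sub, map_pow, aeval_X, aeval_C]
    rw [Real.sq_sqrt (gen_pos i).le]
    exact sub_self _
  have hInt : IsIntegral tribField √(gen tribRoot i) := ⟨f, hmon, hroot⟩
  refine ⟨hInt, ?_⟩
  rw [IntermediateField.adjoin.finrank hInt]
  have h1 := natDegree_le_natDegree (minpoly.min tribField _ hmon hroot)
  have h2 : f.natDegree ≤ 2 := by simp only [f]; compute_degree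
  omega

open Polynomial in
lemma tribField_finrank : Module.finrank ℚ tribField ≤ 3 := by
  rw [IntermediateField.adjoin.finrank tribRoot_isIntegral]
  have hroot : aeval tribRoot (X ^ 3 - X ^ 2 - X - 1 : ℚ[X]) = 0 := by
    simp; linarith [tribRoot_cube]
  have hmon : (X ^ 3 - X ^ 2 - X - 1 : ℚ[X]).Monic := by monicity!
  have h1 := natDegree_le_natDegree (minpoly.min ℚ _ hmon hroot)
  have h2 : (X ^ 3 - X ^ 2 - X - 1 : ℚ[X]).natDegree ≤ 3 := by compute_degree
  omega

lemma kumField_finrank : FiniteDimensional tribField kumField ∧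
    Module.finrank tribField kumField ≤ 16 := by
  have hf : ∀ i, FiniteDimensional tribField
      (IntermediateField.adjoin tribField {√(gen tribRoot i)}) := fun i =>
    IntermediateField.adjoin.finiteDimensional (sqrt_gen_isIntegral_finrank i).1
  have h0 := hf 0
  have h1 := hf 1
  have h2 := hf 2
  have h3 := hf 3
  refine ⟨inferInstance, ?_⟩
  have g := fun i => (sqrt_gen_isIntegral_finrank i).2
  refine (IntermediateField.finrank_sup_le _ _).trans ?_
  refine (Nat.mul_le_mul ((IntermediateField.finrank_sup_le _ _).trans
    (Nat.mul_le_mul (IntermediateField.finrank_sup_le _ _) le_rfl)) le_rfl).trans ?_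
  have := Nat.mul_le_mul (Nat.mul_le_mul (Nat.mul_le_mul (g 0) (g 1)) (g 2)) (g 3)
  simpa using this

instance : FiniteDimensional tribField kumField := kumField_finrank.1
instance : FiniteDimensional ℚ tribField :=
  IntermediateField.adjoin.finiteDimensional tribRoot_isIntegral
instance : FiniteDimensional ℚ kumField := FiniteDimensional.trans ℚ tribField kumField

set_option synthInstance.maxHeartbeats 200000 in
lemma kumField_degree : Module.finrank ℚ kumField ≤ 48 := by
  rw [← Module.finrank_mul_finrank ℚ tribField kumField]
  exact Nat.mul_le_mul tribField_finrank kumField_finrank.2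

lemma sqrt_gen_mem (i : Fin 4) : √(gen tribRoot i) ∈ kumField := by
  have h := fun i => IntermediateField.mem_adjoin_simple_self tribField √(gen tribRoot i)
  fin_cases i
  · exact (le_sup_left.trans (le_sup_left.trans le_sup_left) :
      IntermediateField.adjoin tribField {√(gen tribRoot 0)} ≤ kumField) (h 0)
  · exact (le_sup_right.trans (le_sup_left.trans le_sup_left) :
      IntermediateField.adjoin tribField {√(gen tribRoot 1)} ≤ kumField) (h 1)
  · exact (le_sup_right.trans le_sup_left :
      IntermediateField.adjoin tribField {√(gen tribRoot 2)} ≤ kumField) (h 2)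
  · exact (le_sup_right : IntermediateField.adjoin tribField {√(gen tribRoot 3)} ≤ kumField) (h 3)

/-- Liouville's inequality: a nonzero integral combination of monomials in the square roots of the
generators cannot be too small, since its norm is a nonzero integer and the field has degree at
most `48`. -/
lemma liouville (S : Finset (Fin 4 → ℕ)) (c : (Fin 4 → ℕ) → ℤ) (t : ℕ) (X : ℝ) (hX1 : 1 ≤ X)
    (hX : ∀ z : ℂ, z ^ 3 = z ^ 2 + z + 1 →
      ∑ m ∈ S, |(c m : ℝ)| * ∏ i, √‖gen z i‖ ^ (t * m i) ≤ X)
    (hne : ∑ m ∈ S, (c m : ℝ) * ∏ i, √(gen tribRoot i) ^ (t * m i) ≠ 0) :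
    1 ≤ |∑ m ∈ S, (c m : ℝ) * ∏ i, √(gen tribRoot i) ^ (t * m i)| * X ^ 47 := by
  set y : ℝ := ∑ m ∈ S, (c m : ℝ) * ∏ i, √(gen tribRoot i) ^ (t * m i) with hy
  let r : Fin 4 → kumField := fun i => ⟨√(gen tribRoot i), sqrt_gen_mem i⟩
  let A : kumField := algebraMap tribField kumField
    ⟨tribRoot, IntermediateField.mem_adjoin_simple_self ℚ tribRoot⟩
  have hA : A ^ 3 = A ^ 2 + A + 1 := by
    apply (algebraMap kumField ℝ).injective
    simp only [map_pow, map_add, map_one]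
    exact tribRoot_cube
  have hr : ∀ i, r i ^ 2 = gen A i := by
    intro i
    apply (algebraMap kumField ℝ).injective
    rw [map_pow, map_gen]
    exact Real.sq_sqrt (gen_pos i).le
  let Y : kumField := ∑ m ∈ S, (c m : kumField) * ∏ i, r i ^ (t * m i)
  have hYy : algebraMap kumField ℝ Y = y := by
    simp only [Y, map_sum, map_mul, map_prod, map_pow, map_intCast]
    rfl
  have hAint : IsIntegral ℤ A := by
    refine ⟨Polynomial.X ^ 3 - Polynomial.X ^ 2 - Polynomial.X - 1, by monicity!, ?_⟩
    simp [hA]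
    ring
  have hgint : ∀ i, IsIntegral ℤ (gen A i) := by
    have h2 : IsIntegral ℤ (2 : kumField) := by simpa using (isIntegral_algebraMap (R := ℤ) (A := kumField) (x := 2))
    have h3 : IsIntegral ℤ (3 : kumField) := by simpa using (isIntegral_algebraMap (R := ℤ) (A := kumField) (x := 3))
    intro i
    fin_cases i
    · exact hAint.sub isIntegral_one
    · exact h3
    · exact hAint
    · exact (h2.mul (hAint.pow 2)).sub (h3.mul hAint)
  have hrint : ∀ i, IsIntegral ℤ (r i) := by
    intro i
    refine IsIntegral.of_pow (n := 2) (by norm_num) ?_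
    rw [hr]; exact hgint i
  have hYint : IsIntegral ℤ Y := by
    refine IsIntegral.sum _ fun m _ => IsIntegral.mul ?_ (IsIntegral.prod _ fun i _ => (hrint i).pow _)
    simpa using (isIntegral_algebraMap (R := ℤ) (A := kumField) (x := c m))
  have hY0 : Y ≠ 0 := by
    intro h
    rw [h, map_zero] at hYy
    exact hne hYy.symm
  have hNint := Algebra.isIntegral_norm ℚ hYint
  obtain ⟨k, hk⟩ := IsIntegrallyClosed.isIntegral_iff.mp hNint
  have hN0 : Algebra.norm ℚ Y ≠ 0 := Algebra.norm_ne_zero_iff.mpr hY0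
  have hk0 : k ≠ 0 := by
    rintro rfl
    exact hN0 (by rw [← hk]; simp)
  have hprod := Algebra.norm_eq_prod_embeddings ℚ ℂ Y
  have hnorm1 : 1 ≤ ∏ σ : kumField →ₐ[ℚ] ℂ, ‖σ Y‖ := by
    rw [← norm_prod, ← hprod, ← hk]
    have : (1 : ℝ) ≤ |(k : ℝ)| := by exact_mod_cast Int.one_le_abs hk0
    simpa using this
  have hσ : ∀ σ : kumField →ₐ[ℚ] ℂ, ‖σ Y‖ ≤ X := by
    intro σ
    have hz : σ A ^ 3 = σ A ^ 2 + σ A + 1 := by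
      rw [← map_pow, hA]; simp
    refine le_trans ?_ (hX (σ A) hz)
    simp only [Y, map_sum, map_mul, map_prod, map_pow, map_intCast]
    refine (norm_sum_le _ _).trans (Finset.sum_le_sum fun m _ => ?_)
    rw [norm_mul, norm_prod]
    refine mul_le_mul (by simp) (le_of_eq (Finset.prod_congr rfl fun i _ => ?_))
      (Finset.prod_nonneg fun _ _ => norm_nonneg _) (abs_nonneg _)
    rw [norm_pow]
    congr 1
    have h5 := congrArg σ (hr i)
    have h6 : σ (gen A i) = gen (σ A) i := map_gen (σ : kumField →+* ℂ) A i
    rw [h6, map_pow] at h5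
    rw [← h5, norm_pow, Real.sqrt_sq (norm_nonneg _)]
  let σ₀ : kumField →ₐ[ℚ] ℂ :=
    (Complex.ofRealHom.comp (algebraMap kumField ℝ)).toRatAlgHom
  have hσ₀ : ‖σ₀ Y‖ = |y| := by
    change ‖((algebraMap kumField ℝ Y : ℝ) : ℂ)‖ = _
    rw [hYy, Complex.norm_real, Real.norm_eq_abs]
  classical
  rw [← Finset.mul_prod_erase Finset.univ _ (Finset.mem_univ σ₀), hσ₀] at hnorm1
  refine hnorm1.trans (mul_le_mul_of_nonneg_left ?_ (abs_nonneg _))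
  calc ∏ σ ∈ Finset.univ.erase σ₀, ‖σ Y‖ ≤ ∏ σ ∈ Finset.univ.erase σ₀, X :=
        Finset.prod_le_prod (fun _ _ => norm_nonneg _) fun σ _ => hσ σ
    _ = X ^ (Finset.univ.erase σ₀).card := by rw [Finset.prod_const]
    _ ≤ X ^ 47 := by
        refine pow_le_pow_right₀ hX1 ?_
        rw [Finset.card_erase_of_mem (Finset.mem_univ _), Finset.card_univ, AlgHom.card]
        have := kumField_degree
        omega

/-! ### Boxes of exponents and vanishing conditions -/

/-- The box of exponent vectors `m` with `m i ≤ T / boxDen i`. -/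
def box (T : ℕ) : Finset (Fin 4 → ℕ) :=
  Fintype.piFinset fun i => Finset.range (T / boxDen i + 1)

lemma mem_box {T : ℕ} {m : Fin 4 → ℕ} : m ∈ box T ↔ ∀ i, m i ≤ T / boxDen i := by
  simp [box]

lemma boxDen_pos (i : Fin 4) : 0 < boxDen i := by fin_cases i <;> simp [boxDen]

lemma box_le {T : ℕ} {m : Fin 4 → ℕ} (hm : m ∈ box T) (i : Fin 4) :
    (m i : ℝ) ≤ T / boxDen i := by
  have h1 := mem_box.mp hm i
  calc (m i : ℝ) ≤ ((T / boxDen i : ℕ) : ℝ) := by exact_mod_cast h1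
    _ ≤ T / boxDen i := Nat.cast_div_le

lemma box_weighted {T : ℕ} {m : Fin 4 → ℕ} (hm : m ∈ box T) (c : Fin 4 → ℝ) (hc : ∀ i, 0 ≤ c i) :
    ∑ i, c i * m i ≤ (c 0 / 142 + c 1 / 498 + c 2 / 108 + c 3 / 339) * T := by
  have h : ∑ i, c i * m i ≤ ∑ i, c i * (T / boxDen i) :=
    Finset.sum_le_sum fun i _ => mul_le_mul_of_nonneg_left (box_le hm i) (hc i)
  refine h.trans (le_of_eq ?_)
  simp [Fin.sum_univ_four, boxDen]
  ring

/-- The height bound for monomials with exponents in the box, valid at all archimedean places. -/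
lemma box_place {z : ℂ} (hz : z ^ 3 = z ^ 2 + z + 1) {T : ℕ} {m : Fin 4 → ℕ} (hm : m ∈ box T) :
    ∏ i, ‖gen z i‖ ^ m i ≤ Real.exp (0.00851 * T) := by
  have key : ∀ c : Fin 4 → ℝ, (∀ i, 0 ≤ c i) → (∀ i, ‖gen z i‖ ≤ Real.exp (c i)) →
      c 0 / 142 + c 1 / 498 + c 2 / 108 + c 3 / 339 ≤ 0.00851 →
      ∏ i, ‖gen z i‖ ^ m i ≤ Real.exp (0.00851 * T) := by
    intro c hc0 hc hs
    calc ∏ i, ‖gen z i‖ ^ m i ≤ ∏ i, Real.exp (c i) ^ m i :=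
          Finset.prod_le_prod (fun _ _ => by positivity)
            fun i _ => pow_le_pow_left₀ (norm_nonneg _) (hc i) _
      _ = Real.exp (∑ i, c i * m i) := by
          rw [Real.exp_sum]
          refine Finset.prod_congr rfl fun i _ => ?_
          rw [← Real.exp_nat_mul, mul_comm]
      _ ≤ _ := by
          apply Real.exp_le_exp.mpr
          exact (box_weighted hm c hc0).trans (mul_le_mul_of_nonneg_right hs (Nat.cast_nonneg T))
  by_cases h : z = tribRoot
  · refine key _ ?_ (fun i => (place_bound hz i).1 h) ?_
    · intro i; fin_cases i <;> norm_num
    · change (0 : ℝ) / 142 + 1.0987 / 498 + 0.6095 / 108 + 0.2218 / 339 ≤ 0.00851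
      norm_num
  · refine key _ ?_ (fun i => (place_bound hz i).2 h) ?_
    · intro i; fin_cases i <;> norm_num
    · change (0.4347 : ℝ) / 142 + 1.0987 / 498 + 0 / 108 + 1.0886 / 339 ≤ 0.00851
      norm_num

/-- The monomial `∏ a_i ^ m_i` in the generators. -/
noncomputable def theta (m : Fin 4 → ℕ) : ℝ := ∏ i, gen tribRoot i ^ m i

lemma theta_pos (m : Fin 4 → ℕ) : 0 < theta m := Finset.prod_pos fun i _ => pow_pos (gen_pos i) _

lemma theta_eq_exp (m : Fin 4 → ℕ) : theta m = Real.exp (∑ i, lg i * m i) := by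
  rw [Real.exp_sum, theta]
  refine Finset.prod_congr rfl fun i _ => ?_
  rw [mul_comm, Real.exp_nat_mul, lg, Real.exp_log (gen_pos i)]

lemma theta_le {T : ℕ} {m : Fin 4 → ℕ} (hm : m ∈ box T) : theta m ≤ Real.exp (0.00851 * T) := by
  have h := box_place (z := (tribRoot : ℂ)) (by exact_mod_cast tribRoot_cube) hm
  refine le_trans (le_of_eq ?_) h
  refine Finset.prod_congr rfl fun i _ => ?_
  have h2 := map_gen Complex.ofRealHom tribRoot i
  simp only [Complex.ofRealHom_eq_coe] at h2
  rw [← h2, Complex.norm_real, Real.norm_of_nonneg (gen_pos i).le]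

lemma linform_le {T : ℕ} {m : Fin 4 → ℕ} (hm : m ∈ box T) :
    |∑ i, lg i * m i| ≤ 0.00974 * T := by
  have h1 : |∑ i, lg i * m i| ≤ ∑ i, (![0.1753, 1.0987, 0.6095, 0.2218] : Fin 4 → ℝ) i * m i := by
    refine (Finset.abs_sum_le_sum_abs _ _).trans (Finset.sum_le_sum fun i _ => ?_)
    rw [abs_mul, Nat.abs_cast]
    exact mul_le_mul_of_nonneg_right (lg_abs i) (Nat.cast_nonneg _)
  refine h1.trans ((box_weighted hm _ ?_).trans ?_)
  · intro i; fin_cases i <;> norm_num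
  · refine mul_le_mul_of_nonneg_right ?_ (Nat.cast_nonneg T)
    change (0.1753 : ℝ) / 142 + 1.0987 / 498 + 0.6095 / 108 + 0.2218 / 339 ≤ 0.00974
    norm_num

/-- The integers `b₀ m_i - b_i m₀`, `i = 1, 2, 3`. -/
def wv (b : Fin 4 → ℤ) (m : Fin 4 → ℕ) (i : Fin 3) : ℤ := b 0 * m i.succ - b i.succ * m 0

/-- The monomial in the integers `wv b m i` indexed by the multiset `s`. -/
def mon (b : Fin 4 → ℤ) (s : Multiset (Fin 3)) (m : Fin 4 → ℕ) : ℤ := (s.map (wv b m)).prod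

lemma mon_cons (b : Fin 4 → ℤ) (i : Fin 3) (s : Multiset (Fin 3)) (m : Fin 4 → ℕ) :
    mon b (i ::ₘ s) m = wv b m i * mon b s m := by
  simp [mon]

/-- The linear form `∑ bᵢ log aᵢ` in the logarithms of the generators. -/
noncomputable def linForm (b : Fin 4 → ℤ) : ℝ := ∑ i, b i * lg i

/-- The exponent `∑ m_i log a_i`, modified by a multiple of the linear form so that it becomes a
combination of the three integers `wv b m i`. -/
noncomputable def omg (b : Fin 4 → ℤ) (m : Fin 4 → ℕ) : ℝ :=
  ∑ i, lg i * m i - m 0 * linForm b / b 0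

lemma omg_eq (b : Fin 4 → ℤ) (hb : b 0 ≠ 0) (m : Fin 4 → ℕ) :
    omg b m = ∑ i : Fin 3, lg i.succ / b 0 * wv b m i := by
  have hb' : (b 0 : ℝ) ≠ 0 := by exact_mod_cast hb
  simp only [omg, linForm, Fin.sum_univ_succ, Fin.sum_univ_zero, wv]
  push_cast
  field_simp
  simp
  ring

/-- The vanishing conditions of order `T` at the first `R` odd integers: the sums of
`p m * mon b s m * theta m ^ (2 * r + 1)` over the box vanish for all monomials of degree at most
`T` in the `wv b m i` and all `r < R`. -/
def Vanish (b : Fin 4 → ℤ) (p : (Fin 4 → ℕ) → ℤ) (T R : ℕ) : Prop :=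
  ∀ s : Multiset (Fin 3), s.card ≤ T → ∀ r < R,
    ∑ m ∈ box T, (p m : ℝ) * mon b s m * theta m ^ (2 * r + 1) = 0

lemma vanish_omg {b : Fin 4 → ℤ} (hb : b 0 ≠ 0) {p : (Fin 4 → ℕ) → ℤ} {T R : ℕ}
    (h : Vanish b p T R) (k : ℕ) : ∀ s : Multiset (Fin 3), s.card + k ≤ T → ∀ r < R,
    ∑ m ∈ box T, (p m : ℝ) * mon b s m * omg b m ^ k * theta m ^ (2 * r + 1) = 0 := by
  induction k with
  | zero => intro s hs r hr; simpa using h s hs r hr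
  | succ k ih =>
    intro s hs r hr
    have h1 : ∀ i : Fin 3, ∑ m ∈ box T, (p m : ℝ) * mon b (i ::ₘ s) m * omg b m ^ k *
        theta m ^ (2 * r + 1) = 0 := fun i => ih (i ::ₘ s) (by rw [Multiset.card_cons]; omega) r hr
    calc ∑ m ∈ box T, (p m : ℝ) * mon b s m * omg b m ^ (k + 1) * theta m ^ (2 * r + 1)
        = ∑ m ∈ box T, ∑ i : Fin 3, lg i.succ / b 0 * ((p m : ℝ) * mon b (i ::ₘ s) m *
            omg b m ^ k * theta m ^ (2 * r + 1)) := by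
          refine Finset.sum_congr rfl fun m _ => ?_
          rw [pow_succ]
          nth_rewrite 2 [omg_eq b hb m]
          rw [Finset.mul_sum, Finset.mul_sum, Finset.sum_mul]
          refine Finset.sum_congr rfl fun i _ => ?_
          rw [mon_cons]
          push_cast
          ring
      _ = 0 := by
          rw [Finset.sum_comm]
          refine Finset.sum_eq_zero fun i _ => ?_
          rw [← Finset.mul_sum, h1 i, mul_zero]

lemma mon_abs_le {b : Fin 4 → ℤ} {m : Fin 4 → ℕ} {W : ℝ} (hW1 : 1 ≤ W)
    (hW : ∀ i, |(wv b m i : ℝ)| ≤ W) {τ : ℕ} (s : Multiset (Fin 3)) (hs : s.card ≤ τ) :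
    |(mon b s m : ℝ)| ≤ W ^ τ := by
  refine le_trans ?_ (pow_le_pow_right₀ hW1 hs)
  clear hs
  induction s using Multiset.induction_on with
  | empty => simp [mon]
  | cons i s ih =>
    rw [mon_cons, Multiset.card_cons, pow_succ]
    push_cast
    rw [abs_mul, mul_comm]
    exact mul_le_mul ih (hW i) (abs_nonneg _) (by positivity)

/-! ### Extrapolation to half-integers -/

/-- The analytic half of the descent: extrapolation to half-integers, followed by Liouville's
inequality, shows that the auxiliary sums vanish at `r + 1/2` for `r < 2R`. -/
lemma vanish_half {b : Fin 4 → ℤ} (hb : b 0 ≠ 0) {p : (Fin 4 → ℕ) → ℤ} {τ R : ℕ} (hτ : 1 ≤ τ)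
    (hR : 1 ≤ R) (hV : Vanish b p (2 * τ) R) {P W X : ℝ} (hP1 : 1 ≤ P) (hW1 : 1 ≤ W)
    (hP : ∑ m ∈ box (2 * τ), |(p m : ℝ)| ≤ P)
    (hW : ∀ m ∈ box (2 * τ), ∀ i, |(wv b m i : ℝ)| ≤ W)
    (hX : X = P * W ^ τ * Real.exp (0.00851 * (2 * τ : ℕ) * (2 * R)))
    (hΛ : |linForm b| ≤ 1e-5) (hΛ' : 4 * (τ * R) * |linForm b| ≤ 1)
    (hsmall : X ^ 48 * (3 * (0.039 ^ (τ * R) * (Real.exp 1 * R) ^ τ) +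
      (R * (32 * R ^ 4 * 2 ^ R) ^ τ * Real.exp τ + 1) * (τ * R) * |linForm b|) < 1)
    (s : Multiset (Fin 3)) (hs : s.card ≤ τ) (r : ℕ) (hr : r < 2 * R) :
    ∑ m ∈ box (2 * τ), ((p m * mon b s m : ℤ) : ℝ) *
      ∏ i, √(gen tribRoot i) ^ ((2 * r + 1) * m i) = 0 := by
  set Λ := linForm b with hΛdef
  set T : ℕ := 2 * τ with hT
  have hTR : (T : ℝ) = 2 * τ := by rw [hT]; push_cast; ring
  have hτ1 : (1 : ℝ) ≤ τ := by exact_mod_cast hτ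
  have hR1 : (1 : ℝ) ≤ R := by exact_mod_cast hR
  have hb1 : (1 : ℝ) ≤ |(b 0 : ℝ)| := by exact_mod_cast Int.one_le_abs hb
  set Hx := Real.exp (0.00851 * T * (2 * R)) with hHx
  have hHx1 : 1 ≤ Hx := by rw [hHx]; exact Real.one_le_exp (by positivity)
  have hX1 : 1 ≤ X := by
    rw [hX]
    exact one_le_mul_of_one_le_of_one_le (one_le_mul_of_one_le_of_one_le hP1 (one_le_pow₀ hW1)) hHx1
  -- the perturbation `m₀ Λ / b₀`
  have hpert : ∀ m ∈ box T, |m 0 * Λ / b 0| ≤ τ / 71 * |Λ| := by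
    intro m hm
    have h1 := box_le hm 0
    have h2 : (boxDen 0 : ℝ) = 142 := by norm_num [boxDen]
    rw [h2, hTR] at h1
    rw [abs_div, abs_mul, Nat.abs_cast]
    calc (m 0 : ℝ) * |Λ| / |(b 0 : ℝ)| ≤ (m 0 : ℝ) * |Λ| := div_le_self (by positivity) hb1
      _ ≤ τ / 71 * |Λ| := by
        refine mul_le_mul_of_nonneg_right ?_ (abs_nonneg _)
        linarith
  have homg : ∀ m ∈ box T, |omg b m| ≤ 0.00975 * T := by
    intro m hm
    have h1 := linform_le hm
    have h2 := hpert m hm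
    rw [omg]
    refine (abs_sub _ _).trans ?_
    rw [hTR] at h1 ⊢
    nlinarith [abs_nonneg Λ]
  have hmon : ∀ m ∈ box T, |(mon b s m : ℝ)| ≤ W ^ τ := fun m hm => mon_abs_le hW1 (hW m hm) s hs
  -- comparison of `exp (ω z)` with `θ ^ z`
  have hexp : ∀ m ∈ box T, ∀ z : ℝ, 0 ≤ z → z ≤ 2 * R →
      Real.exp ((∑ i, lg i * m i) * z) ≤ Hx ∧ Real.exp (omg b m * z) ≤ 3 * Hx ∧
      |Real.exp (omg b m * z) - Real.exp ((∑ i, lg i * m i) * z)| ≤ Hx * (τ * R * |Λ|) := by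
    intro m hm z hz0 hz
    set L := ∑ i, lg i * m i with hL
    have h1 : Real.exp (L * z) ≤ Hx := by
      have h2 := theta_le hm
      rw [theta_eq_exp, Real.exp_le_exp] at h2
      rw [hHx, Real.exp_le_exp]
      calc L * z ≤ 0.00851 * T * z := mul_le_mul_of_nonneg_right h2 hz0
        _ ≤ _ := mul_le_mul_of_nonneg_left hz (by positivity)
    set v := -(m 0 * Λ / b 0 * z) with hv
    have hvabs : |v| ≤ τ * R * |Λ| / 2 := by
      rw [hv, abs_neg, abs_mul, abs_of_nonneg hz0]
      calc |m 0 * Λ / b 0| * z ≤ τ / 71 * |Λ| * (2 * R) :=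
            mul_le_mul (hpert m hm) hz hz0 (by positivity)
        _ ≤ _ := by
            have : 0 ≤ τ * R * |Λ| := by positivity
            nlinarith
    have hv1 : |v| ≤ 1 := by linarith
    have hsplit : Real.exp (omg b m * z) = Real.exp (L * z) * Real.exp v := by
      rw [← Real.exp_add, omg, ← hΛdef, hv]; congr 1; ring
    have hev := Real.abs_exp_sub_one_le hv1
    refine ⟨h1, ?_, ?_⟩
    · rw [hsplit, mul_comm]
      refine mul_le_mul ?_ h1 (Real.exp_pos _).le (by norm_num)
      have := (abs_le.mp hev).2
      linarith
    · rw [hsplit, ← mul_sub_one, abs_mul, abs_of_pos (Real.exp_pos _)]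
      exact mul_le_mul h1 (hev.trans (by linarith)) (abs_nonneg _) (by positivity)
  have hsumP : ∀ F : (Fin 4 → ℕ) → ℝ, ∀ D : ℝ, 0 ≤ D → (∀ m ∈ box T, |F m| ≤ D) →
      |∑ m ∈ box T, (p m : ℝ) * mon b s m * F m| ≤ P * W ^ τ * D := by
    intro F D hD hF
    calc |∑ m ∈ box T, (p m : ℝ) * mon b s m * F m|
        ≤ ∑ m ∈ box T, |(p m : ℝ)| * (W ^ τ * D) := by
          refine (Finset.abs_sum_le_sum_abs _ _).trans (Finset.sum_le_sum fun m hm => ?_)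
          rw [abs_mul, abs_mul, mul_assoc]
          exact mul_le_mul_of_nonneg_left
            (mul_le_mul (hmon m hm) (hF m hm) (abs_nonneg _) (by positivity)) (abs_nonneg _)
      _ = (∑ m ∈ box T, |(p m : ℝ)|) * (W ^ τ * D) := by rw [Finset.sum_mul]
      _ ≤ P * (W ^ τ * D) := mul_le_mul_of_nonneg_right hP (by positivity)
      _ = _ := by ring
  let g : ℕ → ℝ → ℝ := fun k z => ∑ m ∈ box T, (p m : ℝ) * mon b s m *
    (omg b m ^ k * Real.exp (omg b m * z))
  have hg : ∀ k z, HasDerivAt (g k) (g (k + 1) z) z := by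
    intro k z
    refine HasDerivAt.fun_sum fun m _ => ?_
    have h1 : HasDerivAt (fun z => Real.exp (omg b m * z)) (Real.exp (omg b m * z) * omg b m) z := by
      have := (hasDerivAt_id z).const_mul (omg b m)
      simpa using this.exp
    have h2 := (h1.const_mul (omg b m ^ k)).const_mul ((p m : ℝ) * mon b s m)
    have h3 : (p m : ℝ) * mon b s m * (omg b m ^ (k + 1) * Real.exp (omg b m * z)) =
        (p m : ℝ) * mon b s m * (omg b m ^ k * (Real.exp (omg b m * z) * omg b m)) := by ring
    rw [h3]
    exact h2
  set x : ℝ := ((2 * r + 1 : ℕ) : ℝ) / 2 with hx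
  have hr' : (r : ℝ) + 1 ≤ 2 * R := by exact_mod_cast hr
  have hxr : x = r + 1 / 2 := by rw [hx]; push_cast; ring
  have hx0 : 0 ≤ x := by rw [hxr]; positivity
  have hxR : x ≤ 2 * R := by rw [hxr]; linarith
  have hdist : ∀ i < R, 1 / 2 ≤ |x - (2 * (i : ℝ) + 1)| := by
    intro i _
    have h1 : (1 : ℝ) ≤ |(2 * (r : ℤ) + 1 - 2 * (2 * i + 1) : ℤ)| := by
      have : (2 * (r : ℤ) + 1 - 2 * (2 * i + 1) : ℤ) ≠ 0 := by omega
      exact_mod_cast Int.one_le_abs this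
    have h2 : x - (2 * (i : ℝ) + 1) = ((2 * (r : ℤ) + 1 - 2 * (2 * i + 1) : ℤ) : ℝ) / 2 := by
      rw [hxr]; push_cast; ring
    rw [h2, abs_div, abs_two]
    push_cast at h1 ⊢
    linarith
  have hmain := hermite_odd g hg R τ hR hτ x (P * W ^ τ * ((0.00975 * T) ^ (τ * R) * (3 * Hx)))
    (X * Real.exp τ * (τ * R * |Λ|)) hx0 hxR hdist ?_ ?_
  · -- the value at the half-integer
    set y : ℝ := ∑ m ∈ box T, ((p m * mon b s m : ℤ) : ℝ) *
      ∏ i, √(gen tribRoot i) ^ ((2 * r + 1) * m i) with hy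
    have hyx : y = ∑ m ∈ box T, (p m : ℝ) * mon b s m * Real.exp ((∑ i, lg i * m i) * x) := by
      rw [hy]
      refine Finset.sum_congr rfl fun m _ => ?_
      push_cast
      congr 1
      rw [Finset.sum_mul, Real.exp_sum]
      refine Finset.prod_congr rfl fun i _ => ?_
      have h1 : √(gen tribRoot i) = Real.exp (lg i / 2) := by
        rw [Real.exp_half, lg, Real.exp_log (gen_pos i)]
      rw [h1, ← Real.exp_nat_mul]
      congr 1
      rw [hx]; push_cast; ring
    have hdiff : |y - g 0 x| ≤ X * (τ * R * |Λ|) := by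
      have h1 : y - g 0 x = -∑ m ∈ box T, (p m : ℝ) * mon b s m *
          (Real.exp (omg b m * x) - Real.exp ((∑ i, lg i * m i) * x)) := by
        rw [hyx, ← Finset.sum_neg_distrib]
        simp only [g]
        rw [← Finset.sum_sub_distrib]
        refine Finset.sum_congr rfl fun m _ => ?_
        ring
      rw [h1, abs_neg]
      refine (hsumP _ _ (by positivity) fun m hm => (hexp m hm x hx0 hxR).2.2).trans (le_of_eq ?_)
      rw [hX]; ring
    by_contra hy0
    have hlio := liouville (box T) (fun m => p m * mon b s m) (2 * r + 1) X hX1 ?_ hy0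
    · have hfin : |y| * X ^ 47 < 1 := by
        have hT2 : (0.00975 * (T : ℝ)) ^ (τ * R) * (2 / τ) ^ (τ * R) = 0.039 ^ (τ * R) := by
          rw [← mul_pow, hTR]
          congr 1
          field_simp
          norm_num
        have h2 : |y| ≤ X * (3 * (0.039 ^ (τ * R) * (Real.exp 1 * R) ^ τ) +
            (R * (32 * R ^ 4 * 2 ^ R) ^ τ * Real.exp τ + 1) * (τ * R) * |Λ|) := by
          have h3 : |y| ≤ |y - g 0 x| + |g 0 x| := by
            have := abs_add_le (y - g 0 x) (g 0 x)
            simpa using this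
          refine h3.trans ((add_le_add hdiff hmain).trans (le_of_eq ?_))
          rw [← hT2, hX]
          ring
        calc |y| * X ^ 47 ≤ X * (3 * (0.039 ^ (τ * R) * (Real.exp 1 * R) ^ τ) +
            (R * (32 * R ^ 4 * 2 ^ R) ^ τ * Real.exp τ + 1) * (τ * R) * |Λ|) * X ^ 47 :=
              mul_le_mul_of_nonneg_right h2 (by positivity)
          _ = X ^ 48 * (3 * (0.039 ^ (τ * R) * (Real.exp 1 * R) ^ τ) +
            (R * (32 * R ^ 4 * 2 ^ R) ^ τ * Real.exp τ + 1) * (τ * R) * |Λ|) := by ring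
          _ < 1 := hsmall
      exact absurd hlio (not_le.mpr hfin)
    · intro z hz
      have hprod : ∀ m ∈ box T, ∏ i, √‖gen z i‖ ^ ((2 * r + 1) * m i) ≤ Hx := by
        intro m hm
        have h4 := box_place hz hm
        have h5 : ∏ i, √‖gen z i‖ ^ ((2 * r + 1) * m i) = √(∏ i, ‖gen z i‖ ^ m i) ^ (2 * r + 1) := by
          rw [Real.sqrt_prod _ (fun i _ => by positivity), ← Finset.prod_pow]
          refine Finset.prod_congr rfl fun i _ => ?_
          rw [Real.sqrt_eq_rpow, Real.sqrt_eq_rpow, ← Real.rpow_natCast (‖gen z i‖) (m i),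
            ← Real.rpow_mul (norm_nonneg _), mul_comm (m i : ℝ), Real.rpow_mul (norm_nonneg _),
            Real.rpow_natCast, ← pow_mul, mul_comm]
        rw [h5, hHx]
        calc √(∏ i, ‖gen z i‖ ^ m i) ^ (2 * r + 1) ≤ √(Real.exp (0.00851 * T)) ^ (2 * r + 1) :=
              pow_le_pow_left₀ (Real.sqrt_nonneg _) (Real.sqrt_le_sqrt h4) _
          _ = Real.exp (0.00851 * T * x) := by
              rw [← Real.exp_half, ← Real.exp_nat_mul]
              congr 1
              rw [hx]; ring
          _ ≤ _ := Real.exp_le_exp.mpr (mul_le_mul_of_nonneg_left hxR (by positivity))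
      calc ∑ m ∈ box T, |((p m * mon b s m : ℤ) : ℝ)| * ∏ i, √‖gen z i‖ ^ ((2 * r + 1) * m i)
          ≤ ∑ m ∈ box T, |(p m : ℝ)| * (W ^ τ * Hx) := by
            refine Finset.sum_le_sum fun m hm => ?_
            push_cast
            rw [abs_mul, mul_assoc]
            refine mul_le_mul_of_nonneg_left ?_ (abs_nonneg _)
            exact mul_le_mul (hmon m hm) (hprod m hm) (Finset.prod_nonneg fun _ _ => by positivity)
              (by positivity)
        _ = (∑ m ∈ box T, |(p m : ℝ)|) * (W ^ τ * Hx) := by rw [Finset.sum_mul]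
        _ ≤ P * (W ^ τ * Hx) := mul_le_mul_of_nonneg_right hP (by positivity)
        _ = X := by rw [hX]; ring
  · intro z hz0 hz
    refine hsumP _ _ (by positivity) fun m hm => ?_
    rw [abs_mul, abs_pow, abs_of_pos (Real.exp_pos _)]
    exact mul_le_mul (pow_le_pow_left₀ (abs_nonneg _) (homg m hm) _) (hexp m hm z hz0 hz).2.1
      (Real.exp_pos _).le (by positivity)
  · intro i hi
    have hi' : (i : ℝ) + 1 ≤ R := by exact_mod_cast hi
    have hz0 : (0 : ℝ) ≤ 2 * (i : ℝ) + 1 := by positivity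
    have hz1 : 2 * (i : ℝ) + 1 ≤ 2 * R := by linarith
    have hk : ∀ k ∈ Finset.range τ, |g k (2 * (i : ℝ) + 1) / k.factorial| ≤
        X * (τ * R * |Λ|) * ((τ : ℝ) ^ k / k.factorial) := by
      intro k hk
      have hkτ := Finset.mem_range.mp hk
      have h0 := vanish_omg hb hV k s (by omega) i hi
      have h1 : g k (2 * (i : ℝ) + 1) = ∑ m ∈ box T, (p m : ℝ) * mon b s m * (omg b m ^ k *
          (Real.exp (omg b m * (2 * i + 1)) - Real.exp ((∑ j, lg j * m j) * (2 * i + 1)))) := by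
        rw [← sub_zero (g k _), ← h0]
        simp only [g]
        rw [← Finset.sum_sub_distrib]
        refine Finset.sum_congr rfl fun m _ => ?_
        have : theta m ^ (2 * i + 1) = Real.exp ((∑ j, lg j * m j) * (2 * i + 1)) := by
          rw [theta_eq_exp, ← Real.exp_nat_mul]
          congr 1
          push_cast
          ring
        rw [this]
        ring
      have h2 : |g k (2 * (i : ℝ) + 1)| ≤ P * W ^ τ * ((τ : ℝ) ^ k * (Hx * (τ * R * |Λ|))) := by
        rw [h1]
        refine hsumP _ _ (by positivity) fun m hm => ?_
        rw [abs_mul, abs_pow]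
        refine mul_le_mul (pow_le_pow_left₀ (abs_nonneg _) ?_ _) (hexp m hm _ hz0 hz1).2.2
          (abs_nonneg _) (by positivity)
        refine (homg m hm).trans ?_
        rw [hTR]; linarith
      rw [abs_div, Nat.abs_cast]
      calc |g k (2 * (i : ℝ) + 1)| / k.factorial
          ≤ P * W ^ τ * ((τ : ℝ) ^ k * (Hx * (τ * R * |Λ|))) / k.factorial :=
            div_le_div_of_nonneg_right h2 (by positivity)
        _ = _ := by rw [hX]; ring
    refine (Finset.sum_le_sum hk).trans ?_
    rw [← Finset.mul_sum]
    have h3 := Real.sum_le_exp_of_nonneg (x := (τ : ℝ)) (by positivity) τ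
    calc X * (τ * R * |Λ|) * ∑ k ∈ Finset.range τ, (τ : ℝ) ^ k / k.factorial
        ≤ X * (τ * R * |Λ|) * Real.exp τ := mul_le_mul_of_nonneg_left h3 (by positivity)
      _ = _ := by ring

/-! ### The descent step -/

/-- The exponent vector `ε + 2μ`, where `ε` is the indicator vector of a subset of the indices. -/
def dbl (ε : Finset (Fin 4)) (μ : Fin 4 → ℕ) : Fin 4 → ℕ :=
  fun i => (if i ∈ ε then 1 else 0) + 2 * μ i

lemma dbl_div (ε : Finset (Fin 4)) (μ : Fin 4 → ℕ) (i : Fin 4) : dbl ε μ i / 2 = μ i := by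
  unfold dbl; split_ifs <;> omega

lemma dbl_odd (ε : Finset (Fin 4)) (μ : Fin 4 → ℕ) :
    (Finset.univ.filter fun i => dbl ε μ i % 2 = 1) = ε := by
  ext i
  rw [Finset.mem_filter]
  simp only [Finset.mem_univ, true_and]
  unfold dbl
  by_cases h : i ∈ ε <;> simp [h]

lemma dbl_surj (m : Fin 4 → ℕ) :
    dbl (Finset.univ.filter fun i => m i % 2 = 1) (fun i => m i / 2) = m := by
  funext i
  simp only [dbl, Finset.mem_filter, Finset.mem_univ, true_and]
  split_ifs <;> omega

lemma box_half {τ : ℕ} {m : Fin 4 → ℕ} (hm : m ∈ box (2 * τ)) : (fun i => m i / 2) ∈ box τ := by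
  rw [mem_box] at hm ⊢
  intro i
  have h1 := Nat.div_le_div_right (c := 2) (hm i)
  rw [Nat.div_div_eq_div_mul, mul_comm (boxDen i), Nat.mul_div_mul_left _ _ (by norm_num)] at h1
  exact h1

lemma sum_box_parity {τ : ℕ} (F : (Fin 4 → ℕ) → ℝ) (hF : ∀ m ∉ box (2 * τ), F m = 0) :
    ∑ m ∈ box (2 * τ), F m = ∑ ε : Finset (Fin 4), ∑ μ ∈ box τ, F (dbl ε μ) := by
  rw [← Finset.sum_product']
  refine Finset.sum_of_injOn
    (fun m => (Finset.univ.filter fun i => m i % 2 = 1, fun i => m i / 2)) ?_ ?_ ?_ ?_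
  · intro m _ m' _ h
    rw [← dbl_surj m, ← dbl_surj m']
    simp only [Prod.mk.injEq] at h
    rw [h.1, h.2]
  · intro m hm
    simp only [Finset.coe_product, Set.mem_prod, Finset.mem_coe]
    exact ⟨Finset.mem_univ _, box_half hm⟩
  · rintro ⟨ε, μ⟩ _ h
    apply hF
    intro hm
    apply h
    refine ⟨dbl ε μ, hm, ?_⟩
    simp only [Prod.mk.injEq]
    exact ⟨dbl_odd ε μ, funext (dbl_div ε μ)⟩
  · intro m _
    simp only
    rw [dbl_surj]

lemma wv_dbl (b : Fin 4 → ℤ) (ε : Finset (Fin 4)) (μ : Fin 4 → ℕ) (i : Fin 3) :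
    wv b (dbl ε μ) i = wv b (dbl ε 0) i + 2 * wv b μ i := by
  unfold wv dbl
  simp only [Pi.zero_apply]
  push_cast
  ring

lemma prod_sqrt_dbl (ε : Finset (Fin 4)) (μ : Fin 4 → ℕ) (r : ℕ) :
    ∏ i, √(gen tribRoot i) ^ ((2 * r + 1) * dbl ε μ i) =
      (∏ i ∈ ε, gen tribRoot i ^ r) * theta μ ^ (2 * r + 1) * ∏ i ∈ ε, √(gen tribRoot i) := by
  have h1 : ∀ i, √(gen tribRoot i) ^ ((2 * r + 1) * dbl ε μ i) =
      (if i ∈ ε then gen tribRoot i ^ r * √(gen tribRoot i) else 1) *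
        (gen tribRoot i ^ μ i) ^ (2 * r + 1) := by
    intro i
    have h2 : √(gen tribRoot i) ^ 2 = gen tribRoot i := Real.sq_sqrt (gen_pos i).le
    have h3 : √(gen tribRoot i) ^ ((2 * r + 1) * (2 * μ i)) =
        (gen tribRoot i ^ μ i) ^ (2 * r + 1) := by
      rw [← h2, ← pow_mul, ← pow_mul, h2]; congr 1; ring
    unfold dbl
    rw [mul_add, pow_add, h3]
    congr 1
    split_ifs
    · rw [mul_one, pow_succ, pow_mul, h2]
    · simp
  rw [Finset.prod_congr rfl fun i _ => h1 i, Finset.prod_mul_distrib, Finset.prod_pow, theta,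
    Finset.prod_ite_mem, Finset.univ_inter, Finset.prod_mul_distrib]
  ring

/-- The inductive state of the descent: a nonzero integral coefficient vector supported in the box,
with controlled `ℓ¹` norm and satisfying the vanishing conditions. -/
def Good (b : Fin 4 → ℤ) (T R : ℕ) (P : ℝ) : Prop :=
  ∃ p : (Fin 4 → ℕ) → ℤ, Vanish b p T R ∧ (∀ m ∉ box T, p m = 0) ∧ (∃ m, p m ≠ 0) ∧
    ∑ m ∈ box T, |(p m : ℝ)| ≤ P

/-- One step of the descent: the order of vanishing and the box are halved while the number of nodes
doubles. -/
lemma descent_step {b : Fin 4 → ℤ} (hb : b 0 ≠ 0) {τ R : ℕ} (hτ : 1 ≤ τ)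
    (hR : 1 ≤ R) {P W X : ℝ} (hP1 : 1 ≤ P) (hW1 : 1 ≤ W) (hG : Good b (2 * τ) R P)
    (hW : ∀ m ∈ box (2 * τ), ∀ i, |(wv b m i : ℝ)| ≤ W)
    (hX : X = P * W ^ τ * Real.exp (0.00851 * (2 * τ : ℕ) * (2 * R)))
    (hΛ : |linForm b| ≤ 1e-5) (hΛ' : 4 * (τ * R) * |linForm b| ≤ 1)
    (hsmall : X ^ 48 * (3 * (0.039 ^ (τ * R) * (Real.exp 1 * R) ^ τ) +
      (R * (32 * R ^ 4 * 2 ^ R) ^ τ * Real.exp τ + 1) * (τ * R) * |linForm b|) < 1) :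
    Good b τ (2 * R) P := by
  obtain ⟨p, hV, hsupp, ⟨m₀, hm₀⟩, hP⟩ := hG
  have hhalf := vanish_half hb hτ hR hV hP1 hW1 hP hW hX hΛ hΛ' hsmall
  -- separation of the parity classes `m = ε + 2μ` by Kummer independence
  have hsep : ∀ ε : Finset (Fin 4), ∀ s : Multiset (Fin 3), s.card ≤ τ → ∀ r < 2 * R,
      ∑ μ ∈ box τ, (p (dbl ε μ) : ℝ) * mon b s (dbl ε μ) * theta μ ^ (2 * r + 1) = 0 := by
    intro ε s hs r hr
    have h1 := hhalf s hs r hr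
    rw [sum_box_parity _ (fun m hm => by rw [hsupp m hm]; simp)] at h1
    let C : Finset (Fin 4) → ℝ := fun ε => (∏ i ∈ ε, gen tribRoot i ^ r) *
      ∑ μ ∈ box τ, (p (dbl ε μ) : ℝ) * mon b s (dbl ε μ) * theta μ ^ (2 * r + 1)
    have hC : ∀ ε, C ε ∈ tribField := by
      intro ε
      refine mul_mem (prod_mem fun i _ => pow_mem (gen_mem_tribField i) r) (sum_mem fun μ _ => ?_)
      refine mul_mem (mul_mem (intCast_mem _ _) (intCast_mem _ _)) (pow_mem ?_ _)
      exact prod_mem fun i _ => pow_mem (gen_mem_tribField i) _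
    have h2 : ∑ ε : Finset (Fin 4), C ε * ∏ i ∈ ε, √(gen tribRoot i) = 0 := by
      rw [← h1]
      refine Finset.sum_congr rfl fun ε _ => ?_
      simp only [C]
      rw [Finset.mul_sum, Finset.sum_mul]
      refine Finset.sum_congr rfl fun μ _ => ?_
      rw [prod_sqrt_dbl]
      push_cast
      ring
    have h3 := trib_kummer C hC h2 ε
    rcases mul_eq_zero.mp h3 with h4 | h4
    · exact absurd h4 (Finset.prod_pos fun i _ => pow_pos (gen_pos i) r).ne'
    · exact h4
  set ε : Finset (Fin 4) := Finset.univ.filter fun i => m₀ i % 2 = 1 with hε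
  refine ⟨fun μ => p (dbl ε μ), ?_, ?_, ⟨fun i => m₀ i / 2, ?_⟩, ?_⟩
  · -- change of the weights `wv b (ε + 2μ)` into `wv b μ`
    have hmix : ∀ s s' : Multiset (Fin 3), s.card + s'.card ≤ τ → ∀ r < 2 * R,
        ∑ μ ∈ box τ, (p (dbl ε μ) : ℝ) * mon b s μ * mon b s' (dbl ε μ) *
          theta μ ^ (2 * r + 1) = 0 := by
      intro s
      induction s using Multiset.induction_on with
      | empty =>
        intro s' hs' r hr
        simpa [mon] using hsep ε s' (by simpa using hs') r hr
      | cons i s ih =>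
        intro s' hs' r hr
        rw [Multiset.card_cons] at hs'
        have h1 := ih (i ::ₘ s') (by rw [Multiset.card_cons]; omega) r hr
        have h2 := ih s' (by omega) r hr
        have h3 : ∑ μ ∈ box τ, (p (dbl ε μ) : ℝ) * mon b (i ::ₘ s) μ * mon b s' (dbl ε μ) *
            theta μ ^ (2 * r + 1) =
            1 / 2 * ∑ μ ∈ box τ, (p (dbl ε μ) : ℝ) * mon b s μ * mon b (i ::ₘ s') (dbl ε μ) *
              theta μ ^ (2 * r + 1) - wv b (dbl ε 0) i / 2 *
            ∑ μ ∈ box τ, (p (dbl ε μ) : ℝ) * mon b s μ * mon b s' (dbl ε μ) *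
              theta μ ^ (2 * r + 1) := by
          rw [Finset.mul_sum, Finset.mul_sum, ← Finset.sum_sub_distrib]
          refine Finset.sum_congr rfl fun μ _ => ?_
          rw [mon_cons, mon_cons, wv_dbl]
          push_cast
          ring
        rw [h3, h1, h2]
        ring
    intro s hs r hr
    simpa [mon] using hmix s 0 (by simpa using hs) r hr
  · intro μ hμ
    apply hsupp
    intro h
    apply hμ
    have := box_half h
    rwa [funext (dbl_div ε μ)] at this
  · change p (dbl ε fun i => m₀ i / 2) ≠ 0
    rw [hε, dbl_surj]
    exact hm₀
  · refine le_trans ?_ hP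
    rw [sum_box_parity (fun m => |(p m : ℝ)|) (fun m hm => by rw [hsupp m hm]; simp)]
    exact Finset.single_le_sum (f := fun ε => ∑ μ ∈ box τ, |(p (dbl ε μ) : ℝ)|)
      (fun ε _ => Finset.sum_nonneg fun _ _ => abs_nonneg _) (Finset.mem_univ ε)

/-- The descent cannot reach `T = 1`, where the box is reduced to the origin. -/
lemma not_good_one {b : Fin 4 → ℤ} {R : ℕ} (hR : 1 ≤ R) {P : ℝ} : ¬Good b 1 R P := by
  rintro ⟨p, hV, hsupp, ⟨m, hm⟩, -⟩
  have hbox : box 1 = {0} := by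
    ext m
    rw [mem_box, Finset.mem_singleton, funext_iff]
    refine forall_congr' fun i => ?_
    have : 1 / boxDen i = 0 := by fin_cases i <;> simp [boxDen]
    rw [this, Nat.le_zero]
    rfl
  have h := hV 0 (by simp) 0 (by omega)
  rw [hbox, Finset.sum_singleton] at h
  have hθ := theta_pos 0
  have hp0 : p 0 = 0 := by
    simpa [mon, hθ.ne'] using h
  by_cases h0 : m = 0
  · exact hm (h0 ▸ hp0)
  · exact hm (hsupp m (by rw [hbox]; simpa using h0))

/-! ### The auxiliary coefficients from Siegel's lemma -/

/-- The function `g` on the roots of `X³ - X² - X - 1` has integral coordinates in `1, z, z²`. -/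
def HasCoord (g : ℂ → ℂ) : Prop :=
  ∃ c : Fin 3 → ℤ, ∀ z : ℂ, z ^ 3 = z ^ 2 + z + 1 → g z = c 0 + c 1 * z + c 2 * z ^ 2

lemma HasCoord.mul {g h : ℂ → ℂ} (hg : HasCoord g) (hh : HasCoord h) :
    HasCoord fun z => g z * h z := by
  obtain ⟨c, hc⟩ := hg
  obtain ⟨d, hd⟩ := hh
  refine ⟨![c 0 * d 0 + (c 1 * d 2 + c 2 * d 1) + c 2 * d 2,
    c 0 * d 1 + c 1 * d 0 + (c 1 * d 2 + c 2 * d 1) + 2 * (c 2 * d 2),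
    c 0 * d 2 + c 1 * d 1 + c 2 * d 0 + (c 1 * d 2 + c 2 * d 1) + 2 * (c 2 * d 2)],
    fun z hz => ?_⟩
  simp only [hc z hz, hd z hz, Matrix.cons_val_zero, Matrix.cons_val_one, Matrix.cons_val]
  push_cast
  linear_combination ((c 1 : ℂ) * d 2 + c 2 * d 1 + c 2 * d 2 * (z + 1)) * hz

lemma HasCoord.one : HasCoord fun _ => 1 := ⟨![1, 0, 0], fun z _ => by simp⟩

lemma HasCoord.pow {g : ℂ → ℂ} (hg : HasCoord g) (k : ℕ) : HasCoord fun z => g z ^ k := by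
  induction k with
  | zero => simpa using HasCoord.one
  | succ k ih => simpa only [pow_succ] using ih.mul hg

lemma hasCoord_gen (i : Fin 4) : HasCoord fun z => gen z i := by
  fin_cases i
  · exact ⟨![-1, 1, 0], fun z _ => by simp [gen]; ring⟩
  · exact ⟨![3, 0, 0], fun z _ => by simp [gen]⟩
  · exact ⟨![0, 1, 0], fun z _ => by simp [gen]⟩
  · exact ⟨![0, -3, 2], fun z _ => by simp [gen]; ring⟩

lemma hasCoord_theta (m : Fin 4 → ℕ) (k : ℕ) :
    HasCoord fun z => (∏ i, gen z i ^ m i) ^ k := by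
  refine HasCoord.pow ?_ k
  simp only [Fin.prod_univ_four]
  exact ((((hasCoord_gen 0).pow _).mul ((hasCoord_gen 1).pow _)).mul
    ((hasCoord_gen 2).pow _)).mul ((hasCoord_gen 3).pow _)

/-- Coordinates in the basis `1, α, α²` are controlled by the sizes of the conjugates. -/
lemma coord_bound {u v w X : ℝ}
    (h : ∀ z : ℂ, z ^ 3 = z ^ 2 + z + 1 → ‖(u + v * z + w * z ^ 2 : ℂ)‖ ≤ X) :
    |u| ≤ 4 * X ∧ |v| ≤ 4 * X ∧ |w| ≤ 4 * X := by
  have h1 := lt_tribRoot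
  have h2 := tribRoot_lt
  have hc := tribRoot_cube
  set α := tribRoot
  set a : ℝ := (1 - α) / 2 with ha
  have hb2 : (0.36 : ℝ) ≤ α ^ 2 - α - 1 - a ^ 2 := by rw [ha]; nlinarith
  have hb2' : α ^ 2 - α - 1 - a ^ 2 ≤ 0.49 := by rw [ha]; nlinarith
  obtain ⟨b, hb, hbsq⟩ : ∃ b : ℝ, 0.6 ≤ b ∧ b ^ 2 = α ^ 2 - α - 1 - a ^ 2 :=
    ⟨√(α ^ 2 - α - 1 - a ^ 2), Real.le_sqrt_of_sq_le (by norm_num; linarith),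
      Real.sq_sqrt (by linarith)⟩
  have hα := h α (by exact_mod_cast hc)
  have hβ := h ⟨a, b⟩ (by
    apply Complex.ext
    · simp [pow_succ]
      rw [ha] at hbsq ⊢
      nlinarith
    · simp [pow_succ]
      rw [ha] at hbsq ⊢
      nlinarith)
  have e1 : |u + v * α + w * α ^ 2| ≤ X := by
    rw [← Real.norm_eq_abs, ← Complex.norm_real]
    push_cast
    exact hα
  have e2 := (Complex.abs_re_le_norm _).trans hβ
  have e3 := (Complex.abs_im_le_norm _).trans hβ
  simp [pow_two] at e2 e3
  have e3' : b * |v + 2 * a * w| ≤ X := by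
    have e : v * b + w * (a * b + b * a) = b * (v + 2 * a * w) := by ring
    rwa [e, abs_mul, abs_of_pos (show 0 < b by linarith)] at e3
  have e3'' : |v + 2 * a * w| ≤ 5 / 3 * X := by
    nlinarith [abs_nonneg (v + 2 * a * w)]
  have hX : 0 ≤ X := (norm_nonneg _).trans hα
  obtain ⟨p1, p2⟩ := abs_le.mp e1
  obtain ⟨p3, p4⟩ := abs_le.mp e2
  obtain ⟨p5, p6⟩ := abs_le.mp e3''
  have ha1 : -0.42 ≤ a := by rw [ha]; linarith
  have ha2 : a ≤ -0.41 := by rw [ha]; linarith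
  have hD : 5 ≤ (α - a) ^ 2 + b ^ 2 := by nlinarith
  have hw : w * ((α - a) ^ 2 + b ^ 2) =
      (u + v * α + w * α ^ 2) - (u + v * a + w * (a * a - b * b)) - (α - a) * (v + 2 * a * w) := by
    ring
  have hw2 : |w * ((α - a) ^ 2 + b ^ 2)| ≤ X + X + 2.3 * (5 / 3 * X) := by
    rw [hw]
    refine (abs_sub _ _).trans (add_le_add ((abs_sub _ _).trans (add_le_add e1 e2)) ?_)
    rw [abs_mul, abs_of_pos (by linarith : 0 < α - a)]
    exact mul_le_mul (by linarith) e3'' (abs_nonneg _) (by norm_num)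
  have hw3 : |w| ≤ 1.2 * X := by
    rw [abs_mul, abs_of_pos (by linarith : 0 < (α - a) ^ 2 + b ^ 2)] at hw2
    have : |w| * 5 ≤ |w| * ((α - a) ^ 2 + b ^ 2) := mul_le_mul_of_nonneg_left hD (abs_nonneg _)
    linarith
  have hv : |v| ≤ 2.8 * X := by
    have e : v = (v + 2 * a * w) - 2 * a * w := by ring
    rw [e]
    refine (abs_sub _ _).trans ?_
    have : |2 * a * w| ≤ 0.84 * (1.2 * X) := by
      rw [abs_mul]
      exact mul_le_mul (abs_le.mpr ⟨by linarith, by linarith⟩) hw3 (abs_nonneg _) (by norm_num)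
    linarith
  refine ⟨?_, by linarith, by linarith⟩
  have e : u = (u + v * a + w * (a * a - b * b)) - a * v - (a * a - b * b) * w := by ring
  rw [e]
  refine (abs_sub _ _).trans ?_
  have q1 : |a * v| ≤ 0.42 * (2.8 * X) := by
    rw [abs_mul]
    exact mul_le_mul (abs_le.mpr ⟨by linarith, by linarith⟩) hv (abs_nonneg _) (by norm_num)
  have q2 : |(a * a - b * b) * w| ≤ 0.49 * (1.2 * X) := by
    rw [abs_mul]
    have r1 : a * a ≤ 0.42 * 0.42 := by nlinarith only [ha1, ha2]
    have r2 : 0 ≤ a * a := mul_self_nonneg a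
    have r3 : b * b ≤ 0.49 := by rw [← pow_two, hbsq]; exact hb2'
    have r4 : 0 ≤ b * b := mul_self_nonneg b
    exact mul_le_mul (abs_le.mpr ⟨by linarith, by linarith⟩) hw3 (abs_nonneg _) (by norm_num)
  have := (abs_sub (u + v * a + w * (a * a - b * b)) (a * v)).trans (add_le_add e2 q1)
  linarith

lemma exists_coord (T : ℕ) (m : Fin 4 → ℕ) (k : ℕ) : ∃ c : Fin 3 → ℤ,
    theta m ^ k = c 0 + c 1 * tribRoot + c 2 * tribRoot ^ 2 ∧
    (m ∈ box T → ∀ j, |(c j : ℝ)| ≤ 4 * Real.exp (0.00851 * T * k)) := by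
  obtain ⟨c, hc⟩ := hasCoord_theta m k
  refine ⟨c, ?_, fun hm => ?_⟩
  · have h := hc tribRoot (by exact_mod_cast tribRoot_cube)
    have h2 : ((theta m : ℝ) : ℂ) = ∏ i, gen (tribRoot : ℂ) i ^ m i := by
      rw [theta]
      push_cast
      refine Finset.prod_congr rfl fun i _ => ?_
      have h3 := map_gen Complex.ofRealHom tribRoot i
      simp only [Complex.ofRealHom_eq_coe] at h3
      rw [h3]
    simp only [← h2] at h
    exact_mod_cast h
  · obtain ⟨h0, h1, h2⟩ := coord_bound (u := c 0) (v := c 1) (w := c 2)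
      (X := Real.exp (0.00851 * T * k)) (fun z hz => by
        have := hc z hz
        push_cast
        rw [← this]
        simp only [norm_pow, norm_prod]
        calc _ ≤ Real.exp (0.00851 * T) ^ k :=
              pow_le_pow_left₀ (by positivity) (box_place hz hm) k
          _ = _ := by rw [← Real.exp_nat_mul]; congr 1; ring)
    intro j
    fin_cases j
    · exact h0
    · exact h1
    · exact h2

/-- The weights `wv b m i`, completed by the value `1`, so that the monomials of degree exactly `T`
in the completed weights are the monomials of degree at most `T` in the `wv b m i`. -/
def wvo (b : Fin 4 → ℤ) (m : Fin 4 → ℕ) : Option (Fin 3) → ℤ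
  | none => 1
  | some i => wv b m i

/-- The starting point of the descent, furnished by Siegel's lemma. -/
lemma siegel_good {b : Fin 4 → ℤ} {T R : ℕ} (hR : 1 ≤ R) {W : ℝ} (hW1 : 1 ≤ W)
    (hW : ∀ m ∈ box T, ∀ i, |(wv b m i : ℝ)| ≤ W)
    (hN : 7 * (3 * R * (T + 3).choose 3) ≤ (box T).card) :
    Good b T R ((box T).card *
      ((box T).card * (4 * W ^ T * Real.exp (0.00851 * T * (2 * R)))) ^ (1 / 6 : ℝ)) := by
  classical
  choose c hc hcb using exists_coord T
  let A : Matrix (Sym (Option (Fin 3)) T × Fin R × Fin 3) (box T) ℤ := fun e m =>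
    ((e.1 : Multiset (Option (Fin 3))).map (wvo b m)).prod * c m (2 * e.2.1 + 1) e.2.2
  have hα : Fintype.card (Sym (Option (Fin 3)) T × Fin R × Fin 3) =
      3 * R * (T + 3).choose 3 := by
    rw [Fintype.card_prod, Sym.card_sym_eq_choose]
    simp only [Fintype.card_option, Fintype.card_fin, Fintype.card_prod]
    rw [show 3 + 1 + T - 1 = T + 3 by omega,
      ← Nat.choose_symm_of_eq_add (show T + 3 = T + 3 from rfl)]
    ring
  have hβ : Fintype.card (box T) = (box T).card := Fintype.card_coe _
  have hpos : 0 < 3 * R * (T + 3).choose 3 := by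
    have : 0 < (T + 3).choose 3 := Nat.choose_pos (by omega)
    positivity
  obtain ⟨t, ht0, htA, htn⟩ := Int.Matrix.exists_ne_zero_int_vec_norm_le A
    (by rw [hα, hβ]; omega) (by rw [hα]; exact hpos)
  rw [hα, hβ] at htn
  let _ : SeminormedAddCommGroup (Matrix (Sym (Option (Fin 3)) T × Fin R × Fin 3) (box T) ℤ) :=
    Matrix.seminormedAddCommGroup
  set Y : ℝ := 4 * W ^ T * Real.exp (0.00851 * T * (2 * R)) with hY
  have hWT : 1 ≤ W ^ T := one_le_pow₀ hW1
  have hE : 1 ≤ Real.exp (0.00851 * T * (2 * R)) := Real.one_le_exp (by positivity)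
  have hY1 : 1 ≤ Y := by rw [hY]; nlinarith
  have hA : ‖A‖ ≤ Y := by
    rw [Matrix.norm_le_iff (by linarith)]
    rintro ⟨s, r, j⟩ ⟨m, hm⟩
    simp only [A]
    rw [Int.norm_eq_abs, Int.cast_mul, abs_mul]
    have h1 : |((((s : Multiset (Option (Fin 3))).map (wvo b m)).prod : ℤ) : ℝ)| ≤ W ^ T := by
      have key : ∀ q : Multiset (Option (Fin 3)),
          |(((q.map (wvo b m)).prod : ℤ) : ℝ)| ≤ W ^ q.card := by
        intro q
        induction q using Multiset.induction_on with
        | empty => simp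
        | cons i q ih =>
          rw [Multiset.map_cons, Multiset.prod_cons, Multiset.card_cons, pow_succ, mul_comm,
            Int.cast_mul, abs_mul]
          refine mul_le_mul ih ?_ (abs_nonneg _) (by positivity)
          cases i with
          | none => simpa [wvo] using hW1
          | some i => exact hW m hm i
      have := key s
      rwa [Sym.card_coe] at this
    have h2 : |(c m (2 * r + 1) j : ℝ)| ≤ 4 * Real.exp (0.00851 * T * (2 * R)) := by
      refine (hcb m (2 * r + 1) hm j).trans ?_
      have : ((2 * (r : ℕ) + 1 : ℕ) : ℝ) ≤ 2 * R := by
        have := r.2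
        exact_mod_cast (by omega : 2 * (r : ℕ) + 1 ≤ 2 * R)
      gcongr
    calc _ ≤ W ^ T * (4 * Real.exp (0.00851 * T * (2 * R))) :=
          mul_le_mul h1 h2 (abs_nonneg _) (by positivity)
      _ = Y := by rw [hY]; ring
  have hNr : (7 : ℝ) * (3 * R * (T + 3).choose 3 : ℕ) ≤ (box T).card := by exact_mod_cast hN
  set M : ℝ := ((3 * R * (T + 3).choose 3 : ℕ) : ℝ) with hM
  have hMpos : 0 < M := by rw [hM]; exact_mod_cast hpos
  set N : ℝ := ((box T).card : ℝ) with hNdef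
  have hM1 : 1 ≤ M := by rw [hM]; exact_mod_cast hpos
  have htb : ‖t‖ ≤ (N * Y) ^ (1 / 6 : ℝ) := by
    refine htn.trans ?_
    calc (N * max 1 ‖A‖) ^ (M / (N - M)) ≤ (N * Y) ^ (M / (N - M)) := by
          have : 0 ≤ M / (N - M) := div_nonneg hMpos.le (by linarith)
          refine Real.rpow_le_rpow ?_ ?_ this
          · have := le_max_left 1 ‖A‖
            have : 0 ≤ N := by linarith
            positivity
          · exact mul_le_mul_of_nonneg_left (max_le hY1 hA) (by linarith)
      _ ≤ (N * Y) ^ (1 / 6 : ℝ) := by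
          refine Real.rpow_le_rpow_of_exponent_le ?_ ?_
          · nlinarith
          · rw [div_le_div_iff₀ (by linarith) (by norm_num)]; linarith
  refine ⟨fun m => if h : m ∈ box T then t ⟨m, h⟩ else 0, ?_, ?_, ?_, ?_⟩
  · intro s hs r hr
    have hcoord : ∀ j : Fin 3, ∑ m ∈ box T,
        ((if h : m ∈ box T then t ⟨m, h⟩ else 0 : ℤ) * mon b s m * c m (2 * r + 1) j : ℤ) = 0 := by
      intro j
      let s' : Sym (Option (Fin 3)) T :=
        ⟨s.map some + Multiset.replicate (T - s.card) none, by simp; omega⟩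
      have h1 := congrFun htA (s', ⟨r, hr⟩, j)
      simp only [Matrix.mulVec, dotProduct, Pi.zero_apply, A] at h1
      rw [← h1, ← Finset.sum_coe_sort (box T)]
      refine Finset.sum_congr rfl fun m _ => ?_
      have hmon : ((s' : Multiset (Option (Fin 3))).map (wvo b m)).prod = mon b s m := by
        simp only [s', Sym.coe_mk, Multiset.map_add, Multiset.map_map, Multiset.map_replicate,
          Multiset.prod_add, Multiset.prod_replicate, wvo, one_pow, mul_one, mon]
        rfl
      rw [hmon, dif_pos m.2]
      ring
    have h0 : ∀ j : Fin 3, ∑ m ∈ box T,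
        ((if h : m ∈ box T then t ⟨m, h⟩ else 0 : ℤ) : ℝ) * mon b s m * c m (2 * r + 1) j = 0 := by
      intro j
      have := hcoord j
      exact_mod_cast this
    calc ∑ m ∈ box T, ((if h : m ∈ box T then t ⟨m, h⟩ else 0 : ℤ) : ℝ) * mon b s m *
          theta m ^ (2 * r + 1)
        = ∑ m ∈ box T, (((if h : m ∈ box T then t ⟨m, h⟩ else 0 : ℤ) : ℝ) * mon b s m *
            c m (2 * r + 1) 0 +
          ((if h : m ∈ box T then t ⟨m, h⟩ else 0 : ℤ) : ℝ) * mon b s m * c m (2 * r + 1) 1 *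
            tribRoot +
          ((if h : m ∈ box T then t ⟨m, h⟩ else 0 : ℤ) : ℝ) * mon b s m * c m (2 * r + 1) 2 *
            tribRoot ^ 2) := by
          refine Finset.sum_congr rfl fun m _ => ?_
          rw [hc m (2 * r + 1)]
          ring
      _ = 0 := by
          rw [Finset.sum_add_distrib, Finset.sum_add_distrib, ← Finset.sum_mul, ← Finset.sum_mul,
            h0, h0, h0]
          ring
  · intro m hm
    simp [hm]
  · obtain ⟨m, hm⟩ := Function.ne_iff.mp ht0
    exact ⟨m, by simpa [m.2] using hm⟩
  · calc _ ≤ ∑ m ∈ box T, (N * Y) ^ (1 / 6 : ℝ) := by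
          refine Finset.sum_le_sum fun m hm => ?_
          simp only [dif_pos hm]
          refine le_trans ?_ htb
          have := norm_le_pi_norm t ⟨m, hm⟩
          rwa [Int.norm_eq_abs] at this
      _ = _ := by rw [Finset.sum_const, nsmul_eq_mul]

/-! ### The full descent -/

lemma box_card (T : ℕ) : (T : ℝ) ^ 4 ≤ 2589054192 * (box T).card ∧
    ((box T).card : ℝ) ≤ (T + 1 : ℝ) ^ 4 := by
  have hc : ((box T).card : ℝ) = ((T / 142 : ℕ) + 1) * ((T / 498 : ℕ) + 1) * ((T / 108 : ℕ) + 1) *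
      ((T / 339 : ℕ) + 1) := by
    simp only [box, Fintype.card_piFinset, Finset.card_range, Fin.prod_univ_four]
    simp [boxDen]
  have lo : ∀ d : ℕ, 0 < d → (T : ℝ) ≤ d * ((T / d : ℕ) + 1) := by
    intro d hd
    have := Nat.lt_mul_div_succ T hd
    exact_mod_cast this.le
  have hi : ∀ d : ℕ, ((T / d : ℕ) : ℝ) + 1 ≤ T + 1 := by
    intro d
    have := Nat.div_le_self T d
    have : ((T / d : ℕ) : ℝ) ≤ T := by exact_mod_cast this
    linarith
  constructor
  · rw [hc]
    have hT : (0 : ℝ) ≤ T := Nat.cast_nonneg T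
    calc (T : ℝ) ^ 4 = T * T * T * T := by ring
      _ ≤ ((142 : ℕ) * ((T / 142 : ℕ) + 1)) * ((498 : ℕ) * ((T / 498 : ℕ) + 1)) *
          ((108 : ℕ) * ((T / 108 : ℕ) + 1)) * ((339 : ℕ) * ((T / 339 : ℕ) + 1)) := by
          have := lo 142 (by norm_num)
          have := lo 498 (by norm_num)
          have := lo 108 (by norm_num)
          have := lo 339 (by norm_num)
          gcongr
      _ = _ := by push_cast; ring
  · rw [hc]
    calc _ ≤ (T + 1 : ℝ) * (T + 1) * (T + 1) * (T + 1) := by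
          have := hi 142
          have := hi 498
          have := hi 108
          have := hi 339
          gcongr
      _ = _ := by ring

lemma choose_three_cast (T : ℕ) :
    (6 : ℝ) * ((T + 3).choose 3 : ℕ) = (T + 3) * (T + 2) * (T + 1) := by
  have h := Nat.descFactorial_eq_factorial_mul_choose (T + 3) 3
  simp only [Nat.descFactorial, Nat.factorial] at h
  have h2 : (((T + 3 - 2) * ((T + 3 - 1) * ((T + 3 - 0) * 1)) : ℕ) : ℝ) =
      ((3 * (2 * (1 * 1)) * (T + 3).choose 3 : ℕ) : ℝ) := by
    rw [← h]
  rw [show T + 3 - 2 = T + 1 by omega, show T + 3 - 1 = T + 2 by omega,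
    show T + 3 - 0 = T + 3 by omega] at h2
  push_cast at h2
  linarith

lemma self_le_exp_small {G : ℝ} (hG : 1e15 ≤ G) : G ≤ Real.exp (1e-6 * G) := by
  have h := Real.quadratic_le_exp_of_nonneg (x := 1e-6 * G) (by positivity)
  refine le_trans ?_ h
  nlinarith

/-- The numerical verification behind one step of the descent, in terms of the invariant
`G = T * R`. -/
lemma stage_small {τ R : ℕ} {ℓ B G P Λ : ℝ} (hR : 1 ≤ R)
    (hℓ : Real.exp ℓ = B) (hG : 1e15 ≤ G) (hGB : 2 * G ≤ B) (hτR : (τ : ℝ) * R = G / 2)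
    (hτℓ : τ * ℓ ≤ G / 200) (hτ : (τ : ℝ) ≤ 1e-3 * G) (hP0 : 1 ≤ P)
    (hP : P ≤ Real.exp (0.006175 * G)) (hΛ0 : 0 ≤ Λ) (hΛ : Λ ≤ Real.exp (-(2.2 * G))) :
    (P * (B ^ 2) ^ τ * Real.exp (0.00851 * (2 * τ : ℕ) * (2 * R))) ^ 48 *
      (3 * (0.039 ^ (τ * R) * (Real.exp 1 * R) ^ τ) +
      (R * (32 * R ^ 4 * 2 ^ R) ^ τ * Real.exp τ + 1) * (τ * R) * Λ) < 1 := by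
  have hRr : (1 : ℝ) ≤ R := by exact_mod_cast hR
  have hτ0 : (0 : ℝ) ≤ τ := Nat.cast_nonneg τ
  have hτ1 : (1 : ℝ) ≤ τ := by
    have : τ ≠ 0 := by
      rintro rfl
      simp at hτR
      linarith
    exact_mod_cast Nat.one_le_iff_ne_zero.mpr this
  have hRG : (R : ℝ) ≤ G / 2 := by nlinarith
  have hB0 : 0 < B := by linarith
  have hGe := self_le_exp_small hG
  -- `B ^ (q τ)` in exponential form
  have hBpow : ∀ q : ℕ, (B ^ q) ^ τ ≤ Real.exp (q * (G / 200)) := by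
    intro q
    rw [← hℓ, ← pow_mul, ← Real.exp_nat_mul]
    apply Real.exp_le_exp.mpr
    push_cast
    have : (0 : ℝ) ≤ q := Nat.cast_nonneg q
    nlinarith
  have hX : (P * (B ^ 2) ^ τ * Real.exp (0.00851 * (2 * τ : ℕ) * (2 * R))) ^ 48 ≤
      Real.exp (1.59336 * G) := by
    have h1 : P * (B ^ 2) ^ τ * Real.exp (0.00851 * (2 * τ : ℕ) * (2 * R)) ≤
        Real.exp (0.033195 * G) := by
      calc _ ≤ Real.exp (0.006175 * G) * Real.exp ((2 : ℕ) * (G / 200)) *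
            Real.exp (0.00851 * (2 * τ : ℕ) * (2 * R)) := by
            have := hBpow 2
            gcongr
        _ = Real.exp (0.033195 * G) := by
            rw [← Real.exp_add, ← Real.exp_add]
            congr 1
            push_cast
            linear_combination 0.03404 * hτR
    calc _ ≤ Real.exp (0.033195 * G) ^ 48 := pow_le_pow_left₀ (by positivity) h1 48
      _ = _ := by rw [← Real.exp_nat_mul]; congr 1; push_cast; ring
  have h039 : (0.039 : ℝ) ≤ Real.exp (-3.24) := by
    rw [Real.exp_neg, le_inv_comm₀ (by norm_num) (Real.exp_pos _)]
    have h := Real.exp_one_lt_d9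
    have h2 : Real.exp 3.24 = Real.exp 1 ^ 3 * Real.exp 0.24 := by
      rw [← Real.exp_nat_mul, ← Real.exp_add]; norm_num
    have h3 : Real.exp 0.24 ≤ 1.2713 := by
      have := Real.exp_bound' (x := 0.24) (by norm_num) (by norm_num) (n := 5) (by norm_num)
      refine this.trans ?_
      norm_num [Finset.sum_range_succ, Nat.factorial]
    rw [h2]
    calc Real.exp 1 ^ 3 * Real.exp 0.24 ≤ 2.7182818286 ^ 3 * 1.2713 := by gcongr
      _ ≤ _ := by norm_num
  have hτR' : ((τ * R : ℕ) : ℝ) = G / 2 := by push_cast; exact hτR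
  have ht1 : 3 * ((0.039 : ℝ) ^ (τ * R) * (Real.exp 1 * R) ^ τ) ≤ 3 * Real.exp (-1.61 * G) := by
    have h1 : (0.039 : ℝ) ^ (τ * R) ≤ Real.exp (-1.62 * G) := by
      calc _ ≤ Real.exp (-3.24) ^ (τ * R) := pow_le_pow_left₀ (by norm_num) h039 _
        _ = _ := by rw [← Real.exp_nat_mul, hτR']; congr 1; ring
    have h2 : (Real.exp 1 * R) ^ τ ≤ Real.exp (0.01 * G) := by
      calc _ ≤ (B ^ 2) ^ τ := by
            refine pow_le_pow_left₀ (by positivity) ?_ τ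
            have := Real.exp_one_lt_d9
            have hB1 : 1 ≤ B := by linarith
            nlinarith
        _ ≤ _ := hBpow 2
        _ = _ := by congr 1; push_cast; ring
    calc _ ≤ 3 * (Real.exp (-1.62 * G) * Real.exp (0.01 * G)) := by gcongr
      _ = _ := by rw [← Real.exp_add]; congr 2; ring
  have ht2 : (R * (32 * R ^ 4 * 2 ^ R) ^ τ * Real.exp τ + 1) * (τ * R) * Λ ≤
      2 * Real.exp (-1.8 * G) := by
    have h1 : ((32 : ℝ) * R ^ 4 * 2 ^ R) ^ τ ≤ Real.exp (0.37 * G) := by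
      rw [mul_pow]
      have h2 : ((32 : ℝ) * R ^ 4) ^ τ ≤ Real.exp (0.02 * G) := by
        calc _ ≤ (B ^ 4) ^ τ := by
              refine pow_le_pow_left₀ (by positivity) ?_ τ
              calc (32 : ℝ) * R ^ 4 ≤ (4 * R) ^ 4 := by
                    have : 0 ≤ (R : ℝ) ^ 4 := by positivity
                    nlinarith
                _ ≤ B ^ 4 := pow_le_pow_left₀ (by positivity) (by linarith) 4
          _ ≤ _ := hBpow 4
          _ = _ := by congr 1; push_cast; ring
      have h3 : ((2 : ℝ) ^ R) ^ τ ≤ Real.exp (0.35 * G) := by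
        rw [← pow_mul, mul_comm R τ]
        have h4 : (2 : ℝ) ≤ Real.exp 0.7 := by
          have := Real.log_two_lt_d9
          rw [← Real.log_le_iff_le_exp (by norm_num)]
          linarith
        calc _ ≤ Real.exp 0.7 ^ (τ * R) := pow_le_pow_left₀ (by norm_num) h4 _
          _ = _ := by rw [← Real.exp_nat_mul, hτR']; congr 1; ring
      calc _ ≤ Real.exp (0.02 * G) * Real.exp (0.35 * G) := by gcongr
        _ = _ := by rw [← Real.exp_add]; congr 1; ring
    have h2 : R * (32 * R ^ 4 * 2 ^ R) ^ τ * Real.exp τ + 1 ≤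
        2 * (Real.exp (1e-6 * G) * Real.exp (0.37 * G) * Real.exp (1e-3 * G)) := by
      have h3 : R * (32 * R ^ 4 * 2 ^ R) ^ τ * Real.exp τ ≤
          Real.exp (1e-6 * G) * Real.exp (0.37 * G) * Real.exp (1e-3 * G) := by
        have : (R : ℝ) ≤ Real.exp (1e-6 * G) := by linarith
        gcongr
      have h4 : 1 ≤ Real.exp (1e-6 * G) * Real.exp (0.37 * G) * Real.exp (1e-3 * G) := by
        rw [← Real.exp_add, ← Real.exp_add]
        exact Real.one_le_exp (by linarith)
      linarith
    have h3 : (τ * R : ℝ) ≤ Real.exp (1e-6 * G) := by rw [hτR]; linarith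
    calc _ ≤ 2 * (Real.exp (1e-6 * G) * Real.exp (0.37 * G) * Real.exp (1e-3 * G)) *
          Real.exp (1e-6 * G) * Real.exp (-(2.2 * G)) := by gcongr
      _ = 2 * Real.exp (1e-6 * G + 0.37 * G + 1e-3 * G + 1e-6 * G + -(2.2 * G)) := by
          rw [Real.exp_add, Real.exp_add, Real.exp_add, Real.exp_add]; ring
      _ ≤ _ := by
          gcongr
          linarith
  calc _ ≤ Real.exp (1.59336 * G) * (3 * Real.exp (-1.61 * G) + 2 * Real.exp (-1.8 * G)) := by
        gcongr
    _ ≤ Real.exp (1.59336 * G) * (3 * Real.exp (-1.61 * G) + 2 * Real.exp (-1.61 * G)) := by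
        gcongr
        linarith
    _ = 5 * Real.exp (-0.01664 * G) := by
        rw [← add_mul, mul_left_comm, ← Real.exp_add]
        norm_num
        ring_nf
    _ ≤ 5 * Real.exp (-5) := by
        gcongr
        linarith
    _ < 1 := by
        rw [Real.exp_neg, ← div_eq_mul_inv, div_lt_one (Real.exp_pos _)]
        have := Real.add_one_lt_exp (x := 5) (by norm_num)
        linarith

/-- The whole descent, from the initial data to a contradiction. -/
lemma no_good {b : Fin 4 → ℤ} (hb : b 0 ≠ 0) {k R₀ : ℕ} {ℓ B G P : ℝ} (hR : 4000 ≤ R₀)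
    (hℓ : Real.exp ℓ = B) (hG : 1e15 ≤ G) (hGB : 2 * G ≤ B)
    (hGeq : (R₀ : ℝ) * 2 ^ k = G) (hRℓ : 100 * ℓ ≤ R₀) (hP0 : 1 ≤ P)
    (hP : P ≤ Real.exp (0.006175 * G)) (hΛ : |linForm b| ≤ Real.exp (-(2.2 * G)))
    (hW : ∀ m ∈ box (2 ^ k), ∀ i, |(wv b m i : ℝ)| ≤ B ^ 2) : ¬Good b (2 ^ k) R₀ P := by
  intro h0
  have hRr : (4000 : ℝ) ≤ R₀ := by exact_mod_cast hR
  have hB1 : 1 ≤ B := by linarith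
  have hGe := self_le_exp_small hG
  have hexp : Real.exp (-(2.2 * G)) * (1e10 * G) ≤ 1 := by
    have h1 : Real.exp (-(2.2 * G)) * (Real.exp (1e-6 * G) * Real.exp (1e-6 * G)) ≤ 1 := by
      rw [← Real.exp_add, ← Real.exp_add]
      exact Real.exp_le_one_iff.mpr (by linarith)
    refine le_trans (mul_le_mul_of_nonneg_left ?_ (Real.exp_pos _).le) h1
    exact mul_le_mul (by linarith) hGe (by linarith) (Real.exp_pos _).le
  have step : ∀ j ≤ k, Good b (2 ^ (k - j)) (R₀ * 2 ^ j) P := by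
    intro j
    induction j with
    | zero => intro _; simpa using h0
    | succ j ih =>
      intro hj
      have hG0 := ih (by omega)
      have e1 : 2 ^ (k - j) = 2 * 2 ^ (k - (j + 1)) := by
        rw [← pow_succ']; congr 1; omega
      rw [e1] at hG0
      have e2 : R₀ * 2 ^ (j + 1) = 2 * (R₀ * 2 ^ j) := by ring
      rw [e2]
      have hτR : ((2 ^ (k - (j + 1)) : ℕ) : ℝ) * ((R₀ * 2 ^ j : ℕ) : ℝ) = G / 2 := by
        rw [← hGeq]
        have : (2 : ℝ) ^ k = 2 ^ (k - (j + 1)) * 2 ^ j * 2 := by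
          rw [← pow_add, ← pow_succ]; congr 1; omega
        push_cast
        rw [this]
        ring
      have h2j : (1 : ℝ) ≤ 2 ^ j := one_le_pow₀ (by norm_num)
      have hle : ((2 ^ (k - (j + 1)) : ℕ) : ℝ) * R₀ ≤ G / 2 := by
        rw [← hτR]
        push_cast
        rw [← mul_assoc]
        exact le_mul_of_one_le_right (by positivity) h2j
      have hτ0 : (0 : ℝ) ≤ ((2 ^ (k - (j + 1)) : ℕ) : ℝ) := Nat.cast_nonneg _
      have hR1 : 1 ≤ R₀ * 2 ^ j := Nat.one_le_iff_ne_zero.mpr (by positivity)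
      have hτ1 : 1 ≤ 2 ^ (k - (j + 1)) := Nat.one_le_two_pow
      refine descent_step hb hτ1 hR1 hP0 (one_le_pow₀ hB1 : 1 ≤ B ^ 2) hG0 ?_ rfl ?_ ?_ ?_
      · intro m hm i
        refine hW m (mem_box.mpr fun l => (mem_box.mp hm l).trans ?_) i
        refine Nat.div_le_div_right ?_
        rw [← e1]
        exact Nat.pow_le_pow_right (by norm_num) (by omega)
      · nlinarith
      · rw [hτR]
        nlinarith [abs_nonneg (linForm b)]
      · refine stage_small hR1 hℓ hG hGB hτR ?_ ?_ hP0 hP (abs_nonneg _) hΛ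
        · nlinarith
        · nlinarith
  have := step k le_rfl
  rw [Nat.sub_self, pow_zero] at this
  exact not_good_one (Nat.one_le_iff_ne_zero.mpr (by positivity)) this

/-! ### The lower bound for linear forms -/

lemma log_bounds {B : ℝ} (hB : 1e19 ≤ B) :
    43 ≤ Real.log B ∧ Real.log B ^ 2 ≤ 1.94e-16 * B := by
  have hB0 : 0 < B := by linarith
  have h19 : (43 : ℝ) ≤ Real.log 1e19 ∧ Real.log 1e19 ≤ 44 := by
    constructor
    · rw [Real.le_log_iff_exp_le (by norm_num), show (43 : ℝ) = (43 : ℕ) * 1 by norm_num,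
        Real.exp_nat_mul]
      have := Real.exp_one_lt_d9
      calc Real.exp 1 ^ 43 ≤ 2.7182818286 ^ 43 := by gcongr
        _ ≤ _ := by norm_num
    · rw [Real.log_le_iff_le_exp (by norm_num), show (44 : ℝ) = (44 : ℕ) * 1 by norm_num,
        Real.exp_nat_mul]
      have := Real.exp_one_gt_d9
      calc _ ≤ (2.7182818283 : ℝ) ^ 44 := by norm_num
        _ ≤ _ := by gcongr
  have h43 : 43 ≤ Real.log B := h19.1.trans (Real.log_le_log (by norm_num) hB)
  refine ⟨h43, ?_⟩
  obtain ⟨q, hq1, hq⟩ : ∃ q : ℝ, 1 ≤ q ∧ q ^ 2 = B / 1e19 := by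
    have h1 : 1 ≤ B / 1e19 := by rw [le_div_iff₀ (by norm_num)]; linarith
    exact ⟨√(B / 1e19), Real.one_le_sqrt.mpr h1, Real.sq_sqrt (by linarith)⟩
  have hBq : B = 1e19 * q ^ 2 := by rw [hq]; field_simp
  have h2 : Real.log B ≤ 44 * q := by
    rw [hBq, Real.log_mul (by norm_num) (by positivity), Real.log_pow]
    have := Real.log_le_sub_one_of_pos (show 0 < q by linarith)
    push_cast
    linarith [h19.2]
  calc Real.log B ^ 2 ≤ (44 * q) ^ 2 := pow_le_pow_left₀ (by linarith) h2 2
    _ ≤ _ := by rw [hBq]; nlinarith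

/-- The box is large enough for Siegel's lemma: the unknowns are at least seven times as numerous as
the equations. -/
lemma box_count {T R : ℕ} (hT1 : (9063000000 : ℝ) * R ≤ T) (hTbig : (3e13 : ℝ) ≤ T) :
    7 * (3 * R * (T + 3).choose 3) ≤ (box T).card := by
  have hcard := (box_card T).1
  have hch := choose_three_cast T
  have hT3 : (0 : ℝ) ≤ (T : ℝ) ^ 3 := by positivity
  have : (7 : ℝ) * (3 * R * ((T + 3).choose 3 : ℕ)) ≤ (box T).card := by
    have h1 : ((T : ℝ) + 3) * (T + 2) * (T + 1) ≤ 1.00001 * T ^ 3 := by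
      have h2 : ((T : ℝ) + 3) ≤ 1.000001 * T := by linarith
      calc ((T : ℝ) + 3) * (T + 2) * (T + 1) ≤ (1.000001 * T) * (1.000001 * T) *
            (1.000001 * T) := by
            gcongr <;> linarith
        _ = 1.000001 ^ 3 * (T : ℝ) ^ 3 := by ring
        _ ≤ _ := mul_le_mul_of_nonneg_right (by norm_num) hT3
    have h3 : 9063000000 * ((R : ℝ) * T ^ 3) ≤ T ^ 4 := by
      calc 9063000000 * ((R : ℝ) * (T : ℝ) ^ 3) = (9063000000 * (R : ℝ)) * (T : ℝ) ^ 3 := by ring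
        _ ≤ (T : ℝ) * (T : ℝ) ^ 3 := mul_le_mul_of_nonneg_right hT1 hT3
        _ = _ := by ring
    have h4 : (R : ℝ) * (((T : ℝ) + 3) * (T + 2) * (T + 1)) ≤ R * (1.00001 * T ^ 3) := by gcongr
    have h5 : (7 : ℝ) * (3 * R * ((T + 3).choose 3 : ℕ)) =
        3.5 * (R * (((T : ℝ) + 3) * (T + 2) * (T + 1))) := by
      linear_combination 3.5 * (R : ℝ) * hch
    have h6 : (0 : ℝ) ≤ R * T ^ 3 := by positivity
    rw [h5]
    linarith only [hcard, h3, h4, h6]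
  exact_mod_cast this

/-- The lower bound for linear forms in the logarithms of `α - 1`, `3`, `α` and `2α² - 3α`. -/
theorem linForm_lower {b : Fin 4 → ℤ} (hb : b 0 ≠ 0) {B : ℝ} (hB : 1e19 ≤ B)
    (hbB : ∀ i, |(b i : ℝ)| ≤ B) :
    Real.exp (-(4e14 * Real.log B ^ 2)) < |linForm b| := by
  by_contra hcon
  rw [not_lt] at hcon
  obtain ⟨hℓ, hℓB⟩ := log_bounds hB
  have hexpℓ : Real.exp (Real.log B) = B := Real.exp_log (by linarith)
  set ℓ := Real.log B with hℓdef
  obtain ⟨R, hR⟩ : ∃ R : ℕ, R = ⌈100 * ℓ⌉₊ := ⟨_, rfl⟩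
  have hR1 : 100 * ℓ ≤ R := by rw [hR]; exact Nat.le_ceil _
  have hR2 : (R : ℝ) ≤ 100.03 * ℓ := by
    have := Nat.ceil_lt_add_one (show 0 ≤ 100 * ℓ by linarith)
    rw [← hR] at this
    linarith
  have hR4 : (4300 : ℝ) ≤ R := by linarith
  have hRn : 4300 ≤ R := by exact_mod_cast hR4
  obtain ⟨k, hk1, hk2⟩ : ∃ k : ℕ, 9063000000 * R < 2 ^ k ∧ 2 ^ k ≤ 2 * (9063000000 * R) := by
    refine ⟨Nat.log 2 (9063000000 * R) + 1, Nat.lt_pow_succ_log_self (by norm_num) _, ?_⟩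
    rw [pow_succ']
    exact Nat.mul_le_mul_left 2 (Nat.pow_log_le_self 2 (by omega))
  have hT1 : (9063000000 : ℝ) * R ≤ ((2 ^ k : ℕ) : ℝ) := by exact_mod_cast hk1.le
  have hT2 : ((2 ^ k : ℕ) : ℝ) ≤ 2 * (9063000000 * R) := by exact_mod_cast hk2
  have hW0 : (R : ℝ) * 2 ^ k = (R : ℝ) * ((2 ^ k : ℕ) : ℝ) := by push_cast; ring
  obtain ⟨G, hGeq⟩ : ∃ G : ℝ, (R : ℝ) * ((2 ^ k : ℕ) : ℝ) = G := ⟨_, rfl⟩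
  have hTbig : (3e13 : ℝ) ≤ ((2 ^ k : ℕ) : ℝ) := by linarith
  have hG1 : 1e15 ≤ G := by rw [← hGeq]; nlinarith
  have hG2 : G ≤ 1.8137e14 * ℓ ^ 2 := by
    rw [← hGeq]
    calc (R : ℝ) * ((2 ^ k : ℕ) : ℝ) ≤ R * (2 * (9063000000 * R)) := by gcongr
      _ = 18126000000 * (R : ℝ) ^ 2 := by ring
      _ ≤ 18126000000 * (100.03 * ℓ) ^ 2 := by gcongr
      _ ≤ _ := by nlinarith [sq_nonneg ℓ]
  have hGB : 2 * G ≤ B := by linarith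
  have hTG : 4300 * ((2 ^ k : ℕ) : ℝ) ≤ G := by rw [← hGeq]; gcongr
  have hTℓ : ((2 ^ k : ℕ) : ℝ) * ℓ ≤ G / 100 := by
    rw [← hGeq]; nlinarith
  have hB1 : 1 ≤ B := by linarith
  have hGe := self_le_exp_small hG1
  have hcard := box_card (2 ^ k)
  have hW : ∀ m ∈ box (2 ^ k), ∀ i, |(wv b m i : ℝ)| ≤ B ^ 2 := by
    intro m hm i
    have hm' : ∀ l, (m l : ℝ) ≤ ((2 ^ k : ℕ) : ℝ) := by
      intro l
      have := (mem_box.mp hm l).trans (Nat.div_le_self _ _)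
      exact_mod_cast this
    unfold wv
    push_cast
    refine (abs_sub _ _).trans ?_
    rw [abs_mul, abs_mul, Nat.abs_cast, Nat.abs_cast]
    calc |(b 0 : ℝ)| * m i.succ + |(b i.succ : ℝ)| * m 0
        ≤ B * ((2 ^ k : ℕ) : ℝ) + B * ((2 ^ k : ℕ) : ℝ) := by
          have := hbB 0
          have := hbB i.succ
          have := hm' i.succ
          have := hm' 0
          gcongr
      _ ≤ B ^ 2 := by nlinarith
  obtain ⟨T, hTdef⟩ : ∃ T : ℕ, T = 2 ^ k := ⟨_, rfl⟩
  rw [← hTdef] at hT1 hT2 hGeq hTbig hTG hTℓ hcard hW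
  have hN := box_count hT1 hTbig
  have hgood := siegel_good (by omega : 1 ≤ R) (one_le_pow₀ hB1 : 1 ≤ B ^ 2) hW hN
  have hNle : ((box T).card : ℝ) ≤ Real.exp (1e-6 * G) := by
    refine hcard.2.trans ?_
    have h1 : (T : ℝ) + 1 ≤ Real.exp (2.5e-7 * G) := by
      have h2 := Real.quadratic_le_exp_of_nonneg (x := 1e-3 * T) (by positivity)
      have h3 : Real.exp (1e-3 * T) ≤ Real.exp (2.5e-7 * G) := Real.exp_le_exp.mpr (by linarith)
      refine le_trans ?_ (h2.trans h3)
      nlinarith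
    calc ((T : ℝ) + 1) ^ 4 ≤ Real.exp (2.5e-7 * G) ^ 4 := by gcongr
      _ = _ := by rw [← Real.exp_nat_mul]; congr 1; push_cast; ring
  have hN1 : (1 : ℝ) ≤ (box T).card := by
    have : 0 < (T + 3).choose 3 := Nat.choose_pos (by omega)
    have : 1 ≤ (box T).card := le_trans (Nat.one_le_iff_ne_zero.mpr (by positivity)) hN
    exact_mod_cast this
  have hWT : (1 : ℝ) ≤ (B ^ 2) ^ T := one_le_pow₀ (one_le_pow₀ hB1)
  have hE1 : 1 ≤ Real.exp (0.00851 * T * (2 * R)) := Real.one_le_exp (by positivity)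
  refine no_good hb (by omega) hexpℓ hG1 hGB (by rw [hW0, ← hTdef]; exact hGeq) hR1 ?_ ?_ ?_
    (by rw [← hTdef]; exact hW) (by rw [← hTdef]; exact hgood)
  · have h1 : 1 ≤ ((box T).card : ℝ) *
        (4 * (B ^ 2) ^ T * Real.exp (0.00851 * T * (2 * R))) :=
      one_le_mul_of_one_le_of_one_le hN1
        (one_le_mul_of_one_le_of_one_le (by linarith) hE1)
    exact one_le_mul_of_one_le_of_one_le hN1 (Real.one_le_rpow h1 (by norm_num))
  · have h1 : ((box T).card : ℝ) * (4 * (B ^ 2) ^ T * Real.exp (0.00851 * T * (2 * R))) ≤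
        Real.exp (0.037022 * G) := by
      have h2 : (B ^ 2) ^ T ≤ Real.exp (0.02 * G) := by
        rw [← pow_mul, ← hexpℓ, ← Real.exp_nat_mul]
        apply Real.exp_le_exp.mpr
        push_cast
        linarith
      have h3 : (4 : ℝ) ≤ Real.exp (1e-6 * G) := by linarith
      calc _ ≤ Real.exp (1e-6 * G) * (Real.exp (1e-6 * G) * Real.exp (0.02 * G) *
            Real.exp (0.00851 * T * (2 * R))) := by gcongr
        _ = _ := by
            rw [← Real.exp_add, ← Real.exp_add, ← Real.exp_add]
            congr 1
            rw [← hGeq]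
            ring
    calc _ ≤ Real.exp (1e-6 * G) * (Real.exp (0.037022 * G)) ^ (1 / 6 : ℝ) := by
          gcongr
      _ = Real.exp (1e-6 * G + 0.037022 * G * (1 / 6)) := by
          rw [← Real.exp_mul, ← Real.exp_add]
      _ ≤ _ := by
          apply Real.exp_le_exp.mpr
          linarith
  · refine hcon.trans (Real.exp_le_exp.mpr ?_)
    nlinarith [sq_nonneg ℓ]

/-! ### Tribonacci numbers and numbers `2 ^ x * 3 ^ y` -/

lemma T_succ (n : ℕ) : (T (n + 3) : ℝ) = T (n + 2) + T (n + 1) + T n := by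
  rw [T]; push_cast; ring

lemma T_le_pow (n : ℕ) : (T n : ℝ) ≤ tribRoot ^ n := by
  have h1 := lt_tribRoot
  induction n using Nat.strong_induction_on with
  | _ n ih =>
    match n with
    | 0 => simp [T]
    | 1 => rw [pow_one, T]; push_cast; linarith
    | 2 => rw [T]; push_cast; nlinarith
    | n + 3 =>
      rw [T_succ]
      have e : tribRoot ^ (n + 3) = tribRoot ^ (n + 2) + tribRoot ^ (n + 1) + tribRoot ^ n := by
        linear_combination tribRoot ^ n * tribRoot_cube
      rw [e]
      linarith [ih (n + 2) (by omega), ih (n + 1) (by omega), ih n (by omega)]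

/-- The constant `δ` of the asymptotics `T n ∼ α ^ n / δ`. -/
noncomputable def delta : ℝ := -tribRoot ^ 2 + 4 * tribRoot - 1

lemma delta_bounds : 2.97 < delta ∧ delta < 2.98 := by
  have h1 := lt_tribRoot
  have h2 := tribRoot_lt
  unfold delta
  constructor <;> nlinarith

/-- Binet's formula with an explicit error term. The error `e n` satisfies the second order
recurrence of the two complex roots, for which a positive definite quadratic form decreases. -/
lemma binet (n : ℕ) : |delta * T n - tribRoot ^ n| ≤ 2 := by
  have h1 := lt_tribRoot
  have h2 := tribRoot_lt
  have hc := tribRoot_cube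
  set α := tribRoot with hα
  let e : ℕ → ℝ := fun n => delta * T n - α ^ n
  have hrec : ∀ n, e (n + 2) = -(α - 1) * e (n + 1) - (α ^ 2 - α - 1) * e n := by
    intro n
    induction n with
    | zero =>
      simp only [e, T, delta, ← hα]
      push_cast
      linear_combination (-(1 : ℝ)) * hc
    | succ n ih =>
      have h3 : e (n + 1 + 2) = e (n + 2) + e (n + 1) + e n := by
        simp only [e]
        rw [show n + 1 + 2 = n + 3 by ring, T_succ]
        linear_combination (-α ^ n) * hc
      rw [h3, show n + 1 + 1 = n + 2 by ring]
      linear_combination α * ih - e n * hc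
  have hQ : ∀ n, e (n + 1) ^ 2 + (α - 1) * e (n + 1) * e n + (α ^ 2 - α - 1) * e n ^ 2 ≤ 1 := by
    intro n
    induction n with
    | zero =>
      simp only [e, T, delta, ← hα]
      push_cast
      have e1 : (-α ^ 2 + 4 * α - 1) * 1 - α ^ (0 + 1) ≤ 1.14 := by
        rw [zero_add, pow_one]; nlinarith
      have e2 : 1.13 ≤ (-α ^ 2 + 4 * α - 1) * 1 - α ^ (0 + 1) := by
        rw [zero_add, pow_one]; nlinarith
      set t := (-α ^ 2 + 4 * α - 1) * 1 - α ^ (0 + 1)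
      have e3 : α ^ 2 ≤ 3.384 := by nlinarith
      nlinarith
    | succ n ih =>
      have h3 : e (n + 1 + 1) ^ 2 + (α - 1) * e (n + 1 + 1) * e (n + 1) +
          (α ^ 2 - α - 1) * e (n + 1) ^ 2 = (α ^ 2 - α - 1) *
          (e (n + 1) ^ 2 + (α - 1) * e (n + 1) * e n + (α ^ 2 - α - 1) * e n ^ 2) := by
        rw [hrec n]; ring
      rw [h3]
      have h4 : 0 ≤ α ^ 2 - α - 1 := by nlinarith
      have h5 : α ^ 2 - α - 1 ≤ 1 := by nlinarith
      nlinarith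
  have h3 := hQ n
  have h4 : (0.25 : ℝ) ≤ (α ^ 2 - α - 1) - ((α - 1) / 2) ^ 2 := by nlinarith
  have h5 : e n ^ 2 ≤ 2 ^ 2 := by
    have : ((α ^ 2 - α - 1) - ((α - 1) / 2) ^ 2) * e n ^ 2 ≤ 1 := by
      have := sq_nonneg (e (n + 1) + (α - 1) / 2 * e n)
      nlinarith
    nlinarith [sq_nonneg (e n)]
  exact abs_le_of_sq_le_sq h5 (by norm_num)

lemma T_mono_succ (n : ℕ) : 0 ≤ T n ∧ T n ≤ T (n + 1) ∧ T (n + 1) ≤ T (n + 2) := by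
  induction n with
  | zero => simp [T]
  | succ n ih =>
    refine ⟨by omega, ih.2.2, ?_⟩
    rw [show n + 1 + 2 = n + 3 by ring, show n + 1 + 1 = n + 2 by ring, T]
    omega

lemma T_mono {a b : ℕ} (h : a ≤ b) : T a ≤ T b :=
  monotone_nat_of_le_succ (fun n => (T_mono_succ n).2.1) h

lemma T_strict {a b : ℕ} (hb : 2 < b) (h : a < b) : T a < T b := by
  obtain ⟨m, rfl⟩ : ∃ m, b = m + 3 := ⟨b - 3, by omega⟩
  have h1 : T a ≤ T (m + 2) := T_mono (by omega)
  have h2 : T 1 ≤ T (m + 1) := T_mono (by omega)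
  have h3 := (T_mono_succ m).1
  have h4 : T (m + 3) = T (m + 2) + T (m + 1) + T m := by rw [T]
  have h5 : T 1 = 1 := rfl
  omega

lemma log_two_eq : Real.log 2 = 3 * lg 0 + 2 * lg 2 := by
  have h1 := lt_tribRoot
  have e : (2 : ℝ) = (tribRoot - 1) ^ 3 * tribRoot ^ 2 := by
    linear_combination (-(tribRoot ^ 2 - 2 * tribRoot + 2)) * tribRoot_cube
  have h2 : Real.log 2 = Real.log ((tribRoot - 1) ^ 3 * tribRoot ^ 2) := by rw [← e]
  have h3 : 0 < tribRoot - 1 := by linarith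
  rw [h2, Real.log_mul (by positivity) (by positivity), Real.log_pow, Real.log_pow]
  simp [lg, gen]

lemma log_three_eq : Real.log 3 = lg 1 := by simp [lg, gen]

lemma log_delta_eq : Real.log delta = lg 3 + 2 * lg 2 + 2 * lg 0 := by
  have h1 := lt_tribRoot
  have e : delta = (2 * tribRoot ^ 2 - 3 * tribRoot) * tribRoot ^ 2 * (tribRoot - 1) ^ 2 := by
    unfold delta
    linear_combination (-(2 * tribRoot ^ 3 - 5 * tribRoot ^ 2 + 5 * tribRoot - 1)) * tribRoot_cube
  have h2 : 0 < 2 * tribRoot ^ 2 - 3 * tribRoot := by nlinarith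
  have h3 : 0 < tribRoot - 1 := by linarith
  rw [e, Real.log_mul (by positivity) (by positivity), Real.log_mul (by positivity) (by positivity),
    Real.log_pow, Real.log_pow]
  simp [lg, gen]

lemma log_smooth (x y : ℕ) :
    Real.log (2 ^ x * 3 ^ y) = x * Real.log 2 + y * Real.log 3 := by
  rw [Real.log_mul (by positivity) (by positivity), Real.log_pow, Real.log_pow]

lemma exponents_le (x y : ℕ) : 0.69 * (x : ℝ) ≤ Real.log (2 ^ x * 3 ^ y) ∧
    (y : ℝ) ≤ Real.log (2 ^ x * 3 ^ y) := by
  rw [log_smooth]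
  have h2 := Real.log_two_gt_d9
  have h3 : 1 ≤ Real.log 3 := by
    rw [Real.le_log_iff_exp_le (by norm_num)]
    linarith [Real.exp_one_lt_d9]
  have hx : (0 : ℝ) ≤ x := Nat.cast_nonneg x
  have hy : (0 : ℝ) ≤ y := Nat.cast_nonneg y
  constructor <;> nlinarith

/-- Two distinct integers `2 ^ x * 3 ^ y` cannot be too close. If the exponents of `2` differ this is
the lower bound for linear forms; otherwise `S₂ ≤ S₁ / 3`. -/
lemma smooth_gap {x₁ y₁ x₂ y₂ : ℕ} {S₁ S₂ B : ℝ} (h₁ : S₁ = 2 ^ x₁ * 3 ^ y₁)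
    (h₂ : S₂ = 2 ^ x₂ * 3 ^ y₂) (hlt : S₂ < S₁) (hB : 1e19 ≤ B) (hSB : 5 * Real.log S₁ ≤ B) :
    S₁ ≤ 2 * (S₁ - S₂) * Real.exp (4e14 * Real.log B ^ 2) := by
  have hp2 : 0 < S₂ := by rw [h₂]; positivity
  have hE : 1 ≤ Real.exp (4e14 * Real.log B ^ 2) := Real.one_le_exp (by positivity)
  by_cases hx : x₁ = x₂
  · subst hx
    have hy : y₂ < y₁ := by
      by_contra hcon
      rw [not_lt] at hcon
      have : (3 : ℝ) ^ y₁ ≤ 3 ^ y₂ := pow_le_pow_right₀ (by norm_num) hcon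
      rw [h₁, h₂] at hlt
      have h3 : (0 : ℝ) < 2 ^ x₁ := by positivity
      nlinarith
    have h3 : 3 * S₂ ≤ S₁ := by
      rw [h₁, h₂]
      have : (3 : ℝ) ^ (y₂ + 1) ≤ 3 ^ y₁ := pow_le_pow_right₀ (by norm_num) hy
      have h3 : (0 : ℝ) < 2 ^ x₁ := by positivity
      rw [pow_succ] at this
      nlinarith
    nlinarith
  · let b : Fin 4 → ℤ := ![3 * ((x₁ : ℤ) - x₂), (y₁ : ℤ) - y₂, 2 * ((x₁ : ℤ) - x₂), 0]
    have hb0 : b 0 ≠ 0 := by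
      simp only [b, Matrix.cons_val_zero]
      omega
    have hlog : Real.log S₂ ≤ Real.log S₁ := Real.log_le_log hp2 hlt.le
    have e1 := exponents_le x₁ y₁
    have e2 := exponents_le x₂ y₂
    rw [← h₁] at e1
    rw [← h₂] at e2
    have hx1 : (0 : ℝ) ≤ x₁ := Nat.cast_nonneg _
    have hx2 : (0 : ℝ) ≤ x₂ := Nat.cast_nonneg _
    have hy1 : (0 : ℝ) ≤ y₁ := Nat.cast_nonneg _
    have hy2 : (0 : ℝ) ≤ y₂ := Nat.cast_nonneg _
    have hbB : ∀ i, |(b i : ℝ)| ≤ B := by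
      intro i
      fin_cases i
      · change |((3 * ((x₁ : ℤ) - x₂) : ℤ) : ℝ)| ≤ B
        push_cast
        rw [abs_le]
        constructor <;> linarith
      · change |(((y₁ : ℤ) - y₂ : ℤ) : ℝ)| ≤ B
        push_cast
        rw [abs_le]
        constructor <;> linarith
      · change |((2 * ((x₁ : ℤ) - x₂) : ℤ) : ℝ)| ≤ B
        push_cast
        rw [abs_le]
        constructor <;> linarith
      · change |((0 : ℤ) : ℝ)| ≤ B
        rw [Int.cast_zero, abs_zero]
        linarith
    have hlow := linForm_lower hb0 hB hbB
    have hform : linForm b = Real.log S₁ - Real.log S₂ := by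
      rw [h₁, h₂, log_smooth, log_smooth, log_two_eq, log_three_eq]
      simp [linForm, Fin.sum_univ_four, b]
      ring
    rw [hform, abs_of_nonneg (by linarith), ← Real.log_div (by linarith) hp2.ne'] at hlow
    have h3 := Real.log_le_sub_one_of_pos (show 0 < S₁ / S₂ by have := hp2.trans hlt; positivity)
    have h4 : S₁ / S₂ - 1 = (S₁ - S₂) / S₂ := by field_simp
    rw [h4] at h3
    have h5 := hlow.trans_le h3
    rw [lt_div_iff₀ hp2, Real.exp_neg, inv_mul_lt_iff₀ (Real.exp_pos _)] at h5
    nlinarith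

/-! ### The bound for the gap -/

set_option maxHeartbeats 1000000 in
theorem index_gap_bound_neg_c (c : ℤ) (hc : c ≤ -1)
    (n x y n₁ x₁ y₁ n₂ x₂ y₂ : ℕ)
    (hne : n ≠ 1) (hne₁ : n₁ ≠ 1) (hne₂ : n₂ ≠ 1)
    (hord₁ : n₁ < n) (hord₂ : n₂ < n₁) (hn₁ : 310 < n₁)
    (h : T n - 2 ^ x * 3 ^ y = c) (h₁ : T n₁ - 2 ^ x₁ * 3 ^ y₁ = c)
    (h₂ : T n₂ - 2 ^ x₂ * 3 ^ y₂ = c) :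
    (n : ℝ) - (n₁ : ℝ) < 2e15 * Real.log n ^ 2 := by
  by_contra hcon
  rw [not_lt] at hcon
  have hα1 := lt_tribRoot
  have hα0 : (0 : ℝ) < tribRoot := by linarith
  -- negating the claim forces `n ≥ 2·10¹⁵ (log n)²`, so `n` is large; iterated twice
  have hn312 : (312 : ℝ) ≤ n := by exact_mod_cast (by omega : 312 ≤ n)
  have hn₁0 : (0 : ℝ) ≤ n₁ := Nat.cast_nonneg _
  have boot : ∀ (k : ℕ) (v : ℝ), (2.7182818286 : ℝ) ^ k ≤ v → v ≤ n →
      (2e15 : ℝ) * k ^ 2 ≤ n := by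
    intro k v h1 h2
    have h3 : (k : ℝ) ≤ Real.log n := by
      rw [Real.le_log_iff_exp_le (by linarith), show (k : ℝ) = k * 1 by ring, Real.exp_nat_mul]
      have := Real.exp_one_lt_d9
      exact le_trans (by gcongr) (h1.trans h2)
    have h4 : (k : ℝ) ^ 2 ≤ Real.log n ^ 2 := by gcongr
    linarith
  have hn1 := boot 5 312 (by norm_num) hn312
  have hn2 := boot 38 5e16 (by norm_num) (by push_cast at hn1; linarith)
  have hn3 : (2.8e18 : ℝ) ≤ n := by push_cast at hn2; linarith
  have hL : 42 ≤ Real.log n := by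
    rw [Real.le_log_iff_exp_le (by linarith), show (42 : ℝ) = (42 : ℕ) * 1 by norm_num,
      Real.exp_nat_mul]
    have := Real.exp_one_lt_d9
    calc Real.exp 1 ^ 42 ≤ 2.7182818286 ^ 42 := by gcongr
      _ ≤ 2.8e18 := by norm_num
      _ ≤ n := hn3
  have hB : (1e19 : ℝ) ≤ 10 * n := by linarith
  have hℓL : Real.log (10 * n) ^ 2 ≤ 1.14 * Real.log n ^ 2 := by
    have h1 : Real.log (10 * n) ≤ Real.log n + 4 * Real.log 2 := by
      rw [show (4 : ℝ) = (4 : ℕ) by norm_num, ← Real.log_pow,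
        ← Real.log_mul (by linarith) (by norm_num)]
      apply Real.log_le_log (by linarith)
      norm_num
      linarith
    have h2 : Real.log (10 * n) ≤ 1.067 * Real.log n := by
      linarith [Real.log_two_lt_d9]
    have h3 : 0 ≤ Real.log (10 * n) := Real.log_nonneg (by linarith)
    calc Real.log (10 * n) ^ 2 ≤ (1.067 * Real.log n) ^ 2 := by gcongr
      _ ≤ _ := by nlinarith [sq_nonneg (Real.log n)]
  obtain ⟨C, hC⟩ : ∃ C : ℝ, C = -(c : ℝ) := ⟨_, rfl⟩
  obtain ⟨S, hS⟩ : ∃ S : ℝ, S = 2 ^ x * 3 ^ y := ⟨_, rfl⟩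
  obtain ⟨S₁, hS₁⟩ : ∃ S : ℝ, S = 2 ^ x₁ * 3 ^ y₁ := ⟨_, rfl⟩
  obtain ⟨S₂, hS₂⟩ : ∃ S : ℝ, S = 2 ^ x₂ * 3 ^ y₂ := ⟨_, rfl⟩
  have hC1 : 1 ≤ C := by
    have : (c : ℝ) ≤ -1 := by exact_mod_cast hc
    linarith
  have hr : (T n : ℝ) - S = -C := by rw [hS, hC, neg_neg]; exact_mod_cast h
  have hr₁ : (T n₁ : ℝ) - S₁ = -C := by rw [hS₁, hC, neg_neg]; exact_mod_cast h₁
  have hr₂ : (T n₂ : ℝ) - S₂ = -C := by rw [hS₂, hC, neg_neg]; exact_mod_cast h₂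
  have hT₂ : (0 : ℝ) ≤ T n₂ := by exact_mod_cast (T_mono_succ n₂).1
  have hT₂₁ : (T n₂ : ℝ) + 1 ≤ T n₁ := by exact_mod_cast T_strict (by omega) hord₂
  have hT₁n : (T n₁ : ℝ) ≤ T n := by exact_mod_cast T_mono hord₁.le
  have hlt : S₂ < S₁ := by linarith
  have hS₁1 : 1 < S₁ := by linarith
  have hpow : (tribRoot : ℝ) ^ n₁ ≤ Real.exp (0.6095 * n) := by
    have h1 : tribRoot ≤ Real.exp 0.6095 := by
      have := (le_abs_self _).trans (lg_abs 2)
      rw [← Real.log_le_iff_le_exp hα0]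
      simpa [lg, gen] using this
    calc tribRoot ^ n₁ ≤ tribRoot ^ n := pow_le_pow_right₀ (by linarith) hord₁.le
      _ ≤ Real.exp 0.6095 ^ n := by gcongr
      _ = _ := by rw [← Real.exp_nat_mul, mul_comm]
  have hdiff : S₁ - S₂ ≤ tribRoot ^ n₁ := by linarith [T_le_pow n₁]
  -- a crude bound for `S₁`, which bounds its exponents linearly in `n`
  have hs : Real.log S₁ ≤ 2 * n := by
    by_contra hlarge
    rw [not_le] at hlarge
    have hB' : (1e19 : ℝ) ≤ 5 * Real.log S₁ := by linarith
    have h1 := smooth_gap hS₁ hS₂ hlt hB' le_rfl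
    have h2 := (log_bounds hB').2
    have h3 : S₁ ≤ Real.exp (1 + 0.6095 * n + 4e14 * Real.log (5 * Real.log S₁) ^ 2) := by
      rw [Real.exp_add, Real.exp_add]
      refine h1.trans ?_
      have := Real.exp_one_gt_d9
      gcongr
      · linarith
      · linarith
    have h4 := (Real.log_le_iff_le_exp (by linarith)).mpr h3
    linarith
  have hgap := smooth_gap hS₁ hS₂ hlt hB (by linarith)
  set ℓ := Real.log (10 * n) with hℓ
  have hS₁le : S₁ ≤ 2 * tribRoot ^ n₁ * Real.exp (4e14 * ℓ ^ 2) := by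
    refine hgap.trans ?_
    gcongr
  -- the quotient `S₁ / S` bounds the distance of `α ^ n / (δ S)` from `1`
  obtain ⟨hδ1, hδ2⟩ := delta_bounds
  have hbin := abs_le.mp (binet n)
  have hαn : (100 : ℝ) ≤ tribRoot ^ n := by
    calc (100 : ℝ) ≤ 1.8 ^ 8 := by norm_num
      _ ≤ tribRoot ^ 8 := by gcongr; linarith
      _ ≤ _ := pow_le_pow_right₀ (by linarith) (by omega)
  have hTn : tribRoot ^ n / 4 ≤ T n := by nlinarith [hbin.1]
  have hSpos : 0 < S := by linarith
  have hη : S₁ / S ≤ 8 * Real.exp (8e14 * ℓ ^ 2 - 1.2e15 * Real.log n ^ 2) *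
      Real.exp (-(4e14 * ℓ ^ 2)) := by
    have h1 : tribRoot ^ n = tribRoot ^ n₁ * tribRoot ^ (n - n₁) := by
      rw [← pow_add]; congr 1; omega
    have h2 : Real.exp (1.2e15 * Real.log n ^ 2) ≤ tribRoot ^ (n - n₁) := by
      have h3 : Real.exp 0.6 ≤ tribRoot := by
        have := Real.exp_bound' (x := 0.6) (by norm_num) (by norm_num) (n := 6) (by norm_num)
        refine this.trans ?_
        norm_num [Finset.sum_range_succ, Nat.factorial]
        linarith
      have h4 : ((n - n₁ : ℕ) : ℝ) = n - n₁ := by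
        rw [Nat.cast_sub hord₁.le]
      calc Real.exp (1.2e15 * Real.log n ^ 2) ≤ Real.exp 0.6 ^ (n - n₁) := by
            rw [← Real.exp_nat_mul, h4]
            apply Real.exp_le_exp.mpr
            linarith
        _ ≤ _ := by gcongr
    rw [div_le_iff₀ hSpos]
    have h5 : tribRoot ^ n₁ * Real.exp (1.2e15 * Real.log n ^ 2) ≤ 4 * S := by
      calc _ ≤ tribRoot ^ n₁ * tribRoot ^ (n - n₁) := by gcongr
        _ = tribRoot ^ n := h1.symm
        _ ≤ _ := by linarith
    have h6 : tribRoot ^ n₁ ≤ 4 * S * Real.exp (-(1.2e15 * Real.log n ^ 2)) := by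
      rw [Real.exp_neg, ← div_eq_mul_inv, le_div_iff₀ (Real.exp_pos _)]
      exact h5
    calc S₁ ≤ 2 * (4 * S * Real.exp (-(1.2e15 * Real.log n ^ 2))) * Real.exp (4e14 * ℓ ^ 2) := by
          refine hS₁le.trans ?_
          gcongr
      _ = 8 * (Real.exp (-(1.2e15 * Real.log n ^ 2)) * Real.exp (4e14 * ℓ ^ 2)) * S := by ring
      _ = _ := by
          rw [mul_assoc 8 (Real.exp _) (Real.exp _), ← Real.exp_add, ← Real.exp_add]
          congr 3
          ring
  have hηs : S₁ / S ≤ 1 / 4 * Real.exp (-(4e14 * ℓ ^ 2)) := by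
    refine hη.trans ?_
    have h1 : Real.exp (8e14 * ℓ ^ 2 - 1.2e15 * Real.log n ^ 2) ≤ Real.exp (-100) := by
      apply Real.exp_le_exp.mpr
      nlinarith
    have h2 : Real.exp (-100) ≤ 1 / 32 := by
      rw [Real.exp_neg, inv_le_comm₀ (Real.exp_pos _) (by norm_num)]
      have := Real.add_one_le_exp (100 : ℝ)
      norm_num
      linarith
    gcongr
    linarith
  -- the linear form `log (α ^ n / (δ S))`, with the coefficients coming from
  -- `2 = (α - 1)³ α²` and `δ = (2α² - 3α) α² (α - 1)²`
  let b : Fin 4 → ℤ := ![-(3 * (x : ℤ) + 2), -(y : ℤ), (n : ℤ) - 2 - 2 * x, -1]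
  have hb0 : b 0 ≠ 0 := by
    simp only [b, Matrix.cons_val_zero]
    omega
  have hform : linForm b = Real.log (tribRoot ^ n / (delta * S)) := by
    rw [Real.log_div (by positivity) (by positivity), Real.log_mul (by linarith) (by linarith),
      Real.log_pow, hS, log_smooth, log_two_eq, log_three_eq, log_delta_eq]
    have : Real.log tribRoot = lg 2 := by simp [lg, gen]
    rw [this]
    simp [linForm, Fin.sum_univ_four, b]
    ring
  have hlogS : Real.log S ≤ 2 * n + 1 := by
    have h1 : S₁ ≤ Real.exp (2 * n) := (Real.log_le_iff_le_exp (by linarith)).mp hs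
    have h2 : (T n : ℝ) ≤ Real.exp (2 * n) := by
      refine (T_le_pow n).trans ?_
      have h3 : tribRoot ≤ Real.exp 2 := by
        have := tribRoot_lt
        have := Real.add_one_le_exp (2 : ℝ)
        linarith
      calc tribRoot ^ n ≤ Real.exp 2 ^ n := by gcongr
        _ = _ := by rw [← Real.exp_nat_mul, mul_comm]
    rw [Real.log_le_iff_le_exp hSpos, Real.exp_add]
    have := Real.exp_one_gt_d9
    have h4 : Real.exp (2 * n) * 2 ≤ Real.exp (2 * n) * Real.exp 1 :=
      mul_le_mul_of_nonneg_left (by linarith) (Real.exp_pos _).le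
    linarith
  have hexp := exponents_le x y
  rw [← hS] at hexp
  have hx0 : (0 : ℝ) ≤ x := Nat.cast_nonneg _
  have hy0 : (0 : ℝ) ≤ y := Nat.cast_nonneg _
  have hbB : ∀ i, |(b i : ℝ)| ≤ 10 * n := by
    intro i
    fin_cases i
    · change |((-(3 * (x : ℤ) + 2) : ℤ) : ℝ)| ≤ 10 * n
      push_cast
      rw [abs_le]
      constructor <;> linarith
    · change |((-(y : ℤ) : ℤ) : ℝ)| ≤ 10 * n
      push_cast
      rw [abs_le]
      constructor <;> linarith
    · change |(((n : ℤ) - 2 - 2 * x : ℤ) : ℝ)| ≤ 10 * n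
      push_cast
      rw [abs_le]
      constructor <;> linarith
    · change |((-1 : ℤ) : ℝ)| ≤ 10 * n
      push_cast
      rw [abs_le]
      constructor <;> linarith
  have hlow := linForm_lower hb0 hB hbB
  rw [hform, ← hℓ] at hlow
  set ρ := tribRoot ^ n / (delta * S) with hρ
  set η := S₁ / S with hηdef
  have hη4 : η ≤ 1 / 4 := by
    have : Real.exp (-(4e14 * ℓ ^ 2)) ≤ 1 := Real.exp_le_one_iff.mpr (by
      have := sq_nonneg ℓ
      linarith)
    linarith
  have hη0 : 0 < η := by rw [hηdef]; positivity
  have hδS : 0 < delta * S := by positivity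
  have hρ1 : 1 - η ≤ ρ ∧ ρ ≤ 1 + η := by
    have e1 : (1 - η) * (delta * S) = delta * S - delta * S₁ := by
      rw [hηdef]; field_simp
    have e2 : (1 + η) * (delta * S) = delta * S + delta * S₁ := by
      rw [hηdef]; field_simp
    have hTS : delta * T n = delta * S - delta * C := by linear_combination delta * hr
    have hS₁C : delta * S₁ = delta * T n₁ + delta * C := by linear_combination -delta * hr₁
    have h3 : delta ≤ delta * T n₁ := le_mul_of_one_le_right (by linarith) (by linarith)
    have h4 : 0 ≤ delta * C := by positivity
    constructor
    · rw [hρ, le_div_iff₀ hδS, e1]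
      linarith [hbin.1, hbin.2]
    · rw [hρ, div_le_iff₀ hδS, e2]
      linarith [hbin.1, hbin.2]
  have hρ0 : 0 < ρ := by linarith [hρ1.1]
  have hup : |Real.log ρ| ≤ 2 * η := by
    rw [abs_le]
    constructor
    · have h1 := Real.one_sub_inv_le_log_of_pos hρ0
      have h2 : ρ⁻¹ ≤ 1 + 2 * η := by
        rw [inv_le_comm₀ hρ0 (by linarith), ← one_div, div_le_iff₀ (by linarith)]
        nlinarith [hρ1.1]
      linarith
    · have := Real.log_le_sub_one_of_pos hρ0
      linarith [hρ1.2]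
  have := Real.exp_pos (-(4e14 * ℓ ^ 2))
  linarith
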